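/- arXiv:1706.01024 — 6 statements merged into one kernel-verified Lean document; each statement's English description precedes it below -/
import Mathlib

section
/- Let (R,m) be a regular local ring with dim R ≤ 2 and let I be a nonzero proper ideal of R. Then Ass(R/I^k) = Ass(R/I) for all integers k ≥ 1; that is, the index of Ass-stability astab(I) equals 1. -/
/-!
A prime `P ≠ 𝔪` containing the nonzero ideal `I` is minimal over `I`, since `R` is a domain of
dimension at most two. Minimal primes of `I` are associated to every power of `I`, so only the
membership of `𝔪` is in question. When `𝔪` is principal, `𝔪` is itself minimal over `I`.

Let now `dim R = 2` and `𝔪 = (x, y)`. Then `R` is a domain and `x` is a prime element not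
dividing `y` (`dim_two_structure`). A nonzero ideal `J` satisfies `𝔪 ∉ Ass (R ⧸ J)` if and only if
it is principal: this is the equivalence of positive depth of `R ⧸ J` with freeness of `J`, proved
here by elementary means (`isPrincipal_of_saturated`, `saturated_of_isPrincipal`). Finally, in a
local domain a nonzero ideal is principal if and only if some positive power of it is
(`isPrincipal_of_pow`), so `𝔪` is associated to all powers of `I` or to none. No appeal to unique
factorization in `R` is needed.
-/

open IsLocalRing

/-- `R` is a regular local ring: Noetherian local and the maximal ideal is generated by
`dim R` elements. -/
def IsRegularLocal (R : Type*) [CommRing R] [IsLocalRing R] : Prop :=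
  IsNoetherianRing R ∧ ∃ s : Finset R,
    Ideal.span (s : Set R) = IsLocalRing.maximalIdeal R ∧
    (s.card : WithBot ℕ∞) = ringKrullDim R

/-- The height of an ideal: the infimum of heights of primes containing it. -/
noncomputable def idealHeight {R : Type*} [CommRing R] (I : Ideal R) : ℕ∞ :=
  ⨅ (P : PrimeSpectrum R) (_ : I ≤ P.asIdeal), Order.height P

/-- The `m`-depth of `R ⧸ I`: the supremum of lengths of `R ⧸ I`-regular sequences
with entries in `m`. -/
noncomputable def depthIn {R : Type*} [CommRing R] (m I : Ideal R) : ℕ :=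
  sSup {n : ℕ | ∃ rs : List R, rs.length = n ∧ (∀ r ∈ rs, r ∈ m) ∧
    RingTheory.Sequence.IsRegular (R ⧸ I) rs}

/-- The index of Ass-stability of `I`: the least `n₀ ≥ 1` with
`Ass(R/Iⁿ) = Ass(R/I^{n₀})` for all `n ≥ n₀`. -/
noncomputable def astab {R : Type*} [CommRing R] (I : Ideal R) : ℕ :=
  sInf {n₀ : ℕ | 0 < n₀ ∧ ∀ n, n₀ ≤ n →
    associatedPrimes R (R ⧸ I ^ n) = associatedPrimes R (R ⧸ I ^ n₀)}

/-- The index of depth-stability of `I` (depth taken with respect to `m`). -/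
noncomputable def dstab {R : Type*} [CommRing R] (m I : Ideal R) : ℕ :=
  sInf {n₀ : ℕ | 0 < n₀ ∧ ∀ n, n₀ ≤ n → depthIn m (I ^ n) = depthIn m (I ^ n₀)}

/-- The set of elements integral over the ideal `I`. -/
def intClSet {R : Type*} [CommRing R] (I : Ideal R) : Set R :=
  {x | ∃ n : ℕ, 0 < n ∧ ∃ a : ℕ → R, (∀ i ∈ Finset.Icc 1 n, a i ∈ I ^ i) ∧
    x ^ n + ∑ i ∈ Finset.Icc 1 n, a i * x ^ (n - i) = 0}

/-- The integral closure of an ideal `I`.  (The set `intClSet I` is itself an ideal,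
so taking the span does not enlarge it.) -/
noncomputable def intCl {R : Type*} [CommRing R] (I : Ideal R) : Ideal R :=
  Ideal.span (intClSet I)

/-- The index of Ass-stability for integral closures of powers of `I`. -/
noncomputable def astabBar {R : Type*} [CommRing R] (I : Ideal R) : ℕ :=
  sInf {n₀ : ℕ | 0 < n₀ ∧ ∀ n, n₀ ≤ n →
    associatedPrimes R (R ⧸ intCl (I ^ n)) = associatedPrimes R (R ⧸ intCl (I ^ n₀))}

/-- A prime ideal containing all but one of the generators of a two-generated maximal ideal is
either maximal or generated by the generator it contains: if `q = a x + b y ∈ Q` then `b ∈ Q`,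
so `Q ≤ (x) + 𝔪 Q` and Nakayama applies. -/
lemma prime_eq_span_of_mem {R : Type*} [CommRing R] [IsLocalRing R] [IsNoetherianRing R]
    {x y : R} (hm : maximalIdeal R = Ideal.span {x, y}) {Q : Ideal R} (hQ : Q.IsPrime)
    (hx : x ∈ Q) (hQm : Q ≠ maximalIdeal R) : Q = Ideal.span {x} := by
  have hym : y ∈ maximalIdeal R := hm ▸ Ideal.subset_span (by simp)
  have hy : y ∉ Q := fun hy => hQm <| le_antisymm (le_maximalIdeal hQ.ne_top) <| by
    rw [hm, Ideal.span_le]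
    rintro z (rfl | rfl) <;> assumption
  refine le_antisymm ?_ ((Ideal.span_singleton_le_iff_mem _).2 hx)
  refine Submodule.le_of_le_smul_of_le_jacobson_bot (I := maximalIdeal R)
    (IsNoetherian.noetherian Q) (maximalIdeal_le_jacobson _) fun q hq => ?_
  have hqm := le_maximalIdeal hQ.ne_top hq
  rw [hm, Ideal.mem_span_pair] at hqm
  obtain ⟨a, b, rfl⟩ := hqm
  have hb : b ∈ Q := by
    have : b * y ∈ Q := (Ideal.add_mem_iff_right Q (Q.mul_mem_left a hx)).1 hq
    exact (hQ.mem_or_mem this).resolve_right hy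
  refine Submodule.add_mem_sup (Ideal.mem_span_singleton'.2 ⟨a, rfl⟩) ?_
  rw [smul_eq_mul, mul_comm b y]
  exact Ideal.mul_mem_mul hym hb

/-- A two-dimensional Noetherian local ring whose maximal ideal is generated by `x` and `y` is a
domain in which `x` is prime and does not divide `y`. -/
lemma dim_two_structure {R : Type*} [CommRing R] [IsLocalRing R] [IsNoetherianRing R]
    (hdim : ringKrullDim R = 2) {x y : R} (hm : maximalIdeal R = Ideal.span {x, y}) :
    IsDomain R ∧ Prime x ∧ y ∉ Ideal.span {x} := by
  have hxm : x ∈ maximalIdeal R := hm ▸ Ideal.subset_span (by simp)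
  -- a chain of primes `P₀ < P₁ < 𝔪`
  obtain ⟨P₀, P₁, hP₀, hP₁, h01, h1m⟩ : ∃ P₀ P₁ : Ideal R, P₀.IsPrime ∧ P₁.IsPrime ∧ P₀ < P₁ ∧
      P₁ < maximalIdeal R := by
    obtain ⟨l, hl⟩ := Order.le_krullDim_iff.1 (show ((2 : ℕ) : WithBot ℕ∞) ≤ _ from hdim.ge)
    have h01 : l ⟨0, by omega⟩ < l ⟨1, by omega⟩ := l.strictMono (by simp [Fin.lt_def])
    have h12 : l ⟨1, by omega⟩ < l ⟨2, by omega⟩ := l.strictMono (by simp [Fin.lt_def])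
    exact ⟨_, _, (l ⟨0, by omega⟩).2, (l ⟨1, by omega⟩).2, h01,
      lt_of_lt_of_le h12 (le_maximalIdeal (l ⟨2, by omega⟩).2.ne_top)⟩
  have hy : y ∉ Ideal.span {x} := fun hy => by
    -- otherwise `𝔪 = (x)`, and every prime other than `𝔪` is zero
    have hm' : maximalIdeal R = Ideal.span {0, x} := by
      rw [hm, Ideal.span_insert_zero, Set.pair_comm, Ideal.span_insert, sup_eq_right]
      exact (Ideal.span_singleton_le_iff_mem _).2 hy
    have := prime_eq_span_of_mem hm' hP₁ (zero_mem _) h1m.ne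
    rw [this] at h01
    simp at h01
  -- by Krull's principal ideal theorem in `R ⧸ P₀`
  have hnm : maximalIdeal R ∉ (P₀ ⊔ Ideal.span {x}).minimalPrimes := fun h => by
    have h1 := Ideal.map_height_le_one_of_mem_minimalPrimes h
    set f := Ideal.Quotient.mk P₀
    have hf : Function.Surjective f := Ideal.Quotient.mk_surjective
    have hk : RingHom.ker f = P₀ := Ideal.mk_ker
    have hp1 : (P₁.map f).IsPrime := Ideal.map_isPrime_of_surjective hf (hk.trans_le h01.le)
    have hpm : ((maximalIdeal R).map f).IsPrime :=
      Ideal.map_isPrime_of_surjective hf (hk.trans_le (h01.trans h1m).le)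
    have hcomap : ∀ J : Ideal R, P₀ ≤ J → (J.map f).comap f = J := fun J hJ => by
      rw [Ideal.comap_map_of_surjective f hf, ← RingHom.ker_eq_comap_bot, hk, sup_eq_left.2 hJ]
    have hlt1 : (⊥ : Ideal (R ⧸ P₀)) < P₁.map f := by
      rw [bot_lt_iff_ne_bot]
      intro h0
      have := hcomap P₁ h01.le
      rw [h0, ← RingHom.ker_eq_comap_bot, hk] at this
      exact h01.ne this
    have hlt2 : P₁.map f < (maximalIdeal R).map f := by
      refine lt_of_le_of_ne (Ideal.map_mono h1m.le) fun he => ?_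
      have := hcomap _ (h01.trans h1m).le
      rw [← he, hcomap P₁ h01.le] at this
      exact h1m.ne this
    have a1 := Ideal.height_add_one_le_of_lt_of_isPrime hlt1
    have a2 := Ideal.height_add_one_le_of_lt_of_isPrime hlt2
    rw [Ideal.height_bot] at a1
    have : (0 + 1 + 1 : ℕ∞) ≤ 1 := (add_le_add_left a1 1).trans (a2.trans h1)
    norm_num at this
  obtain ⟨Q, hQmin, hQle⟩ := Ideal.exists_minimalPrimes_le (J := maximalIdeal R)
    (I := P₀ ⊔ Ideal.span {x})
    (sup_le (h01.trans h1m).le ((Ideal.span_singleton_le_iff_mem _).2 hxm))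
  have hQx : x ∈ Q := (Ideal.span_singleton_le_iff_mem _).1 (le_sup_right.trans hQmin.1.2)
  have hQ : Q = Ideal.span {x} :=
    prime_eq_span_of_mem hm hQmin.1.1 hQx fun h => hnm (h ▸ hQmin)
  have hP₀x : P₀ ≤ Ideal.span {x} := hQ ▸ le_sup_left.trans hQmin.1.2
  have hx0 : x ∉ P₀ := fun hx0 => by
    have e0 := prime_eq_span_of_mem hm hP₀ hx0 (h01.trans h1m).ne
    have e1 := prime_eq_span_of_mem hm hP₁ (h01.le hx0) h1m.ne
    exact h01.ne (e0.trans e1.symm)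
  -- `P₀ = x P₀`, hence `P₀ = 0`
  have hbot : P₀ = ⊥ := by
    refine Submodule.eq_bot_of_le_smul_of_le_jacobson_bot (maximalIdeal R) _
      (IsNoetherian.noetherian P₀) (fun p hp => ?_) (maximalIdeal_le_jacobson _)
    obtain ⟨q, rfl⟩ := Ideal.mem_span_singleton.1 (hP₀x hp)
    exact Ideal.mul_mem_mul hxm ((hP₀.mem_or_mem hp).resolve_left hx0)
  have hdom : IsDomain R := by
    have : (⊥ : Ideal R).IsPrime := hbot ▸ hP₀
    exact IsDomain.of_bot_isPrime R
  refine ⟨hdom, ?_, hy⟩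
  rw [← Ideal.span_singleton_prime, ← hQ]
  · exact hQmin.1.1
  · rintro rfl
    exact hx0 (zero_mem _)

/-- Every ideal containing `x` is generated by `x` and one further element, i.e. `R ⧸ (x)` is a
principal ideal ring when its maximal ideal is generated by the class of `y`. -/
lemma exists_eq_span_sup {R : Type*} [CommRing R] [IsLocalRing R] [IsNoetherianRing R]
    {x y : R} (hm : maximalIdeal R = Ideal.span {x, y}) (J : Ideal R) (hxJ : x ∈ J) :
    ∃ f, J = Ideal.span {x} ⊔ Ideal.span {f} := by
  induction J using WellFoundedGT.induction with
  | ind J ih =>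
  have hym : y ∈ maximalIdeal R := hm ▸ Ideal.subset_span (by simp)
  have hxle : Ideal.span {x} ≤ J := (Ideal.span_singleton_le_iff_mem _).2 hxJ
  by_cases hJ : J = ⊤
  · exact ⟨1, by simp [hJ]⟩
  -- the colon ideal `J : y`, for which `J = (x) + y (J : y)`
  let K : Ideal R := Submodule.comap (LinearMap.mulLeft R y) J
  have hK : ∀ r, r ∈ K ↔ y * r ∈ J := fun r => Iff.rfl
  have hJK : J ≤ K := fun r hr => J.mul_mem_left y hr
  have hdec : ∀ j ∈ J, ∃ a, ∃ b ∈ K, j = a * x + y * b := fun j hj => by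
    have hjm := le_maximalIdeal hJ hj
    rw [hm, Ideal.mem_span_pair] at hjm
    obtain ⟨a, b, rfl⟩ := hjm
    refine ⟨a, b, (hK b).2 ?_, by ring⟩
    rw [mul_comm]
    exact (Ideal.add_mem_iff_right J (J.mul_mem_left a hxJ)).1 hj
  rcases hJK.lt_or_eq with hlt | heq
  · obtain ⟨f, hf⟩ := ih K hlt (hJK hxJ)
    refine ⟨y * f, le_antisymm (fun j hj => ?_) (sup_le hxle ?_)⟩
    · obtain ⟨a, b, hb, rfl⟩ := hdec j hj
      rw [hf, ← Ideal.span_insert, Ideal.mem_span_pair] at hb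
      obtain ⟨c, d, rfl⟩ := hb
      rw [← Ideal.span_insert, Ideal.mem_span_pair]
      exact ⟨a + y * c, d, by ring⟩
    · rw [Ideal.span_singleton_le_iff_mem, ← hK, hf]
      exact Ideal.mem_sup_right (Ideal.mem_span_singleton_self f)
  · refine ⟨0, le_antisymm ?_ (by simpa using hxJ)⟩
    refine le_trans ?_ le_sup_left
    refine Submodule.le_of_le_smul_of_le_jacobson_bot (I := maximalIdeal R)
      (IsNoetherian.noetherian J) (maximalIdeal_le_jacobson _) fun j hj => ?_
    obtain ⟨a, b, hb, rfl⟩ := hdec j hj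
    exact Submodule.add_mem_sup (Ideal.mem_span_singleton'.2 ⟨a, rfl⟩)
      (Ideal.mul_mem_mul hym (heq ▸ hb))

/-- The maximal ideal is associated to `R ⧸ J` exactly when `R ⧸ J` has a nonzero socle. -/
lemma maximalIdeal_mem_ass_iff {R : Type*} [CommRing R] [IsLocalRing R] [IsNoetherianRing R]
    {x y : R} (hm : maximalIdeal R = Ideal.span {x, y}) (J : Ideal R) :
    maximalIdeal R ∈ associatedPrimes R (R ⧸ J) ↔ ∃ z, z ∉ J ∧ x * z ∈ J ∧ y * z ∈ J := by
  have key : ∀ r z : R, r ∈ (⊥ : Submodule R (R ⧸ J)).colon {Ideal.Quotient.mk J z} ↔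
      r * z ∈ J := fun r z => by
    rw [Submodule.mem_colon_singleton, Submodule.mem_bot, ← Ideal.Quotient.eq_zero_iff_mem]
    rfl
  rw [AssociatedPrimes.mem_iff, isAssociatedPrime_iff]
  constructor
  · rintro ⟨-, z', hz⟩
    obtain ⟨z, rfl⟩ := Ideal.Quotient.mk_surjective z'
    refine ⟨z, fun h => ?_, ?_, ?_⟩
    · have : (1 : R) ∈ maximalIdeal R := by rw [hz, key, one_mul]; exact h
      exact (Ideal.ne_top_iff_one _).1 (maximalIdeal.isMaximal R).ne_top this
    · rw [← key, ← hz, hm]; exact Ideal.subset_span (by simp)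
    · rw [← key, ← hz, hm]; exact Ideal.subset_span (by simp)
  · rintro ⟨z, hz, hxz, hyz⟩
    refine ⟨inferInstance, Ideal.Quotient.mk J z, ?_⟩
    refine (maximalIdeal.isMaximal R).eq_of_le (fun h => ?_) ?_
    · rw [Ideal.eq_top_iff_one, key, one_mul] at h
      exact hz h
    · rw [hm, Ideal.span_le]
      rintro r (rfl | rfl)
      · exact (key _ _).2 hxz
      · exact (key _ _).2 hyz

/-- A nonzero ideal `I` with `I : (x, y) = I` is principal. If `I ≤ (x)`, pass to the strictly
larger ideal `I : x`; otherwise `x` is a nonzerodivisor on `R ⧸ I`, because `(x)` is the only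
non-maximal prime containing `x`, and a generator of `I` modulo `x` generates `I`. -/
lemma isPrincipal_of_saturated {R : Type*} [CommRing R] [IsLocalRing R] [IsNoetherianRing R]
    [IsDomain R] {x y : R} (hm : maximalIdeal R = Ideal.span {x, y})
    (I : Ideal R) (hI : I ≠ ⊥) (hsat : ∀ z, x * z ∈ I → y * z ∈ I → z ∈ I) :
    ∃ f, I = Ideal.span {f} := by
  have hxm : x ∈ maximalIdeal R := hm ▸ Ideal.subset_span (by simp)
  induction I using WellFoundedGT.induction with
  | ind I ih =>
  by_cases hIx : I ≤ Ideal.span {x}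
  · let K : Ideal R := Submodule.comap (LinearMap.mulLeft R x) I
    have hK : ∀ r, r ∈ K ↔ x * r ∈ I := fun r => Iff.rfl
    have hIK : I ≤ K := fun r hr => I.mul_mem_left x hr
    have hne : I ≠ K := fun h => hI <| by
      refine Submodule.eq_bot_of_le_smul_of_le_jacobson_bot (maximalIdeal R) _
        (IsNoetherian.noetherian I) (fun p hp => ?_) (maximalIdeal_le_jacobson _)
      obtain ⟨q, rfl⟩ := Ideal.mem_span_singleton.1 (hIx hp)
      exact Ideal.mul_mem_mul hxm (h ▸ (hK q).2 hp)
    obtain ⟨f, hf⟩ := ih K (lt_of_le_of_ne hIK hne) (fun h => hI (le_bot_iff.1 (h ▸ hIK)))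
      (fun z h1 h2 => (hK z).2 (hsat _ ((hK _).1 h1) (by
        have := (hK _).1 h2
        rwa [mul_left_comm] at this)))
    refine ⟨x * f, le_antisymm (fun g hg => ?_) ?_⟩
    · obtain ⟨q, rfl⟩ := Ideal.mem_span_singleton.1 (hIx hg)
      have hq : q ∈ K := hg
      rw [hf, Ideal.mem_span_singleton] at hq
      exact Ideal.mem_span_singleton.2 (mul_dvd_mul_left x hq)
    · rw [Ideal.span_singleton_le_iff_mem, ← hK, hf]
      exact Ideal.mem_span_singleton_self f
  · have hreg : ∀ h, x * h ∈ I → h ∈ I := fun h hxh => by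
      by_contra hh
      obtain ⟨P, hP, hle⟩ := exists_le_isAssociatedPrime_of_isNoetherianRing R
        (Ideal.Quotient.mk I h) (by rwa [Ne, Ideal.Quotient.eq_zero_iff_mem])
      have hxP : x ∈ P := hle <| by
        rw [Submodule.mem_colon_singleton, Submodule.mem_bot]
        exact Ideal.Quotient.eq_zero_iff_mem.2 hxh
      have hPm : P ≠ maximalIdeal R := by
        rintro rfl
        obtain ⟨z, hz, h1, h2⟩ := (maximalIdeal_mem_ass_iff hm I).1 hP
        exact hz (hsat z h1 h2)
      apply hIx
      rw [← prime_eq_span_of_mem hm hP.isPrime hxP hPm]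
      have := hP.annihilator_le
      rwa [Submodule.annihilator_top, Ideal.annihilator_quotient] at this
    obtain ⟨f, hf⟩ := exists_eq_span_sup hm (I ⊔ Ideal.span {x})
      (Ideal.mem_sup_right (Ideal.mem_span_singleton_self x))
    -- the generator modulo `x` may be taken in `I`
    have hfJ : f ∈ I ⊔ Ideal.span {x} := hf ▸ Ideal.mem_sup_right (Ideal.mem_span_singleton_self f)
    obtain ⟨i, hi, s, hs, rfl⟩ := Submodule.mem_sup.1 hfJ
    obtain ⟨s, rfl⟩ := Ideal.mem_span_singleton.1 hs
    have hiI : Ideal.span {i} ≤ I := (Ideal.span_singleton_le_iff_mem _).2 hi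
    refine ⟨i, le_antisymm ?_ hiI⟩
    refine Submodule.le_of_le_smul_of_le_jacobson_bot (I := maximalIdeal R)
      (IsNoetherian.noetherian I) (maximalIdeal_le_jacobson _) fun g hg => ?_
    have hgJ : g ∈ I ⊔ Ideal.span {x} := Ideal.mem_sup_left hg
    rw [hf, ← Ideal.span_insert, Ideal.mem_span_pair] at hgJ
    obtain ⟨a, b, rfl⟩ := hgJ
    have e : a * x + b * (i + x * s) = b * i + x * (a + b * s) := by ring
    rw [e] at hg ⊢
    refine Submodule.add_mem_sup (Ideal.mem_span_singleton'.2 ⟨b, rfl⟩) (Ideal.mul_mem_mul hxm ?_)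
    exact hreg _ ((Ideal.add_mem_iff_right I (I.mul_mem_left b hi)).1 hg)

/-- A nonzero principal ideal is saturated: `x z = a u` and `y z = a v` force `y u = x v`, so
`x ∣ u` and `z ∈ (a)`. -/
lemma saturated_of_isPrincipal {R : Type*} [CommRing R] [IsDomain R] {x y : R} (hx : Prime x)
    (hy : y ∉ Ideal.span {x}) {a : R} (ha : a ≠ 0) {z : R} (h1 : x * z ∈ Ideal.span {a})
    (h2 : y * z ∈ Ideal.span {a}) : z ∈ Ideal.span {a} := by
  rw [Ideal.mem_span_singleton] at *
  obtain ⟨u, hu⟩ := h1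
  obtain ⟨v, hv⟩ := h2
  have h : y * u = x * v := mul_left_cancel₀ ha (by linear_combination (-y) * hu + x * hv)
  obtain ⟨w, rfl⟩ := (hx.dvd_or_dvd ⟨v, h⟩).resolve_left hy
  exact ⟨w, mul_left_cancel₀ hx.ne_zero (by linear_combination hu)⟩

/-- In a local domain, an ideal with a nonzero principal power is principal: if
`I * I ^ n = (a)`, some product `b c` with `b ∈ I`, `c ∈ I ^ n` is a unit multiple of `a`, and
then `I = (b)`. -/
lemma isPrincipal_of_pow {R : Type*} [CommRing R] [IsLocalRing R] [IsDomain R]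
    {I : Ideal R} {n : ℕ} {a : R} (ha : a ≠ 0) (h : I ^ (n + 1) = Ideal.span {a}) :
    ∃ b, I = Ideal.span {b} := by
  rw [pow_succ'] at h
  obtain ⟨b, hb, c, hc, u, hu, hbc⟩ : ∃ b ∈ I, ∃ c ∈ I ^ n, ∃ u, IsUnit u ∧ b * c = a * u := by
    by_contra! hcon
    have hle : I * I ^ n ≤ Ideal.span {a} * maximalIdeal R := Ideal.mul_le.2 fun b hb c hc => by
      obtain ⟨u, hu⟩ := Ideal.mem_span_singleton.1 (h ▸ Ideal.mul_mem_mul hb hc)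
      rw [hu]
      exact Ideal.mul_mem_mul (Ideal.mem_span_singleton_self a)
        ((mem_maximalIdeal u).2 fun huu => hcon b hb c hc u huu hu)
    rw [h] at hle
    obtain ⟨t, ht, hta⟩ := Ideal.mem_span_singleton_mul.1 (hle (Ideal.mem_span_singleton_self a))
    have : t = 1 := mul_left_cancel₀ ha (by rw [hta, mul_one])
    exact (mem_maximalIdeal t).1 ht (this ▸ isUnit_one)
  obtain ⟨u, rfl⟩ := hu
  refine ⟨b, le_antisymm (fun g hg => ?_) ((Ideal.span_singleton_le_iff_mem _).2 hb)⟩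
  obtain ⟨v, hv⟩ := Ideal.mem_span_singleton.1 (h ▸ Ideal.mul_mem_mul hg hc)
  have hc0 : c ≠ 0 := by
    rintro rfl
    rw [mul_zero] at hbc
    exact mul_ne_zero ha u.ne_zero hbc.symm
  refine Ideal.mem_span_singleton.2 ⟨v * ↑u⁻¹, mul_right_cancel₀ hc0 ?_⟩
  linear_combination hv - v * ↑u⁻¹ * hbc - a * v * u.mul_inv

/-- Minimal primes over `I` are associated to every `R ⧸ I ^ k` with `k ≥ 1`. -/
lemma mem_ass_pow_of_minimal {R : Type*} [CommRing R] [IsNoetherianRing R] {I P : Ideal R}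
    (hP : P ∈ I.minimalPrimes) {k : ℕ} (hk : 1 ≤ k) :
    P ∈ associatedPrimes R (R ⧸ I ^ k) := by
  apply Module.associatedPrimes.minimalPrimes_annihilator_subset_associatedPrimes
  rwa [Ideal.annihilator_quotient, ← Ideal.radical_minimalPrimes,
    Ideal.radical_pow I (by omega), Ideal.radical_minimalPrimes]

lemma le_of_mem_ass_pow {R : Type*} [CommRing R] {I P : Ideal R} {k : ℕ}
    (hP : P ∈ associatedPrimes R (R ⧸ I ^ k)) : I ≤ P := by
  have := IsAssociatedPrime.annihilator_le hP
  rw [Submodule.annihilator_top, Ideal.annihilator_quotient] at this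
  have hp : P.IsPrime := hP.isPrime
  exact hp.le_of_pow_le this

/-- If every prime containing `I` other than the maximal ideal is minimal over `I`, and the
maximal ideal is associated to all positive powers of `I` or to none, then all positive powers
have the same associated primes. -/
lemma ass_pow_eq {R : Type*} [CommRing R] [IsLocalRing R] [IsNoetherianRing R] {I : Ideal R}
    (hmin : ∀ P : Ideal R, P.IsPrime → I ≤ P → P ≠ maximalIdeal R → P ∈ I.minimalPrimes)
    (hmax : ∀ k, 1 ≤ k → (maximalIdeal R ∈ associatedPrimes R (R ⧸ I ^ k) ↔
      maximalIdeal R ∈ associatedPrimes R (R ⧸ I ^ 1))) {k : ℕ} (hk : 1 ≤ k) :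
    associatedPrimes R (R ⧸ I ^ k) = associatedPrimes R (R ⧸ I ^ 1) := by
  ext P
  by_cases hPm : P = maximalIdeal R
  · rw [hPm, hmax k hk]
  · exact ⟨fun h => mem_ass_pow_of_minimal (hmin P h.isPrime (le_of_mem_ass_pow h) hPm) le_rfl,
      fun h => mem_ass_pow_of_minimal (hmin P h.isPrime (le_of_mem_ass_pow h) hPm) hk⟩

/-- The case where the maximal ideal is principal: every other prime is zero, so the maximal ideal is
the only prime containing `I`. -/
lemma ass_pow_eq_of_principal {R : Type*} [CommRing R] [IsLocalRing R] [IsNoetherianRing R]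
    {t : R} (hm : maximalIdeal R = Ideal.span {t}) {I : Ideal R} (hne : I ≠ ⊥) (hI : I ≠ ⊤)
    {k : ℕ} (hk : 1 ≤ k) :
    associatedPrimes R (R ⧸ I ^ k) = associatedPrimes R (R ⧸ I ^ 1) := by
  have huniq : ∀ P : Ideal R, P.IsPrime → I ≤ P → P = maximalIdeal R := fun P hP hIP => by
    by_contra hPm
    have := prime_eq_span_of_mem (x := 0) (y := t) (by rw [hm, Ideal.span_insert_zero]) hP
      (zero_mem _) hPm
    rw [Ideal.span_singleton_zero] at this
    exact hne (le_bot_iff.1 (this ▸ hIP))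
  have hmm : maximalIdeal R ∈ I.minimalPrimes :=
    ⟨⟨inferInstance, le_maximalIdeal hI⟩, fun Q hQ _ => (huniq Q hQ.1 hQ.2).ge⟩
  exact ass_pow_eq (fun P hP hIP hPm => absurd (huniq P hP hIP) hPm)
    (fun k hk => iff_of_true (mem_ass_pow_of_minimal hmm hk) (mem_ass_pow_of_minimal hmm le_rfl)) hk

lemma ass_pow_eq_of_dim_two {R : Type*} [CommRing R] [IsLocalRing R] [IsNoetherianRing R]
    (hdim : ringKrullDim R = 2) {x y : R} (hm : maximalIdeal R = Ideal.span {x, y})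
    {I : Ideal R} (hne : I ≠ ⊥) {k : ℕ} (hk : 1 ≤ k) :
    associatedPrimes R (R ⧸ I ^ k) = associatedPrimes R (R ⧸ I ^ 1) := by
  obtain ⟨hdom, hx, hy⟩ := dim_two_structure hdim hm
  refine ass_pow_eq (fun P hP hIP hPm => ⟨⟨hP, hIP⟩, fun Q hQ hQP => ?_⟩) (fun k hk => ?_) hk
  · -- `0 < Q < P < 𝔪` would be a chain of length three
    by_contra hPQ
    have hQprime := hQ.1
    have h1 : (⊥ : Ideal R) < Q := bot_lt_iff_ne_bot.2 fun h => hne (le_bot_iff.1 (h ▸ hQ.2))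
    have h2 : Q < P := lt_of_le_not_ge hQP hPQ
    have h3 : P < maximalIdeal R := lt_of_le_of_ne (le_maximalIdeal hP.ne_top) hPm
    have a1 := Ideal.height_add_one_le_of_lt_of_isPrime h1
    have a2 := Ideal.height_add_one_le_of_lt_of_isPrime h2
    have a3 := Ideal.height_add_one_le_of_lt_of_isPrime h3
    have a4 : (maximalIdeal R).height = 2 := by
      have := maximalIdeal_height_eq_ringKrullDim (R := R)
      rw [hdim] at this
      exact WithBot.coe_injective this
    rw [Ideal.height_bot] at a1
    have : (0 + 1 + 1 + 1 : ℕ∞) ≤ 2 :=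
      (add_le_add_left ((add_le_add_left a1 1).trans a2) 1).trans (a3.trans a4.le)
    norm_num at this
  · -- for a nonzero ideal, the maximal ideal is not associated exactly when it is principal
    have hprin : ∀ J : Ideal R, J ≠ ⊥ → (maximalIdeal R ∉ associatedPrimes R (R ⧸ J) ↔
        ∃ f, J = Ideal.span {f}) := fun J hJ => by
      rw [maximalIdeal_mem_ass_iff hm]
      constructor
      · intro h
        refine isPrincipal_of_saturated hm J hJ fun z h1 h2 => ?_
        by_contra hz
        exact h ⟨z, hz, h1, h2⟩
      · rintro ⟨f, rfl⟩ ⟨z, hz, h1, h2⟩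
        exact hz (saturated_of_isPrincipal hx hy (by rintro rfl; simp at hJ) h1 h2)
    rw [← not_iff_not, hprin _ (pow_ne_zero k hne), hprin _ (pow_ne_zero 1 hne), pow_one]
    constructor
    · rintro ⟨a, ha⟩
      obtain ⟨n, rfl⟩ := Nat.exists_eq_add_of_le' hk
      refine isPrincipal_of_pow ?_ ha
      rintro rfl
      exact pow_ne_zero (n + 1) hne (by simpa using ha)
    · rintro ⟨f, rfl⟩
      exact ⟨f ^ k, Ideal.span_singleton_pow f k⟩

theorem stmt0 {R : Type*} [CommRing R] [IsLocalRing R]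
    (hreg : IsRegularLocal R)
    (hdim : ringKrullDim R ≤ 2)
    (I : Ideal R) (hne : I ≠ ⊥) (hproper : I ≠ ⊤) :
    (∀ k : ℕ, 1 ≤ k →
      associatedPrimes R (R ⧸ I ^ k) = associatedPrimes R (R ⧸ I)) ∧
    astab I = 1 := by
  obtain ⟨hN, s, hs, hcard⟩ := hreg
  have main : ∀ k : ℕ, 1 ≤ k →
      associatedPrimes R (R ⧸ I ^ k) = associatedPrimes R (R ⧸ I ^ 1) := fun k hk => by
    have hc : s.card ≤ 2 := by
      rw [← hcard] at hdim
      exact_mod_cast hdim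
    obtain h | h | h : s.card = 0 ∨ s.card = 1 ∨ s.card = 2 := by omega
    · obtain rfl := Finset.card_eq_zero.1 h
      exact ass_pow_eq_of_principal (t := 0) (by simpa using hs.symm) hne hproper hk
    · obtain ⟨t, rfl⟩ := Finset.card_eq_one.1 h
      exact ass_pow_eq_of_principal (t := t) (by simpa using hs.symm) hne hproper hk
    · rw [h] at hcard
      classical
      obtain ⟨x, y, -, rfl⟩ := Finset.card_eq_two.1 h
      exact ass_pow_eq_of_dim_two hcard.symm (x := x) (y := y) (by simpa using hs.symm) hne hk
  refine ⟨fun k hk => (main k hk).trans (by rw [pow_one]), ?_⟩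
  refine le_antisymm (Nat.sInf_le ⟨one_pos, main⟩) ?_
  exact Nat.succ_le_of_lt (Nat.sInf_mem (s := {n₀ : ℕ | 0 < n₀ ∧ ∀ n, n₀ ≤ n →
    associatedPrimes R (R ⧸ I ^ n) = associatedPrimes R (R ⧸ I ^ n₀)}) ⟨1, one_pos, main⟩).1
end

section
/- Let (R,m) be a regular local ring with dim R ≤ 2 and let I be a nonzero proper ideal of R. Then depth(R/I^k) = depth(R/I) for all integers k ≥ 1; that is, the index of depth-stability dstab(I) equals 1. -/
/-!
In dimension `0` there is no nonzero proper ideal, and in dimension `1` (where `R` is a domain)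
`R ⧸ J` is Artinian for every nonzero proper `J`, so every depth in question is `0`.

In dimension `2` the depth of `R ⧸ J` is at most `1`, and it equals `1` exactly when `J` is
principal:

* If some element of `m` is regular on `R ⧸ J`, then prime avoidance gives such an `x` outside
  `m²` as well. The ring `R ⧸ (x)` is then a one-dimensional regular local ring, so the image of
  `J` there is generated by the image of some `f ∈ J`. As `x` is regular on `R ⧸ J`, this says
  `J ⊆ (f) + x J`, and Nakayama's lemma gives `J = (f)`
  (`isPrincipal_of_isSMulRegular_quotient`).
* If `J = (f)` with `f ≠ 0` and `m = (x, y)`, then `m` is not associated to `R ⧸ J`, because `x` is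
  a prime element that does not divide `y`; prime avoidance then provides a regular element
  (`exists_isSMulRegular_quotient_of_isPrincipal`).

Finally, in a local domain a power `I ^ k`, `k ≥ 1`, of a nonzero ideal is principal if and only if
`I` is (`isPrincipal_of_pow`), so the depths of `R ⧸ I ^ k` and `R ⧸ I` agree.
-/

open IsLocalRing

section DepthStability

variable {R : Type*} [CommRing R] [IsLocalRing R]

/-! ### Prime avoidance in a local ring -/

/-- Prime avoidance, with `m²` as the one ideal that need not be prime. -/
lemma exists_mem_maximalIdeal_notMem [IsNoetherianRing R] (hm : maximalIdeal R ≠ ⊥)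
    (S : Set (Ideal R)) (hfin : S.Finite) (hprime : ∀ P ∈ S, P.IsPrime)
    (hS : maximalIdeal R ∉ S) :
    ∃ x ∈ maximalIdeal R, x ∉ maximalIdeal R ^ 2 ∧ ∀ P ∈ S, x ∉ P := by
  classical
  by_contra! hcon
  have hsub : (maximalIdeal R : Set R) ⊆
      ⋃ i ∈ ((insert (maximalIdeal R ^ 2) hfin.toFinset : Finset (Ideal R)) : Set (Ideal R)),
        ((id i : Ideal R) : Set R) := by
    intro x hx
    by_cases h2 : x ∈ maximalIdeal R ^ 2
    · simp only [Set.mem_iUnion]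
      exact ⟨_, by simp, h2⟩
    · obtain ⟨P, hP, hxP⟩ := hcon x hx h2
      simp only [Set.mem_iUnion]
      exact ⟨P, by simp [hP], hxP⟩
  rw [Ideal.subset_union_prime (maximalIdeal R ^ 2) (maximalIdeal R ^ 2)] at hsub
  · obtain ⟨P, hP, hle⟩ := hsub
    simp only [Finset.mem_insert, Set.Finite.mem_toFinset, id] at hP hle
    obtain rfl | hP := hP
    · apply hm
      refine Submodule.eq_bot_of_le_smul_of_le_jacobson_bot (maximalIdeal R) _
        (IsNoetherian.noetherian _) ?_ (maximalIdeal_le_jacobson _)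
      rwa [smul_eq_mul, ← pow_two]
    · have := hprime P hP
      exact hS ((IsLocalRing.eq_maximalIdeal
        ((maximalIdeal.isMaximal R).eq_of_le this.ne_top hle ▸ maximalIdeal.isMaximal R)) ▸ hP)
  · intro i hi h1 _
    simp only [Finset.mem_insert, Set.Finite.mem_toFinset] at hi
    exact hprime i (hi.resolve_left h1)

lemma maximalIdeal_notMem_minimalPrimes (h : 1 ≤ ringKrullDim R) :
    maximalIdeal R ∉ minimalPrimes R := by
  intro hmem
  rw [← IsLocalRing.maximalIdeal_height_eq_ringKrullDim, Ideal.height_eq_zero_iff.mpr hmem] at h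
  exact absurd h (by decide)

/-! ### Regular local rings of dimension one and two -/

/-- If `P ⊆ (x)` is prime and `x ∉ P`, then `P = x P`, so Nakayama's lemma applies. -/
lemma eq_bot_of_le_span_singleton [IsNoetherianRing R] {x : R} (hx : x ∈ maximalIdeal R)
    (P : Ideal R) [P.IsPrime] (hle : P ≤ Ideal.span {x}) (hxP : x ∉ P) : P = ⊥ := by
  refine Submodule.eq_bot_of_le_smul_of_le_jacobson_bot (maximalIdeal R) _
    (IsNoetherian.noetherian _) ?_ (maximalIdeal_le_jacobson _)
  intro p hp
  obtain ⟨q, rfl⟩ := Ideal.mem_span_singleton.mp (hle hp)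
  exact Submodule.smul_mem_smul hx ((‹P.IsPrime›.mem_or_mem hp).resolve_left hxP)

/-- A one-dimensional regular local ring is a domain. -/
lemma isDomain_of_maximalIdeal_eq_span_singleton [IsNoetherianRing R] {y : R}
    (hy : maximalIdeal R = Ideal.span {y}) (hdim : 1 ≤ ringKrullDim R) : IsDomain R := by
  obtain ⟨P, hP, hle⟩ := Ideal.exists_minimalPrimes_le (bot_le : (⊥ : Ideal R) ≤ maximalIdeal R)
  have hPp : P.IsPrime := hP.1.1
  have hyP : y ∉ P := by
    intro h
    have : maximalIdeal R ≤ P := by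
      rw [hy, Ideal.span_singleton_le_iff_mem]; exact h
    exact maximalIdeal_notMem_minimalPrimes hdim (le_antisymm this hle ▸ hP)
  have := eq_bot_of_le_span_singleton (hy ▸ Ideal.mem_span_singleton_self y) P (hy ▸ hle) hyP
  have hbot : (⊥ : Ideal R).IsPrime := this ▸ hPp
  exact IsDomain.of_bot_isPrime R

lemma isPrincipal_of_maximalIdeal_eq_span_singleton [IsNoetherianRing R] [IsDomain R] {y : R}
    (hy : maximalIdeal R = Ideal.span {y}) (I : Ideal R) : I.IsPrincipal := by
  by_cases hI : I = ⊥
  · subst hI; exact bot_isPrincipal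
  · obtain ⟨n, rfl⟩ := exists_maximalIdeal_pow_eq_of_principal R ⟨y, hy⟩ I hI
    exact ⟨y ^ n, by rw [hy, Ideal.span_singleton_pow, Ideal.submodule_span_eq]⟩

/-- An element of `m \ m²` is part of a minimal generating system of `m`. -/
lemma exists_maximalIdeal_eq_span_pair {a b x : R} (hab : maximalIdeal R = Ideal.span {a, b})
    (hx : x ∈ maximalIdeal R) (hx2 : x ∉ maximalIdeal R ^ 2) :
    ∃ y, maximalIdeal R = Ideal.span {x, y} := by
  have ha : a ∈ maximalIdeal R := hab ▸ Ideal.subset_span (by simp)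
  have hb : b ∈ maximalIdeal R := hab ▸ Ideal.subset_span (by simp)
  -- Exchange: a generator with a unit coefficient in `x` can be replaced by `x`.
  have key : ∀ a b u v : R, maximalIdeal R = Ideal.span {a, b} → b ∈ maximalIdeal R →
      IsUnit u → u * a + v * b = x → maximalIdeal R = Ideal.span {x, b} := by
    intro a b u v hab hb hu hxe
    obtain ⟨w, hw⟩ := hu.exists_left_inv
    apply le_antisymm
    · rw [hab, Ideal.span_le]
      rintro z (rfl | rfl)
      · refine Ideal.mem_span_pair.mpr ⟨w, -(w * v), ?_⟩
        linear_combination (-w) * hxe + z * hw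
      · exact Ideal.subset_span (by simp)
    · rw [Ideal.span_le]
      rintro z (rfl | rfl)
      · exact hx
      · exact hb
  obtain ⟨u, v, huv⟩ := Ideal.mem_span_pair.mp (hab ▸ hx)
  by_cases hu : IsUnit u
  · exact ⟨b, key a b u v hab hb hu huv⟩
  by_cases hv : IsUnit v
  · exact ⟨a, key b a v u (by rw [hab, Set.pair_comm]) ha hv (by rw [← huv, add_comm])⟩
  exfalso
  apply hx2
  rw [← huv, pow_two]
  exact add_mem (Ideal.mul_mem_mul ((mem_maximalIdeal _).mpr hu) ha)
    (Ideal.mul_mem_mul ((mem_maximalIdeal _).mpr hv) hb)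

/-- Krull's principal ideal theorem: `m` is not principal in dimension two. -/
lemma maximalIdeal_ne_span_singleton [IsNoetherianRing R] (hdim : ringKrullDim R = 2) (y : R) :
    maximalIdeal R ≠ Ideal.span {y} := by
  intro hmy
  have h1 := Ideal.height_le_one_of_isPrincipal_of_mem_minimalPrimes (Ideal.span {y})
    (maximalIdeal R) (by rw [← hmy, Ideal.minimalPrimes_eq_subsingleton_self]; simp)
  have h2 := IsLocalRing.maximalIdeal_height_eq_ringKrullDim (R := R)
  rw [hdim] at h2
  have h3 : (maximalIdeal R).height = 2 := WithBot.coe_injective h2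
  rw [h3] at h1
  exact absurd h1 (by decide)

lemma maximalIdeal_ne_bot [IsNoetherianRing R] (hdim : ringKrullDim R = 2) :
    maximalIdeal R ≠ ⊥ := by
  intro h
  exact maximalIdeal_ne_span_singleton hdim 0 (by simp [h])

/-- If `m = (x, y)` in dimension two, then `R ⧸ (x)` is a discrete valuation ring. -/
lemma isDomain_quotient_and_isPrincipal [IsNoetherianRing R] {x y : R}
    (hxy : maximalIdeal R = Ideal.span {x, y}) (hdim : ringKrullDim R = 2) :
    IsDomain (R ⧸ Ideal.span {x}) ∧ ∀ J : Ideal (R ⧸ Ideal.span {x}), J.IsPrincipal := by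
  have hx : x ∈ maximalIdeal R := hxy ▸ Ideal.subset_span (by simp)
  have hne : Ideal.span {x} ≠ ⊤ := by
    rw [Ne, Ideal.span_singleton_eq_top]; exact hx
  have : Nontrivial (R ⧸ Ideal.span {x}) := Ideal.Quotient.nontrivial_iff.mpr hne
  have : IsLocalRing (R ⧸ Ideal.span {x}) :=
    IsLocalRing.of_surjective' (Ideal.Quotient.mk _) Ideal.Quotient.mk_surjective
  have hmax : maximalIdeal (R ⧸ Ideal.span {x}) =
      Ideal.span {Ideal.Quotient.mk (Ideal.span {x}) y} := by
    rw [← IsLocalRing.map_maximalIdeal_of_surjective (Ideal.Quotient.mk (Ideal.span {x}))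
      Ideal.Quotient.mk_surjective, hxy, Ideal.map_span, Set.image_pair,
      Ideal.Quotient.eq_zero_iff_mem.mpr (Ideal.mem_span_singleton_self x), Ideal.span_insert_zero]
  have hd : 1 ≤ ringKrullDim (R ⧸ Ideal.span {x}) := by
    have h := Ideal.height_le_ringKrullDim_quotient_add_one hx
    rw [IsLocalRing.maximalIdeal_height_eq_ringKrullDim, hdim] at h
    generalize ringKrullDim (R ⧸ Ideal.span {x}) = d at h
    induction d using WithBot.recBotCoe with
    | bot => exact absurd h (by decide)
    | coe d =>
      have h' : (1 + 1 : ℕ∞) ≤ d + 1 := by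
        rw [one_add_one_eq_two]; exact WithBot.coe_le_coe.mp h
      exact WithBot.coe_le_coe.mpr ((ENat.add_le_add_iff_right ENat.one_ne_top).mp h')
  have hdom := isDomain_of_maximalIdeal_eq_span_singleton hmax hd
  exact ⟨hdom, isPrincipal_of_maximalIdeal_eq_span_singleton hmax⟩

/-- A two-dimensional regular local ring is a domain. -/
lemma isDomain_of_maximalIdeal_eq_span_pair [IsNoetherianRing R] {a b : R}
    (hab : maximalIdeal R = Ideal.span {a, b}) (hdim : ringKrullDim R = 2) : IsDomain R := by
  have h1 : 1 ≤ ringKrullDim R := by rw [hdim]; decide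
  have hmin := maximalIdeal_notMem_minimalPrimes h1
  have hm := maximalIdeal_ne_bot hdim
  obtain ⟨x, hx, hx2, hxP⟩ := exists_mem_maximalIdeal_notMem hm (minimalPrimes R)
    (minimalPrimes.finite_of_isNoetherianRing R) (fun P hP => hP.1.1) hmin
  obtain ⟨y, hxy⟩ := exists_maximalIdeal_eq_span_pair hab hx hx2
  have hdom := (isDomain_quotient_and_isPrincipal hxy hdim).1
  have hprime : (Ideal.span {x}).IsPrime := (Ideal.Quotient.isDomain_iff_prime _).mp hdom
  obtain ⟨P, hP, hle⟩ := Ideal.exists_minimalPrimes_le (bot_le : (⊥ : Ideal R) ≤ Ideal.span {x})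
  have hPp : P.IsPrime := hP.1.1
  have := eq_bot_of_le_span_singleton hx P hle (hxP P hP)
  have hbot : (⊥ : Ideal R).IsPrime := this ▸ hPp
  exact IsDomain.of_bot_isPrime R

/-! ### Positive depth and principal ideals -/

lemma isSMulRegular_iff_notMem_associatedPrimes {R : Type*} [CommRing R] [IsNoetherianRing R]
    (J : Ideal R) (x : R) :
    IsSMulRegular (R ⧸ J) x ↔ ∀ P ∈ associatedPrimes R (R ⧸ J), x ∉ P := by
  have h := Set.ext_iff.mp (biUnion_associatedPrimes_eq_zero_divisors R (R ⧸ J)) x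
  simp only [Set.mem_iUnion, Set.mem_ofPred_eq, SetLike.mem_coe, exists_prop] at h
  rw [isSMulRegular_iff_right_eq_zero_of_smul]
  constructor
  · intro hreg P hP hxP
    obtain ⟨z, hz, hz0⟩ := h.mp ⟨P, hP, hxP⟩
    exact hz (hreg z hz0)
  · intro hn z hz0
    by_contra hz
    obtain ⟨P, hP, hxP⟩ := h.mpr ⟨z, hz, hz0⟩
    exact hn P hP hxP

lemma isPrincipal_of_isSMulRegular_quotient [IsNoetherianRing R] {a b : R}
    (hab : maximalIdeal R = Ideal.span {a, b}) (hdim : ringKrullDim R = 2) (J : Ideal R)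
    {r : R} (hr : r ∈ maximalIdeal R) (hreg : IsSMulRegular (R ⧸ J) r) : J.IsPrincipal := by
  have hm := maximalIdeal_ne_bot hdim
  rw [isSMulRegular_iff_notMem_associatedPrimes] at hreg
  obtain ⟨x, hx, hx2, hxP⟩ := exists_mem_maximalIdeal_notMem hm (associatedPrimes R (R ⧸ J))
    (associatedPrimes.finite R _) (fun P hP => hP.isPrime) (fun h => hreg _ h hr)
  rw [← isSMulRegular_iff_notMem_associatedPrimes,
    isSMulRegular_iff_right_eq_zero_of_smul] at hxP
  obtain ⟨y, hxy⟩ := exists_maximalIdeal_eq_span_pair hab hx hx2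
  obtain ⟨g, hg⟩ := (isDomain_quotient_and_isPrincipal hxy hdim).2
    (J.map (Ideal.Quotient.mk (Ideal.span {x})))
  rw [Ideal.submodule_span_eq] at hg
  have hgm : g ∈ J.map (Ideal.Quotient.mk (Ideal.span {x})) :=
    hg ▸ Ideal.mem_span_singleton_self g
  obtain ⟨f, hf, rfl⟩ :=
    (Ideal.mem_map_iff_of_surjective _ Ideal.Quotient.mk_surjective).mp hgm
  refine ⟨f, ?_⟩
  rw [Ideal.submodule_span_eq]
  apply le_antisymm
  · refine Submodule.le_of_le_smul_of_le_jacobson_bot (I := maximalIdeal R)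
      (IsNoetherian.noetherian _) (maximalIdeal_le_jacobson _) ?_
    intro z hz
    have hz' := Ideal.mem_map_of_mem (Ideal.Quotient.mk (Ideal.span {x})) hz
    rw [hg] at hz'
    obtain ⟨c, hc⟩ := Ideal.mem_span_singleton'.mp hz'
    obtain ⟨c, rfl⟩ := Ideal.Quotient.mk_surjective c
    rw [← map_mul, eq_comm, Ideal.Quotient.eq] at hc
    obtain ⟨d, hd⟩ := Ideal.mem_span_singleton.mp hc
    have hxd : x * d ∈ J := hd ▸ sub_mem hz (Ideal.mul_mem_left _ _ hf)
    have hdJ : d ∈ J := by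
      rw [← Ideal.Quotient.eq_zero_iff_mem]
      apply hxP
      rw [← Ideal.Quotient.eq_zero_iff_mem] at hxd
      rw [← hxd, map_mul, Algebra.smul_def]
      rfl
    have hze : z = c * f + x * d := by linear_combination hd
    rw [hze]
    exact Submodule.add_mem_sup (Ideal.mul_mem_left _ _ (Ideal.mem_span_singleton_self f))
      (Submodule.smul_mem_smul hx hdJ)
  · rw [Ideal.span_singleton_le_iff_mem]; exact hf

lemma exists_isSMulRegular_quotient_of_isPrincipal [IsNoetherianRing R] [IsDomain R] {x y : R}
    (hxy : maximalIdeal R = Ideal.span {x, y}) (hdim : ringKrullDim R = 2) (J : Ideal R)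
    (hJ : J ≠ ⊥) (hJp : J.IsPrincipal) :
    ∃ r ∈ maximalIdeal R, IsSMulRegular (R ⧸ J) r := by
  have hm := maximalIdeal_ne_bot hdim
  have hx : x ∈ maximalIdeal R := hxy ▸ Ideal.subset_span (by simp)
  have hy : y ∈ maximalIdeal R := hxy ▸ Ideal.subset_span (by simp)
  have hdom := (isDomain_quotient_and_isPrincipal hxy hdim).1
  have hprime : (Ideal.span {x}).IsPrime := (Ideal.Quotient.isDomain_iff_prime _).mp hdom
  have hyx : y ∉ Ideal.span {x} := by
    intro h
    have hmx : maximalIdeal R = Ideal.span {x} := by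
      rw [hxy]
      apply le_antisymm
      · rw [Ideal.span_le]
        rintro z (rfl | rfl)
        · exact Ideal.mem_span_singleton_self _
        · exact h
      · exact Ideal.span_mono (by simp)
    exact maximalIdeal_ne_span_singleton hdim x hmx
  have hass : maximalIdeal R ∉ associatedPrimes R (R ⧸ J) := by
    intro hmem
    rw [AssociatedPrimes.mem_iff, isAssociatedPrime_iff] at hmem
    obtain ⟨_, z, hz⟩ := hmem
    obtain ⟨a, rfl⟩ := Ideal.Quotient.mk_surjective z
    obtain ⟨f, rfl⟩ := hJp
    rw [Ideal.submodule_span_eq] at *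
    have hf : f ≠ 0 := fun h => hJ (by simp [h])
    have hmul : ∀ r ∈ maximalIdeal R, r * a ∈ Ideal.span {f} := by
      intro r hr
      rw [hz, Submodule.mem_colon_singleton, Submodule.mem_bot] at hr
      rw [← Ideal.Quotient.eq_zero_iff_mem, ← hr, map_mul, Algebra.smul_def]
      rfl
    have hafn : a ∉ Ideal.span {f} := by
      intro h
      rw [Ideal.Quotient.eq_zero_iff_mem.mpr h] at hz
      have : (1 : R) ∈ maximalIdeal R := by
        rw [hz, Submodule.mem_colon_singleton]; simp
      exact (Ideal.ne_top_iff_one _).mp (maximalIdeal.isMaximal R).ne_top this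
    obtain ⟨b, hb⟩ := Ideal.mem_span_singleton.mp (hmul x hx)
    obtain ⟨c, hc⟩ := Ideal.mem_span_singleton.mp (hmul y hy)
    have hbc : b * y = x * c := by
      apply mul_left_cancel₀ hf
      linear_combination (-y) * hb + x * hc
    have hbx : b ∈ Ideal.span {x} :=
      (hprime.mem_or_mem (x := b) (y := y)
        (by rw [hbc]; exact Ideal.mem_span_singleton.mpr (dvd_mul_right _ _))).resolve_right hyx
    obtain ⟨b', rfl⟩ := Ideal.mem_span_singleton.mp hbx
    have hx0 : x ≠ 0 := by
      rintro rfl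
      exact maximalIdeal_ne_span_singleton hdim y (by rw [hxy, Ideal.span_insert_zero])
    apply hafn
    refine Ideal.mem_span_singleton.mpr ⟨b', ?_⟩
    apply mul_left_cancel₀ hx0
    linear_combination hb
  obtain ⟨r, hr, _, hrP⟩ := exists_mem_maximalIdeal_notMem hm (associatedPrimes R (R ⧸ J))
    (associatedPrimes.finite R _) (fun P hP => hP.isPrime) hass
  exact ⟨r, hr, (isSMulRegular_iff_notMem_associatedPrimes J r).mpr hrP⟩

/-! ### Principal powers -/

/-- A factor of a nonzero principal ideal of a local domain is principal: if `I * J = (g)`, then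
`a * b` generates `(g)` for some `a ∈ I`, `b ∈ J`, since otherwise `(g) = I * J ⊆ g m`. -/
lemma isPrincipal_of_mul_isPrincipal [IsDomain R] {I J : Ideal R} (hne : I * J ≠ ⊥)
    (hp : (I * J).IsPrincipal) : I.IsPrincipal := by
  obtain ⟨g, hg⟩ := hp
  rw [Ideal.submodule_span_eq] at hg
  have hg0 : g ≠ 0 := by rintro rfl; exact hne (by simp [hg])
  by_cases h : ∃ a ∈ I, ∃ b ∈ J, ∃ c, IsUnit c ∧ a * b = g * c
  · obtain ⟨a, ha, b, hb, c, hc, habc⟩ := h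
    have hb0 : b ≠ 0 := by
      rintro rfl
      rw [mul_zero, eq_comm, mul_eq_zero] at habc
      exact habc.elim hg0 hc.ne_zero
    refine ⟨a, ?_⟩
    rw [Ideal.submodule_span_eq]
    apply le_antisymm
    · intro z hz
      have hzb : z * b ∈ Ideal.span {g} := hg ▸ Ideal.mul_mem_mul hz hb
      obtain ⟨d, hd⟩ := Ideal.mem_span_singleton.mp hzb
      obtain ⟨w, hw⟩ := hc.exists_left_inv
      refine Ideal.mem_span_singleton.mpr ⟨w * d, ?_⟩
      apply mul_right_cancel₀ hb0
      linear_combination hd - w * d * habc - g * d * hw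
    · rw [Ideal.span_singleton_le_iff_mem]; exact ha
  · exfalso
    push Not at h
    have hle : I * J ≤ Ideal.span {g} * maximalIdeal R := by
      rw [Ideal.mul_le]
      intro a ha b hb
      have hab : a * b ∈ Ideal.span {g} := hg ▸ Ideal.mul_mem_mul ha hb
      obtain ⟨c, hc⟩ := Ideal.mem_span_singleton.mp hab
      rw [hc]
      refine Ideal.mul_mem_mul (Ideal.mem_span_singleton_self g) ?_
      rw [mem_maximalIdeal]
      exact fun hu => h a ha b hb c hu hc
    have hgm : g ∈ Ideal.span {g} * maximalIdeal R :=
      hle (hg ▸ Ideal.mem_span_singleton_self g)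
    obtain ⟨z, hz, hgz⟩ := Ideal.mem_span_singleton_mul.mp hgm
    have : z = 1 := mul_left_cancel₀ hg0 (by rw [hgz, mul_one])
    subst this
    exact (Ideal.ne_top_iff_one _).mp (maximalIdeal.isMaximal R).ne_top hz

lemma isPrincipal_of_pow_s1 [IsDomain R] {I : Ideal R} (hI : I ≠ ⊥) {k : ℕ} (hk : 1 ≤ k)
    (hp : (I ^ k).IsPrincipal) : I.IsPrincipal := by
  obtain ⟨k, rfl⟩ := Nat.exists_eq_add_of_le' hk
  have hne : I ^ (k + 1) ≠ ⊥ := pow_ne_zero _ hI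
  rw [pow_succ'] at hp hne
  exact isPrincipal_of_mul_isPrincipal hne hp

/-! ### The dimension bound on depth -/

/-- A regular sequence on `R ⧸ J`, `J ≠ 0`, is shorter than `dim R`. -/
lemma length_add_one_le_of_isRegular [IsNoetherianRing R] [IsDomain R] {J : Ideal R}
    (hJ : J ≠ ⊥) {rs : List R} (h : RingTheory.Sequence.IsRegular (R ⧸ J) rs) {d : ℕ}
    (hd : ringKrullDim R = d) : rs.length + 1 ≤ d := by
  obtain ⟨a, ha, ha0⟩ := Submodule.exists_mem_ne_zero_of_ne_bot hJ
  have h1 := ringKrullDim_succ_le_of_surjective (Ideal.Quotient.mk J)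
    Ideal.Quotient.mk_surjective (mem_nonZeroDivisors_of_ne_zero ha0)
    (Ideal.Quotient.eq_zero_iff_mem.mpr ha)
  have h2 := Module.supportDim_add_length_eq_supportDim_of_isRegular rs h
  rw [Module.supportDim_quotient_eq_ringKrullDim] at h2
  have hnt := h.quot_ofList_smul_nontrivial ⊤
  have h3 := Module.supportDim_ne_bot_of_nontrivial R
    ((R ⧸ J) ⧸ (Ideal.ofList rs • ⊤ : Submodule R (R ⧸ J)))
  rw [← h2, hd] at h1
  generalize Module.supportDim R ((R ⧸ J) ⧸ (Ideal.ofList rs • ⊤ : Submodule R (R ⧸ J))) = s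
    at h1 h3
  have hs : 0 ≤ s := by
    induction s using WithBot.recBotCoe with
    | bot => exact absurd rfl h3
    | coe s => exact_mod_cast (zero_le : 0 ≤ s)
  have h4 : ((rs.length + 1 : ℕ) : WithBot ℕ∞) ≤ d := by
    refine le_trans ?_ h1
    push_cast
    gcongr
    exact le_add_of_nonneg_left hs
  exact_mod_cast h4

end DepthStability

/-! ### Stability of the depth -/

theorem stmt1 {R : Type*} [CommRing R] [IsLocalRing R]
    (hreg : IsRegularLocal R)
    (hdim : ringKrullDim R ≤ 2)
    (I : Ideal R) (hne : I ≠ ⊥) (hproper : I ≠ ⊤) :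
    (∀ k : ℕ, 1 ≤ k →
      depthIn (IsLocalRing.maximalIdeal R) (I ^ k) = depthIn (IsLocalRing.maximalIdeal R) I) ∧
    dstab (IsLocalRing.maximalIdeal R) I = 1 := by
  have main : ∀ k : ℕ, 1 ≤ k →
      depthIn (IsLocalRing.maximalIdeal R) (I ^ k) =
        depthIn (IsLocalRing.maximalIdeal R) I := by
    obtain ⟨hN, s, hs, hcard⟩ := hreg
    intro k hk
    have hk0 : k ≠ 0 := by lia
    have hpt : I ^ k ≠ ⊤ := fun h => hproper (top_le_iff.mp (h ▸ Ideal.pow_le_self hk0))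
    have hnil : ∀ J : Ideal R, J ≠ ⊤ → RingTheory.Sequence.IsRegular (R ⧸ J) ([] : List R) := by
      intro J hJ
      have : Nontrivial (R ⧸ J) := Ideal.Quotient.nontrivial_iff.mpr hJ
      exact RingTheory.Sequence.IsRegular.nil R _
    have hcase : s.card = 0 ∨ s.card = 1 ∨ s.card = 2 := by
      rw [← hcard] at hdim
      have : s.card ≤ 2 := by exact_mod_cast hdim
      lia
    obtain h0 | h1 | h2 := hcase
    · rw [Finset.card_eq_zero] at h0
      subst h0
      exfalso
      have hle := le_maximalIdeal hproper
      rw [← hs] at hle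
      simp at hle
      exact hne hle
    · have hd : ringKrullDim R = (1 : ℕ) := by rw [← hcard, h1]
      obtain ⟨y, rfl⟩ := Finset.card_eq_one.mp h1
      have hdom : IsDomain R := isDomain_of_maximalIdeal_eq_span_singleton (y := y)
        (by rw [← hs]; simp) (by rw [hd]; decide)
      have key : ∀ J : Ideal R, J ≠ ⊥ → J ≠ ⊤ → depthIn (maximalIdeal R) J = sSup {0} := by
        intro J hJ hJt
        unfold depthIn
        congr 1
        ext n
        constructor
        · rintro ⟨rs, rfl, -, hrs⟩
          have := length_add_one_le_of_isRegular hJ hrs hd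
          simp only [Set.mem_singleton_iff]
          lia
        · rintro rfl
          exact ⟨[], rfl, by simp, hnil J hJt⟩
      rw [key I hne hproper, key (I ^ k) (pow_ne_zero k hne) hpt]
    · have hd : ringKrullDim R = (2 : ℕ) := by rw [← hcard, h2]
      have hd' : ringKrullDim R = 2 := by rw [hd]; rfl
      classical
      obtain ⟨a, b, -, rfl⟩ := Finset.card_eq_two.mp h2
      have hab : maximalIdeal R = Ideal.span {a, b} := by rw [← hs]; simp
      have hdom : IsDomain R := isDomain_of_maximalIdeal_eq_span_pair hab hd'
      have key : ∀ J : Ideal R, J ≠ ⊥ → J ≠ ⊤ →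
          depthIn (maximalIdeal R) J = sSup {n | n = 0 ∨ (n = 1 ∧ J.IsPrincipal)} := by
        intro J hJ hJt
        have hnt : Nontrivial (R ⧸ J) := Ideal.Quotient.nontrivial_iff.mpr hJt
        unfold depthIn
        congr 1
        ext n
        constructor
        · rintro ⟨rs, rfl, hmem, hrs⟩
          have hlen := length_add_one_le_of_isRegular hJ hrs hd
          match rs, hlen with
          | [], _ => exact Or.inl rfl
          | [r], _ =>
            exact Or.inr ⟨rfl, isPrincipal_of_isSMulRegular_quotient hab hd' J
              (hmem r (by simp))
              ((RingTheory.Sequence.isWeaklyRegular_singleton_iff _ r).mp hrs.toIsWeaklyRegular)⟩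
          | _ :: _ :: _, hlen => simp at hlen
        · rintro (rfl | ⟨rfl, hJp⟩)
          · exact ⟨[], rfl, by simp, hnil J hJt⟩
          · obtain ⟨r, hr, hrr⟩ := exists_isSMulRegular_quotient_of_isPrincipal hab hd' J hJ hJp
            have hmem : ∀ x ∈ [r], x ∈ maximalIdeal R := by simpa using hr
            exact ⟨[r], rfl, hmem, (isRegular_iff_isWeaklyRegular_of_subset_maximalIdeal hmem).mpr
              ((RingTheory.Sequence.isWeaklyRegular_singleton_iff _ r).mpr hrr)⟩
      have hiff : (I ^ k).IsPrincipal ↔ I.IsPrincipal := by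
        refine ⟨isPrincipal_of_pow_s1 hne hk, ?_⟩
        rintro ⟨f, rfl⟩
        exact ⟨f ^ k, by
          rw [Ideal.submodule_span_eq, Ideal.submodule_span_eq, Ideal.span_singleton_pow]⟩
      rw [key I hne hproper, key (I ^ k) (pow_ne_zero k hne) hpt, hiff]
  refine ⟨main, ?_⟩
  have hmem : 1 ∈ {n₀ : ℕ | 0 < n₀ ∧ ∀ n, n₀ ≤ n →
      depthIn (maximalIdeal R) (I ^ n) = depthIn (maximalIdeal R) (I ^ n₀)} :=
    ⟨one_pos, fun n hn => by rw [main n hn, pow_one]⟩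
  exact le_antisymm (Nat.sInf_le hmem) (Nat.sInf_mem ⟨1, hmem⟩).1
end

section
/- Let (R,m) be a regular local ring with dim R ≤ 2 and let I be a nonzero proper ideal of R. Then Ass(R/\overline{I^k}) = Ass(R/\overline{I}) for all integers k ≥ 1; that is, the index of Ass-stability for integral closures \overline{astab}(I) equals 1. -/
/-!
Ass-stability of integral closures in a regular local ring `(R, m)` of dimension at most two.

If `I` is nonzero and proper then `dim R` is `1` or `2`, and `m` is generated by at most two
elements `x, y`. Every prime `P ≠ m` is principal: it misses a generator, say `x`; the ring
`R / (x)` is local with principal maximal ideal, hence a principal ideal ring, and since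
`P ∩ (x) = xP`, Nakayama lifts a generator of `P + (x) / (x)` to a generator of `P`. The dimension
hypothesis supplies a non-minimal principal prime, and a prime strictly below a principal prime
`(g)` is `0` by Nakayama, so `R` is a domain. By Kaplansky's criterion `R` is a UFD, and in
particular it is integrally closed.

Write `I = f J` with `J` contained in no principal prime, so that either `J = R` or `m` is the only
prime containing `J`. Since `R` is normal, the integral closure of `I ^ k` is `f ^ k` times that of
`J ^ k`. For every `k ≥ 1` the associated primes of `R` modulo the integral closure of `I ^ k` are
then the minimal primes of `I`, together with `m` if `J ≠ R` (`associatedPrimes_intCl_pow`):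
an associated prime which is principal is minimal over `I`, one which is not principal is `m`; if
`J = R` the ideal in question is `(f ^ k)`, all of whose associated primes are principal; and if
`J ≠ R`, multiplication by `f ^ k` embeds `R` modulo the integral closure of `J ^ k`, whose only
associated prime is `m`. This description does not depend on `k`.
-/

open IsLocalRing

/-! ### Primes of regular local rings of dimension at most two -/

section LocalAlgebra

variable {R : Type*} [CommRing R]

/-- Nakayama's lemma in the form: an ideal `q` with `q ⊆ x q` and `x ∈ m` is zero. -/
lemma eq_bot_of_le_span_mul [IsLocalRing R] [IsNoetherianRing R] {x : R}
    (hx : x ∈ maximalIdeal R) {q : Ideal R} (h : ∀ a ∈ q, ∃ b ∈ q, a = x * b) : q = ⊥ := by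
  refine Submodule.eq_bot_of_le_smul_of_le_jacobson_bot (Ideal.span {x}) q
    (IsNoetherian.noetherian q) (fun a ha => ?_) ?_
  · obtain ⟨b, hb, rfl⟩ := h a ha
    exact Submodule.smul_mem_smul (Ideal.mem_span_singleton_self x) hb
  · rw [jacobson_eq_maximalIdeal _ bot_ne_top, Ideal.span_singleton_le_iff_mem]
    exact hx

/-- No domain hypothesis is made: a prime `q ≠ (x)` satisfies `q = x q`, so it is zero, and a ring
whose primes are all principal is a principal ideal ring. -/
lemma isPrincipalIdealRing_of_maximalIdeal_eq_span [IsLocalRing R] [IsNoetherianRing R] {x : R}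
    (hx : maximalIdeal R = Ideal.span {x}) : IsPrincipalIdealRing R := by
  refine IsPrincipalIdealRing.of_prime fun q hq => ?_
  by_cases hqm : q = maximalIdeal R
  · exact ⟨x, by rw [hqm, hx]⟩
  have hqle : q ≤ maximalIdeal R := le_maximalIdeal hq.ne_top
  have hxq : x ∉ q := fun h => hqm (le_antisymm hqle (by
    rw [hx, Ideal.span_singleton_le_iff_mem]; exact h))
  have : q = ⊥ := eq_bot_of_le_span_mul (x := x)
    (by rw [hx]; exact Ideal.mem_span_singleton_self x) fun a ha => by
      obtain ⟨b, rfl⟩ := Ideal.mem_span_singleton.mp (hx ▸ hqle ha)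
      exact ⟨b, (hq.mem_or_mem ha).resolve_left hxq, rfl⟩
  rw [this]
  infer_instance

/-- A prime missing one of two generators `x` of the maximal ideal is principal: its image in the
principal ideal ring `R / (x)` is, and a generator lifts because `P ∩ (x) = x P`. -/
lemma isPrincipal_of_isPrime_of_notMem [IsLocalRing R] [IsNoetherianRing R] {x y : R}
    (hxy : maximalIdeal R = Ideal.span {x, y}) {P : Ideal R} [hP : P.IsPrime] (hxP : x ∉ P) :
    ∃ g, P = Ideal.span {g} := by
  have hxm : x ∈ maximalIdeal R := by
    rw [hxy]; exact Ideal.subset_span (by simp)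
  set π := Ideal.Quotient.mk (Ideal.span {x}) with hπ
  have hsurj : Function.Surjective π := Ideal.Quotient.mk_surjective
  have : Nontrivial (R ⧸ Ideal.span {x}) := Ideal.Quotient.nontrivial_iff.mpr fun h =>
    (maximalIdeal.isMaximal R).ne_top <| top_unique <| by
      rw [← h, Ideal.span_singleton_le_iff_mem]; exact hxm
  have : IsLocalRing (R ⧸ Ideal.span {x}) := .of_surjective' π hsurj
  have hmax : maximalIdeal (R ⧸ Ideal.span {x}) = Ideal.span {π y} := by
    have h1 : (maximalIdeal (R ⧸ Ideal.span {x})).comap π = maximalIdeal R :=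
      eq_maximalIdeal (Ideal.comap_isMaximal_of_surjective π hsurj)
    have hπx : π x = 0 := Ideal.Quotient.eq_zero_iff_mem.mpr (Ideal.mem_span_singleton_self x)
    rw [← Ideal.map_comap_of_surjective π hsurj (maximalIdeal _), h1, hxy, Ideal.map_span,
      Set.image_pair, hπx, Ideal.span_insert_zero]
  have := isPrincipalIdealRing_of_maximalIdeal_eq_span hmax
  obtain ⟨γ, hγ⟩ := (IsPrincipalIdealRing.principal (P.map π)).principal
  have hγP : γ ∈ P.map π := by rw [hγ]; exact Ideal.mem_span_singleton_self γ
  obtain ⟨g, hgP, rfl⟩ := (Ideal.mem_map_iff_of_surjective π hsurj).mp hγP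
  refine ⟨g, le_antisymm ?_ ((Ideal.span_singleton_le_iff_mem _).mpr hgP)⟩
  refine Submodule.le_of_le_smul_of_le_jacobson_bot (I := Ideal.span {x})
    (IsNoetherian.noetherian P) ?_ fun a ha => ?_
  · rw [jacobson_eq_maximalIdeal _ bot_ne_top, Ideal.span_singleton_le_iff_mem]
    exact hxm
  · have haγ : π a ∈ Ideal.span {π g} := hγ.le (Ideal.mem_map_of_mem π ha)
    obtain ⟨c, hc⟩ := Ideal.mem_span_singleton.mp haγ
    obtain ⟨c, rfl⟩ := hsurj c
    have hd : a - g * c ∈ Ideal.span {x} := Ideal.Quotient.eq.mp (by simpa using hc)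
    obtain ⟨b, hb⟩ := Ideal.mem_span_singleton.mp hd
    have hbP : b ∈ P := (hP.mem_or_mem (x := x)
      (hb ▸ P.sub_mem ha (P.mul_mem_right c hgP))).resolve_left hxP
    rw [show a = g * c + x * b by rw [← hb]; ring]
    exact Submodule.add_mem_sup (Ideal.mul_mem_right _ _ (Ideal.mem_span_singleton_self g))
      (Submodule.smul_mem_smul (Ideal.mem_span_singleton_self x) hbP)

lemma isPrincipal_of_isPrime_of_ne [IsLocalRing R] [IsNoetherianRing R] {x y : R}
    (hxy : maximalIdeal R = Ideal.span {x, y}) {P : Ideal R} [hP : P.IsPrime]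
    (hPm : P ≠ maximalIdeal R) : ∃ g, P = Ideal.span {g} := by
  by_cases hx : x ∈ P
  · by_cases hy : y ∈ P
    · refine absurd (le_antisymm (le_maximalIdeal hP.ne_top) ?_) hPm
      rw [hxy, Ideal.span_le]
      rintro z (rfl | rfl) <;> assumption
    · exact isPrincipal_of_isPrime_of_notMem (by rw [hxy, Set.pair_comm]) hy
  · exact isPrincipal_of_isPrime_of_notMem hxy hx

/-- A prime `q` strictly below `(g)` satisfies `q = g q`, hence is zero by Nakayama. -/
lemma isDomain_of_lt_span_singleton [IsLocalRing R] [IsNoetherianRing R] {q : Ideal R}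
    [hq : q.IsPrime] {g : R} (hg : g ∈ maximalIdeal R) (hlt : q < Ideal.span {g}) :
    IsDomain R := by
  have hgq : g ∉ q := fun h => hlt.not_ge ((Ideal.span_singleton_le_iff_mem _).mpr h)
  have : q = ⊥ := eq_bot_of_le_span_mul hg fun a ha => by
    obtain ⟨b, rfl⟩ := Ideal.mem_span_singleton.mp (hlt.le ha)
    exact ⟨b, (hq.mem_or_mem ha).resolve_left hgq, rfl⟩
  exact IsDomain.of_bot_isPrime R (hbp := this ▸ hq)

end LocalAlgebra

/-- The consequences of regularity in dimension one or two that carry the argument; the prime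
element `g` makes Kaplansky's criterion hold at the maximal ideal. -/
lemma IsRegularLocal.structure_of_dim_le_two {R : Type*} [CommRing R] [IsLocalRing R]
    (hreg : IsRegularLocal R) (hdim : ringKrullDim R ≤ 2) (hm : maximalIdeal R ≠ ⊥) :
    IsNoetherianRing R ∧ IsDomain R ∧
      (∃ g ∈ maximalIdeal R, Prime g) ∧
      ∀ P : Ideal R, P.IsPrime → P ≠ maximalIdeal R → ∃ g, P = Ideal.span {g} := by
  classical
  obtain ⟨hN, s, hs, hcard⟩ := hreg
  have hc2 : s.card ≤ 2 := by
    rw [← hcard] at hdim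
    exact_mod_cast hdim
  have hxy : ∃ x y, maximalIdeal R = Ideal.span {x, y} := by
    interval_cases h : s.card
    · rw [Finset.card_eq_zero] at h
      subst h
      exact ⟨0, 0, by rw [← hs]; simp⟩
    · obtain ⟨x, rfl⟩ := Finset.card_eq_one.mp h
      exact ⟨x, x, by rw [← hs]; simp⟩
    · obtain ⟨x, y, -, rfl⟩ := Finset.card_eq_two.mp h
      exact ⟨x, y, by rw [← hs]; simp⟩
  obtain ⟨x, y, hxy⟩ := hxy
  have hprin : ∀ P : Ideal R, P.IsPrime → P ≠ maximalIdeal R → ∃ g, P = Ideal.span {g} :=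
    fun P hP hPm => isPrincipal_of_isPrime_of_ne hxy hPm
  -- In dimension one the larger prime may be `m`, which is then principal itself; in dimension two
  -- the middle prime of a maximal chain differs from `m`.
  have hchain : ∃ p₀ p₁ : PrimeSpectrum R, p₀ < p₁ ∧ ∃ g, p₁.asIdeal = Ideal.span {g} := by
    interval_cases h : s.card
    · rw [Finset.card_eq_zero] at h
      subst h
      exact absurd (by rw [← hs]; simp) hm
    · obtain ⟨l, hl⟩ := Order.le_krullDim_iff.mp (show ((1 : ℕ) : WithBot ℕ∞) ≤ _ from hcard.le)
      obtain ⟨t, rfl⟩ := Finset.card_eq_one.mp h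
      have hlt : l ⟨0, by omega⟩ < l ⟨1, by omega⟩ := l.strictMono (by simp [Fin.lt_def])
      refine ⟨_, _, hlt, ?_⟩
      by_cases hc : (l ⟨1, by omega⟩).asIdeal = maximalIdeal R
      · exact ⟨t, by rw [hc, ← hs]; simp⟩
      · exact hprin _ (l _).isPrime hc
    · obtain ⟨l, hl⟩ := Order.le_krullDim_iff.mp (show ((2 : ℕ) : WithBot ℕ∞) ≤ _ from hcard.le)
      have hlt : l ⟨0, by omega⟩ < l ⟨1, by omega⟩ := l.strictMono (by simp [Fin.lt_def])
      have hlt' : l ⟨1, by omega⟩ < l ⟨2, by omega⟩ := l.strictMono (by simp [Fin.lt_def])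
      refine ⟨_, _, hlt, hprin _ (l _).isPrime fun hc => ?_⟩
      have h2 : (l ⟨1, by omega⟩).asIdeal < (l ⟨2, by omega⟩).asIdeal := hlt'
      exact h2.not_ge (hc ▸ le_maximalIdeal (l _).isPrime.ne_top)
  obtain ⟨p₀, p₁, hlt, g, hg⟩ := hchain
  have hlt' : p₀.asIdeal < Ideal.span {g} := hg ▸ hlt
  have := p₀.isPrime
  have hgm : g ∈ maximalIdeal R :=
    le_maximalIdeal p₁.isPrime.ne_top (hg ▸ Ideal.mem_span_singleton_self g)
  have hdom := isDomain_of_lt_span_singleton hgm hlt'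
  refine ⟨hN, hdom, ⟨g, hgm, ?_⟩, hprin⟩
  have hg0 : g ≠ 0 := by
    rintro rfl
    simp at hlt'
  exact (Ideal.span_singleton_prime hg0).mp (hg ▸ p₁.isPrime)

/-! ### Integral closure of ideals -/

section IntegralClosure

variable {R : Type*} [CommRing R]

lemma le_intCl (B : Ideal R) : B ≤ intCl B := fun x hx => Ideal.subset_span
  ⟨1, one_pos, fun _ => -x, by simpa using hx, by simp⟩

lemma intCl_le_radical (B : Ideal R) : intCl B ≤ B.radical := by
  refine Ideal.span_le.mpr ?_
  rintro x ⟨n, hn, a, ha, h⟩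
  refine ⟨n, ?_⟩
  rw [eq_neg_of_add_eq_zero_left h]
  refine B.neg_mem (B.sum_mem fun i hi => B.mul_mem_right _ ?_)
  exact Ideal.pow_le_self (by have := Finset.mem_Icc.mp hi; omega) (ha i hi)

lemma radical_intCl (B : Ideal R) : (intCl B).radical = B.radical :=
  le_antisymm (Ideal.radical_le_radical_iff.mpr (intCl_le_radical B))
    (Ideal.radical_mono (le_intCl B))

/-- Over an integrally closed domain, dividing an equation of integral dependence over `g B` by
`g ^ n` shows that `x / g` is integral over `R`, so `g ∣ x`, and then that `x / g` is integral
over `B`. -/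
lemma mem_intClSet_span_mul [IsDomain R] [IsIntegrallyClosed R] {g : R} (hg : g ≠ 0)
    (B : Ideal R) (x : R) :
    x ∈ intClSet (Ideal.span {g} * B) ↔ ∃ y ∈ intClSet B, x = g * y := by
  have key : ∀ (y : R) (n : ℕ) (b : ℕ → R),
      (g * y) ^ n + ∑ i ∈ Finset.Icc 1 n, (g ^ i * b i) * (g * y) ^ (n - i) =
        g ^ n * (y ^ n + ∑ i ∈ Finset.Icc 1 n, b i * y ^ (n - i)) := by
    intro y n b
    rw [mul_add, mul_pow, Finset.mul_sum]
    congr 1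
    refine Finset.sum_congr rfl fun i hi => ?_
    obtain ⟨k, rfl⟩ := Nat.exists_eq_add_of_le (Finset.mem_Icc.mp hi).2
    rw [Nat.add_sub_cancel_left]
    ring
  constructor
  · rintro ⟨n, hn, a, ha, h⟩
    have hb : ∀ i, ∃ b, i ∈ Finset.Icc 1 n → b ∈ B ^ i ∧ a i = g ^ i * b := by
      intro i
      by_cases hi : i ∈ Finset.Icc 1 n
      · have := ha i hi
        rw [mul_pow, Ideal.span_singleton_pow, Ideal.mem_span_singleton_mul] at this
        obtain ⟨b, hb, he⟩ := this
        exact ⟨b, fun _ => ⟨hb, he.symm⟩⟩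
      · exact ⟨0, fun h => absurd h hi⟩
    choose b hb using hb
    obtain ⟨y, rfl⟩ : g ∣ x := by
      let K := FractionRing R
      have hg' : algebraMap R K g ≠ 0 := by simpa using hg
      obtain ⟨u, hu⟩ : ∃ u, algebraMap R K g * u = algebraMap R K x :=
        ⟨_, mul_div_cancel₀ _ hg'⟩
      have hint : IsIntegral R u := by
        open Polynomial in
        refine ⟨X ^ n + ∑ i ∈ Finset.Icc 1 n, C (b i) * X ^ (n - i), ?_, ?_⟩
        · refine monic_X_pow_add ?_
          refine (degree_sum_le _ _).trans_lt ?_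
          rw [Finset.sup_lt_iff (by exact WithBot.bot_lt_coe n)]
          intro i hi
          refine (degree_C_mul_X_pow_le _ _).trans_lt ?_
          have := Finset.mem_Icc.mp hi
          exact_mod_cast (by omega : n - i < n)
        · simp only [eval₂_add, eval₂_finsetSum, eval₂_mul, eval₂_pow, eval₂_X, eval₂_C]
          refine (mul_eq_zero.mp (?_ : algebraMap R K g ^ n * _ = 0)).resolve_left
            (pow_ne_zero n hg')
          rw [← map_zero (algebraMap R K), ← h, map_add, map_sum, mul_add, ← mul_pow, hu,
            map_pow, Finset.mul_sum]
          congr 1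
          refine Finset.sum_congr rfl fun i hi => ?_
          rw [(hb i hi).2]
          obtain ⟨k, rfl⟩ := Nat.exists_eq_add_of_le (Finset.mem_Icc.mp hi).2
          rw [Nat.add_sub_cancel_left, map_mul, map_mul, map_pow, map_pow, ← hu]
          ring
      obtain ⟨y, rfl⟩ := IsIntegrallyClosed.isIntegral_iff.mp hint
      exact ⟨y, IsFractionRing.injective R K (by rw [map_mul, hu])⟩
    refine ⟨y, ⟨n, hn, b, fun i hi => (hb i hi).1, ?_⟩, rfl⟩
    refine (mul_eq_zero.mp ((key y n b).symm.trans ?_)).resolve_left (pow_ne_zero n hg)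
    rw [← h]
    congr 1
    exact Finset.sum_congr rfl fun i hi => by rw [(hb i hi).2]
  · rintro ⟨y, ⟨n, hn, b, hb, h⟩, rfl⟩
    refine ⟨n, hn, fun i => g ^ i * b i, fun i hi => ?_, by rw [key, h, mul_zero]⟩
    rw [mul_pow, Ideal.span_singleton_pow]
    exact Ideal.mul_mem_mul (Ideal.mem_span_singleton_self _) (hb i hi)

lemma intCl_span_mul [IsDomain R] [IsIntegrallyClosed R] {g : R} (hg : g ≠ 0) (B : Ideal R) :
    intCl (Ideal.span {g} * B) = Ideal.span {g} * intCl B := by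
  rw [intCl, intCl, Ideal.span_mul_span']
  congr 1
  ext x
  rw [mem_intClSet_span_mul hg, Set.singleton_mul]
  simp [eq_comm]

end IntegralClosure

/-! ### Associated primes in Noetherian factorial domains -/

section AssociatedPrimes

variable {R : Type*} [CommRing R]

/-- Over a Noetherian ring the radical in the definition of associated primes can be dropped:
`P` is associated to `R / A` iff it is a prime of the form `A : a`. -/
lemma mem_associatedPrimes_quotient_iff [IsNoetherianRing R] {A P : Ideal R} :
    P ∈ associatedPrimes R (R ⧸ A) ↔ P.IsPrime ∧ ∃ a, ∀ r, r ∈ P ↔ a * r ∈ A := by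
  rw [AssociatedPrimes.mem_iff, isAssociatedPrime_iff]
  refine and_congr_right fun _ => ?_
  rw [Ideal.Quotient.mk_surjective.exists]
  refine exists_congr fun a => ?_
  rw [SetLike.ext_iff]
  refine forall_congr' fun r => ?_
  rw [Submodule.mem_colon_singleton, Submodule.mem_bot, ← Ideal.Quotient.mk_eq_mk,
    ← Submodule.Quotient.mk_smul, Submodule.Quotient.mk_eq_zero, smul_eq_mul, mul_comm]

lemma minimalPrimes_subset_associatedPrimes_quotient [IsNoetherianRing R] (A : Ideal R) :
    A.minimalPrimes ⊆ associatedPrimes R (R ⧸ A) := by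
  have := Module.associatedPrimes.minimalPrimes_annihilator_subset_associatedPrimes R (R ⧸ A)
  rwa [Ideal.annihilator_quotient] at this

/-- Splits off the divisorial part of `I`. Among all `J` with `I = f J` for some `f`, a maximal one is
in no `(p)` with `p` prime: otherwise `J = p J'` with `J ⊆ J'`, so `J' = J` by maximality and
`J = 0` by Nakayama. -/
lemma exists_eq_span_mul [IsNoetherianRing R] [IsLocalRing R] {I : Ideal R} (hI : I ≠ ⊥) :
    ∃ (f : R) (J : Ideal R), f ≠ 0 ∧ I = Ideal.span {f} * J ∧
      ∀ p, Prime p → ¬ J ≤ Ideal.span {p} := by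
  obtain ⟨J, ⟨f, hf⟩, hmax⟩ := set_has_maximal_iff_noetherian.mpr inferInstance
    {J : Ideal R | ∃ f, I = Ideal.span {f} * J} ⟨I, 1, by simp⟩
  have hf0 : f ≠ 0 := by
    rintro rfl
    simp [hI] at hf
  refine ⟨f, J, hf0, hf, fun p hp hJ => ?_⟩
  set J' : Ideal R := Submodule.colon J {p}
  have hJJ' : J = Ideal.span {p} * J' := by
    ext x
    simp only [Ideal.mem_span_singleton_mul, J', Submodule.mem_colon_singleton, smul_eq_mul]
    refine ⟨fun hx => ?_, ?_⟩
    · obtain ⟨z, rfl⟩ := Ideal.mem_span_singleton.mp (hJ hx)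
      exact ⟨z, by rwa [mul_comm], rfl⟩
    · rintro ⟨z, hz, rfl⟩
      rwa [mul_comm]
  have hle : J ≤ J' := hJJ'.le.trans Ideal.mul_le_right
  have hJ'eq : J' = J := by
    by_contra hne
    exact hmax J' ⟨f * p, by rw [hf, hJJ', ← mul_assoc, Ideal.span_singleton_mul_span_singleton]⟩
      (lt_of_le_of_ne hle (Ne.symm hne))
  have hpm : p ∈ maximalIdeal R := (mem_maximalIdeal p).mpr hp.not_isUnit
  refine hI ?_
  rw [hf, eq_bot_of_le_span_mul hpm (q := J) fun a ha => ?_, Ideal.mul_bot]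
  rw [hJJ', hJ'eq] at ha
  obtain ⟨b, hb, rfl⟩ := Ideal.mem_span_singleton_mul.mp ha
  exact ⟨b, hb, rfl⟩

variable [IsDomain R] [UniqueFactorizationMonoid R]

/-- In a UFD, `(g) : a = (g / gcd(g, a))`, so associated primes of principal ideals are principal. -/
lemma eq_span_of_mem_associatedPrimes_span [IsNoetherianRing R] {g : R} (hg : g ≠ 0) {P : Ideal R}
    (hP : P ∈ associatedPrimes R (R ⧸ Ideal.span {g})) : ∃ h, P = Ideal.span {h} := by
  obtain ⟨-, a, ha⟩ := mem_associatedPrimes_quotient_iff.mp hP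
  obtain ⟨g', a', c, hrel, rfl, rfl⟩ := UniqueFactorizationMonoid.exists_reduced_factors g hg a
  refine ⟨g', Ideal.ext fun r => ?_⟩
  have hc : c ≠ 0 := left_ne_zero_of_mul hg
  rw [ha, Ideal.mem_span_singleton, Ideal.mem_span_singleton, mul_assoc,
    mul_dvd_mul_iff_left hc]
  exact ⟨fun h => hrel.dvd_of_dvd_mul_left h, fun h => h.mul_left _⟩

/-- In a UFD a principal prime is minimal over every nonzero ideal it contains, since every
nonzero prime contains a prime element. -/
lemma span_mem_minimalPrimes {I P : Ideal R} (hI : I ≠ ⊥) (hP : P.IsPrime) {h : R}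
    (hPh : P = Ideal.span {h}) (hIP : I ≤ P) : P ∈ I.minimalPrimes := by
  refine ⟨⟨hP, hIP⟩, fun Q ⟨hQ, hIQ⟩ hQP => ?_⟩
  obtain ⟨q, hqQ, hq⟩ := hQ.exists_mem_prime_of_ne_bot (ne_bot_of_le_ne_bot hI hIQ)
  subst hPh
  have hh : h ≠ 0 := by
    rintro rfl
    exact hI (le_bot_iff.mp (hIP.trans (by simp)))
  have hass := ((Ideal.span_singleton_prime hh).mp hP).associated_of_dvd hq
    (Ideal.mem_span_singleton.mp (hQP hqQ))
  rw [Ideal.span_singleton_le_iff_mem]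
  exact Q.mem_of_dvd hass.symm.dvd hqQ

end AssociatedPrimes

/-! ### Associated primes of integral closures of powers -/

/-- The associated primes of `R` modulo the integral closure of `I ^ k`, described independently of
`k`, where `I = f J` and `J` lies in no principal prime. -/
lemma associatedPrimes_intCl_pow {R : Type*} [CommRing R] [IsLocalRing R] [IsNoetherianRing R]
    [IsDomain R] [UniqueFactorizationMonoid R]
    (hprin : ∀ P : Ideal R, P.IsPrime → P ≠ maximalIdeal R → ∃ g, P = Ideal.span {g})
    {I J : Ideal R} {f : R} (hI : I ≠ ⊥) (hf : f ≠ 0) (hfJ : I = Ideal.span {f} * J)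
    (hJ : ∀ p, Prime p → ¬ J ≤ Ideal.span {p}) {k : ℕ} (hk : k ≠ 0) :
    associatedPrimes R (R ⧸ intCl (I ^ k)) =
      I.minimalPrimes ∪ {P | P = maximalIdeal R ∧ J ≠ ⊤} := by
  have hJ0 : J ≠ ⊥ := by
    rintro rfl
    simp [hfJ] at hI
  have hrad : (intCl (I ^ k)).radical = I.radical := by
    rw [radical_intCl, Ideal.radical_pow I hk]
  have hfk : f ^ k ≠ 0 := pow_ne_zero k hf
  have hIk : intCl (I ^ k) = Ideal.span {f ^ k} * intCl (J ^ k) := by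
    rw [hfJ, mul_pow, Ideal.span_singleton_pow, intCl_span_mul hfk]
  apply Set.Subset.antisymm
  · intro P hP
    have hPp : P.IsPrime := (mem_associatedPrimes_quotient_iff.mp hP).1
    have hIP : I ≤ P := by
      obtain ⟨-, a, ha⟩ := mem_associatedPrimes_quotient_iff.mp hP
      have h1 : intCl (I ^ k) ≤ P := fun r hr => (ha r).mpr (Ideal.mul_mem_left _ _ hr)
      exact Ideal.le_radical.trans (hrad.ge.trans (hPp.radical_le_iff.mpr h1))
    -- The case split is on `P` being principal, not on `P = m`: in dimension one `m` is principal.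
    by_cases hPm : ∃ h, P = Ideal.span {h}
    · obtain ⟨h, hh⟩ := hPm
      exact Or.inl (span_mem_minimalPrimes hI hPp hh hIP)
    refine Or.inr ⟨by_contra fun h => hPm (hprin P hPp h), ?_⟩
    rintro rfl
    refine hPm (eq_span_of_mem_associatedPrimes_span hfk (?_ : P ∈ _))
    rwa [hIk, Ideal.top_pow, top_unique (le_intCl ⊤), Ideal.mul_top] at hP
  · rintro P (hP | ⟨rfl, hJt⟩)
    · apply minimalPrimes_subset_associatedPrimes_quotient
      rwa [← Ideal.radical_minimalPrimes, hrad, Ideal.radical_minimalPrimes]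
    · have hradJ : (intCl (J ^ k)).radical = J.radical := by
        rw [radical_intCl, Ideal.radical_pow J hk]
      have hK : intCl (J ^ k) ≠ ⊤ := by
        rw [Ne, ← Ideal.radical_eq_top, hradJ, Ideal.radical_eq_top]
        exact hJt
      have : Nontrivial (R ⧸ intCl (J ^ k)) := Ideal.Quotient.nontrivial_iff.mpr hK
      obtain ⟨Q, hQ⟩ := associatedPrimes.nonempty R (R ⧸ intCl (J ^ k))
      obtain ⟨hQp, a, ha⟩ := mem_associatedPrimes_quotient_iff.mp hQ
      have hJQ : J ≤ Q := by
        have h1 : intCl (J ^ k) ≤ Q := fun r hr => (ha r).mpr (Ideal.mul_mem_left _ _ hr)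
        exact Ideal.le_radical.trans (hradJ.ge.trans (hQp.radical_le_iff.mpr h1))
      have hQm : Q = maximalIdeal R := by
        by_contra hQm
        obtain ⟨q, rfl⟩ := hprin Q hQp hQm
        have hq0 : q ≠ 0 := by
          rintro rfl
          exact hJ0 (le_bot_iff.mp (hJQ.trans (by simp)))
        exact hJ q ((Ideal.span_singleton_prime hq0).mp hQp) hJQ
      rw [← hQm, mem_associatedPrimes_quotient_iff]
      refine ⟨hQp, f ^ k * a, fun r => ?_⟩
      rw [ha, hIk, Ideal.mem_span_singleton_mul]
      constructor
      · exact fun h => ⟨_, h, (mul_assoc _ _ _).symm⟩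
      · rintro ⟨z, hz, he⟩
        rw [mul_assoc] at he
        rwa [← mul_left_cancel₀ hfk he]

theorem stmt2 {R : Type*} [CommRing R] [IsLocalRing R]
    (hreg : IsRegularLocal R)
    (hdim : ringKrullDim R ≤ 2)
    (I : Ideal R) (hne : I ≠ ⊥) (hproper : I ≠ ⊤) :
    (∀ k : ℕ, 1 ≤ k →
      associatedPrimes R (R ⧸ intCl (I ^ k)) = associatedPrimes R (R ⧸ intCl I)) ∧
    astabBar I = 1 := by
  have hm : maximalIdeal R ≠ ⊥ := ne_bot_of_le_ne_bot hne (le_maximalIdeal hproper)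
  obtain ⟨hN, hD, ⟨g, hgm, hg⟩, hprin⟩ := hreg.structure_of_dim_le_two hdim hm
  have hufd : UniqueFactorizationMonoid R := by
    rw [UniqueFactorizationMonoid.iff_exists_prime_mem_of_isPrime]
    intro P hP0 hP
    by_cases hPm : P = maximalIdeal R
    · exact ⟨g, hPm ▸ hgm, hg⟩
    · obtain ⟨h, rfl⟩ := hprin P hP hPm
      have hh : h ≠ 0 := by simpa using hP0
      exact ⟨h, Ideal.mem_span_singleton_self h, (Ideal.span_singleton_prime hh).mp hP⟩
  obtain ⟨f, J, hf, hfJ, hJ⟩ := exists_eq_span_mul hne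
  have main : ∀ k : ℕ, 1 ≤ k →
      associatedPrimes R (R ⧸ intCl (I ^ k)) = associatedPrimes R (R ⧸ intCl I) := by
    intro k hk
    rw [associatedPrimes_intCl_pow hprin hne hf hfJ hJ (by omega)]
    conv_rhs => rw [← pow_one I]
    rw [associatedPrimes_intCl_pow hprin hne hf hfJ hJ one_ne_zero]
  refine ⟨main, ?_⟩
  have h1 : 1 ∈ {n₀ : ℕ | 0 < n₀ ∧ ∀ n, n₀ ≤ n →
      associatedPrimes R (R ⧸ intCl (I ^ n)) = associatedPrimes R (R ⧸ intCl (I ^ n₀))} :=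
    ⟨one_pos, fun n hn => by rw [main n hn, main 1 le_rfl]⟩
  exact le_antisymm (Nat.sInf_le h1) (Nat.sInf_mem ⟨1, h1⟩).1
end

section
/- Let (R,m) be a regular local ring with dim R ≤ 3 and let I be a nonzero proper ideal of R. Then astab(I) = dstab(I), i.e., the index of stability of the sets of associated primes Ass(R/I^n) equals the index of stability of the depth function n ↦ depth(R/I^n). -/
/-!
For a regular local ring `(R, m)` of dimension at most three and a nonzero proper ideal `I`, the
sets `Ass(R/Iⁿ)` and `Ass(R/Iᵏ)` coincide if and only if `R/Iⁿ` and `R/Iᵏ` have the same depth,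
for all positive `n` and `k`. The two stability indices are then infima of the same set.

The key is a factorization `I = d J` in which `J` has grade at least two, expressed elementwise:
if `s ∣ t j` for all `j ∈ J`, then `s ∣ t`. Unique factorization in `R` would give it, but only a
special case is needed: the dual `Hom(I, R)` is cyclic. As a dual it has depth at least two, so,
`R` having dimension at most three, the kernel of a surjection from a finite free module onto it
has maximal depth, hence is free (`isWeaklyRegular_dual`, `exists_resolution`). The Hilbert–Burch
construction turns the resolution `0 → Rⁿ → Rⁿ⁺¹ → Hom(I, R) → 0` into a linear form on
`Hom(I, R)`, given by maximal minors, whose image has grade at least two (`exists_form`). It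
follows that `Hom(I, R)` is generated by one form `φ`, and `J = φ(I)` works
(`exists_factorization`).

Powers of `J` again have grade at least two, so `Ass(R/Iⁿ) = Ass(R/d) ∪ Ass(R/Jⁿ)`
(`associatedPrimes_span_mul`). A prime containing `J` has height at least two, so in dimension at
most three the nonmaximal primes in `Ass(R/Jⁿ)` are minimal over `J`; hence the sets `Ass(R/Iⁿ)`
can differ only in whether they contain `m` (`mem_associatedPrimes_span_mul_pow_iff`). If `J` is
proper, the depth of `R/Iⁿ` is `0` when `m` is associated and `1` otherwise, since an associated
prime minimal over `J` has coheight at most one (`depthIn_eq_zero`, `depthIn_eq_one`). If `J = R`,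
then `I` is principal and both the associated primes and the depth are constant
(`associatedPrimes_span_pow`, `depthIn_span_pow`).
-/

open IsLocalRing

universe u v w z

/-! ### Regular local rings are domains -/

theorem map_mk_maximalIdeal {R : Type*} [CommRing R] [IsLocalRing R] {x : R}
    [IsLocalRing (R ⧸ Ideal.span {x})] :
    (maximalIdeal R).map (Ideal.Quotient.mk (Ideal.span {x})) =
      maximalIdeal (R ⧸ Ideal.span {x}) :=
  IsLocalRing.map_maximalIdeal_of_surjective _ Ideal.Quotient.mk_surjective

theorem isLocalRing_quotient_span_singleton {R : Type*} [CommRing R] [IsLocalRing R] {x : R}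
    (hx : x ∈ maximalIdeal R) : IsLocalRing (R ⧸ Ideal.span {x}) := by
  have : Nontrivial (R ⧸ Ideal.span {x}) := by
    rw [Ideal.Quotient.nontrivial_iff, Ne, Ideal.span_singleton_eq_top]
    exact hx
  exact IsLocalRing.of_surjective' _ Ideal.Quotient.mk_surjective

theorem ringKrullDim_le_card {R : Type*} [CommRing R] [IsLocalRing R] [IsNoetherianRing R]
    (s : Finset R) (hs : Ideal.span (s : Set R) = maximalIdeal R) :
    ringKrullDim R ≤ s.card := by
  refine (ringKrullDim_le_spanFinrank_maximalIdeal R).trans ?_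
  rw [← hs]
  have := Submodule.spanFinrank_span_le_ncard_of_finite (R := R) s.finite_toSet
  rw [Set.ncard_coe_finset] at this
  exact_mod_cast this

/-- A regular local ring is a domain, by induction on the dimension: prime avoidance yields a
generator `x` of `m` outside all minimal primes, `R/x` is a domain by induction, so a minimal
prime contained in `(x)` is `x` times itself and vanishes by Nakayama. -/
theorem isDomain_of_regular : ∀ (d : ℕ) (R : Type u) [CommRing R] [IsLocalRing R]
    [IsNoetherianRing R] (s : Finset R), Ideal.span (s : Set R) = maximalIdeal R →
    s.card ≤ d → (d : WithBot ℕ∞) ≤ ringKrullDim R → IsDomain R := by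
  classical
  intro d
  induction d with
  | zero =>
    intro R _ _ _ s hs hc _
    have : s = ∅ := by simpa using hc
    subst this
    have hm : maximalIdeal R = ⊥ := by rw [← hs]; simp
    exact (IsLocalRing.isField_iff_maximalIdeal_eq.mpr hm).isDomain
  | succ d ih =>
    intro R _ _ _ s hs hc hd
    have hdim0 : ¬ (ringKrullDim R ≤ 0) := fun h => by
      have := hd.trans h
      norm_cast at this
    have hm2 : ¬ maximalIdeal R ≤ maximalIdeal R ^ 2 := fun h => by
      have hbot : maximalIdeal R = ⊥ :=
        Submodule.eq_bot_of_le_smul_of_le_jacobson_bot (maximalIdeal R) (maximalIdeal R)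
          (IsNoetherian.noetherian _) (by rwa [smul_eq_mul, ← pow_two])
          (IsLocalRing.maximalIdeal_le_jacobson _)
      apply hdim0
      simpa using ringKrullDim_le_card (R := R) ∅ (by simp [hbot])
    have hmin : ∀ p ∈ minimalPrimes R, ¬ maximalIdeal R ≤ p := fun p hp h => by
      have := hp.1.1
      apply hdim0
      have : Ring.KrullDimLE 0 R := by
        rw [Ring.krullDimLE_zero_iff]
        intro q hq
        have h1 : q ≤ p := (le_maximalIdeal hq.ne_top).trans h
        have h2 := hp.2 ⟨hq, bot_le⟩ h1
        have : q = maximalIdeal R := le_antisymm (le_maximalIdeal hq.ne_top) (h.trans h2)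
        rw [this]; infer_instance
      exact (Ring.krullDimLE_iff).mp this
    -- prime avoidance gives an element of `m` outside `m²` and outside every minimal prime
    obtain ⟨x, hxm, hx⟩ : ∃ x ∈ maximalIdeal R, x ∉ maximalIdeal R ^ 2 ∧
        ∀ p ∈ minimalPrimes R, x ∉ p := by
      by_contra! hcon
      have hfin : (insert (maximalIdeal R ^ 2) (minimalPrimes R)).Finite :=
        (minimalPrimes.finite_of_isNoetherianRing R).insert _
      have := (Ideal.subset_union_prime_finite hfin (f := id) (maximalIdeal R ^ 2)
        (maximalIdeal R ^ 2) (I := maximalIdeal R) (by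
          rintro i (rfl | hi) h1 _
          · exact absurd rfl h1
          · exact hi.1.1)).mp (by
          intro x hx
          by_cases h2 : x ∈ maximalIdeal R ^ 2
          · exact Set.mem_biUnion (Set.mem_insert _ _) h2
          · obtain ⟨p, hp, hxp⟩ := hcon x hx h2
            exact Set.mem_biUnion (Set.mem_insert_of_mem _ hp) hxp)
      obtain ⟨p, (rfl | hp), h⟩ := this
      · exact hm2 h
      · exact hmin p hp h
    have := isLocalRing_quotient_span_singleton hxm
    -- since `x ∉ m²`, it can replace one of the generators
    obtain ⟨y, hys, hy⟩ : ∃ y ∈ s, y ∈ Ideal.span (insert x ((s.erase y : Finset R) : Set R)) := by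
      have hxs : x ∈ Ideal.span (s : Set R) := by rwa [hs]
      obtain ⟨f, -, hf⟩ := Submodule.mem_span_finset.mp hxs
      obtain ⟨y, hys, hfy⟩ : ∃ y ∈ s, f y ∉ maximalIdeal R := by
        by_contra! hcon
        apply hx.1
        rw [← hf, pow_two]
        refine Ideal.sum_mem _ fun y hy => Ideal.mul_mem_mul (hcon y hy) ?_
        rw [← hs]; exact Ideal.subset_span hy
      refine ⟨y, hys, ?_⟩
      have hu : IsUnit (f y) := by simpa using hfy
      rw [← Ideal.unit_mul_mem_iff_mem _ hu]
      have : f y * y = x - ∑ a ∈ s.erase y, f a • a := by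
        rw [← hf, ← Finset.add_sum_erase _ _ hys]; simp
      rw [this]
      refine Ideal.sub_mem _ (Ideal.subset_span (Set.mem_insert _ _)) (Ideal.sum_mem _ fun a ha =>
        Ideal.mul_mem_left _ _ (Ideal.subset_span (Set.mem_insert_of_mem _ ha)))
    let mk := Ideal.Quotient.mk (Ideal.span {x})
    have hs' : Ideal.span (((s.erase y).image mk : Finset _) : Set (R ⧸ Ideal.span {x})) =
        maximalIdeal (R ⧸ Ideal.span {x}) := by
      rw [← map_mk_maximalIdeal, ← hs, Finset.coe_image, ← Ideal.map_span]
      apply le_antisymm (Ideal.map_mono (Ideal.span_mono (by simp)))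
      rw [Ideal.map_le_iff_le_comap, Ideal.span_le]
      have key : Ideal.span (insert x ((s.erase y : Finset R) : Set R)) ≤
          Ideal.comap mk (Ideal.map mk (Ideal.span ((s.erase y : Finset R) : Set R))) := by
        rw [Ideal.span_le]
        rintro z (rfl | hz)
        · have : mk z = 0 := Ideal.Quotient.eq_zero_iff_mem.mpr (Ideal.mem_span_singleton_self z)
          simp [this]
        · exact Ideal.mem_map_of_mem _ (Ideal.subset_span hz)
      intro z hz
      by_cases hzy : z = y
      · subst hzy; exact key hy
      · exact Ideal.mem_map_of_mem _ (Ideal.subset_span (by simp [hzy]; exact hz))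
    have hdom : IsDomain (R ⧸ Ideal.span {x}) := by
      refine ih _ _ hs' ?_ ?_
      · refine Finset.card_image_le.trans ?_
        rw [Finset.card_erase_of_mem hys]; omega
      · have h1 := ringKrullDim_le_ringKrullDim_quotSMulTop_succ hxm
        rw [← Submodule.ideal_span_singleton_smul, smul_eq_mul, Ideal.mul_top] at h1
        have h2 := hd.trans h1
        push_cast at h2
        exact ENat.WithBot.add_le_add_one_right_iff.mp h2
    have hprime : (Ideal.span {x}).IsPrime := (Ideal.Quotient.isDomain_iff_prime _).mp hdom
    obtain ⟨q, hq, hqx⟩ := Ideal.exists_minimalPrimes_le (bot_le : ⊥ ≤ Ideal.span {x})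
    have hxq : x ∉ q := hx.2 q hq
    have := hq.1.1
    have hq0 : q = ⊥ := by
      refine Submodule.eq_bot_of_le_smul_of_le_jacobson_bot (Ideal.span {x}) q
          (IsNoetherian.noetherian _) ?_ ?_
      · intro z hz
        obtain ⟨w, rfl⟩ := Ideal.mem_span_singleton'.mp (hqx hz)
        have hw := (this.mem_or_mem hz).resolve_right hxq
        rw [mul_comm]
        exact Ideal.mul_mem_mul (Ideal.mem_span_singleton_self x) hw
      · refine le_trans ?_ (IsLocalRing.maximalIdeal_le_jacobson _)
        rw [Ideal.span_le]; simpa using hxm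
    rw [hq0] at this
    exact IsDomain.of_bot_isPrime R

open RingTheory.Sequence

/-! ### Regular systems of parameters and free modules -/

theorem ofList_map_mk_eq_maximalIdeal {R : Type*} [CommRing R] [IsLocalRing R] {x : R}
    {rs : List R} (h : Ideal.ofList (x :: rs) = maximalIdeal R)
    [IsLocalRing (R ⧸ Ideal.span {x})] :
    Ideal.ofList (rs.map (Ideal.Quotient.mk (Ideal.span {x}))) =
      maximalIdeal (R ⧸ Ideal.span {x}) := by
  rw [← map_mk_maximalIdeal, ← h, Ideal.ofList_cons, Ideal.map_sup, Ideal.map_quotient_self,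
    bot_sup_eq, Ideal.map_ofList]

theorem isDomain_of_ofList {R : Type u} [CommRing R] [IsLocalRing R]
    [IsNoetherianRing R] (rs : List R) (h : Ideal.ofList rs = maximalIdeal R)
    (hd : (rs.length : WithBot ℕ∞) ≤ ringKrullDim R) : IsDomain R := by
  classical
  refine isDomain_of_regular rs.length R rs.toFinset ?_ rs.toFinset_card_le hd
  rw [← h, Ideal.ofList]; congr 1; ext; simp

/-- A generating set of the maximal ideal with `dim R` elements is a regular sequence. -/
theorem isWeaklyRegular_of_regular : ∀ (n : ℕ) (R : Type u) [CommRing R] [IsLocalRing R]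
    [IsNoetherianRing R] (rs : List R), rs.length = n → Ideal.ofList rs = maximalIdeal R →
    (rs.length : WithBot ℕ∞) ≤ ringKrullDim R → IsWeaklyRegular R rs := by
  classical
  intro n
  induction n with
  | zero =>
    intro R _ _ _ rs hl _ _
    rw [List.length_eq_zero_iff] at hl
    subst hl
    exact .nil R R
  | succ n ih =>
    intro R _ _ _ rs hl h hd
    obtain ⟨x, rs, rfl⟩ := List.exists_cons_of_length_eq_add_one hl
    have hl' : rs.length = n := by simpa using hl
    have := isDomain_of_ofList _ h hd
    have hxm : x ∈ maximalIdeal R := by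
      rw [← h]; exact Ideal.subset_span (by simp)
    have hx0 : x ≠ 0 := by
      rintro rfl
      have h2 := ringKrullDim_le_card rs.toFinset (by
        rw [← h, Ideal.ofList_cons]; simp [Ideal.ofList])
      have h3 := hd.trans h2
      have h4 := rs.toFinset_card_le
      norm_cast at h3
      simp at h3
      omega
    have hreg : IsSMulRegular R x := isSMulRegular_iff_right_eq_zero_of_smul.mpr
      (fun y hy => (mul_eq_zero.mp hy).resolve_left hx0)
    have := isLocalRing_quotient_span_singleton hxm
    have hdim := ringKrullDim_quotient_span_singleton_succ_eq_ringKrullDim hreg hxm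
    have key := ih _ _ (by simpa using hl') (ofList_map_mk_eq_maximalIdeal h) (by
      rw [← hdim] at hd
      simp only [List.length_cons, Nat.cast_add, Nat.cast_one] at hd
      simpa using ENat.WithBot.add_le_add_one_right_iff.mp hd)
    refine .cons hreg ?_
    have key' := (isWeaklyRegular_map_algebraMap_iff (R ⧸ Ideal.span {x}) _ rs).mp key
    refine (LinearEquiv.isWeaklyRegular_congr (Submodule.quotEquivOfEq _ _ ?_) rs).mp key'
    rw [← Submodule.ideal_span_singleton_smul, smul_eq_mul, Ideal.mul_top]

/-- Over a local ring whose maximal ideal is generated by `rs`, a finite module on which `rs` is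
weakly regular is free. -/
theorem free_of_isWeaklyRegular : ∀ (n : ℕ) (R : Type u) [CommRing R] [IsLocalRing R]
    [IsNoetherianRing R] (rs : List R), rs.length = n → Ideal.ofList rs = maximalIdeal R →
    ∀ (M : Type v) [AddCommGroup M] [Module R M] [Module.Finite R M],
    IsWeaklyRegular M rs → Module.Free R M := by
  intro n
  induction n with
  | zero =>
    intro R _ _ _ rs hl h M _ _ _ _
    rw [List.length_eq_zero_iff] at hl
    subst hl
    have hm : maximalIdeal R = ⊥ := by rw [← h]; simp
    let := (IsLocalRing.isField_iff_maximalIdeal_eq.mpr hm).toField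
    exact Module.Free.of_divisionRing R M
  | succ n ih =>
    intro R _ _ _ rs hl h M _ _ _ hM
    obtain ⟨x, rs, rfl⟩ := List.exists_cons_of_length_eq_add_one hl
    have hl' : rs.length = n := by simpa using hl
    have hxm : x ∈ maximalIdeal R := by
      rw [← h]; exact Ideal.subset_span (by simp)
    have := isLocalRing_quotient_span_singleton hxm
    obtain ⟨h1, h2⟩ := (isWeaklyRegular_cons_iff' M x rs).mp hM
    have : Module.Finite (R ⧸ Ideal.span {x}) (QuotSMulTop x M) :=
      Module.Finite.of_restrictScalars_finite R _ _
    have key := ih (R ⧸ Ideal.span {x}) _ (by simpa using hl') (ofList_map_mk_eq_maximalIdeal h)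
      (QuotSMulTop x M) h2
    have : Module.FinitePresentation R M := Module.finitePresentation_of_finite R M
    exact (Module.free_quotSMulTop_iff_free R M
      (IsLocalRing.maximalIdeal_le_jacobson _ hxm) h1).mp key

/-- Depth of a kernel: in a short exact sequence `0 → A → B → C → 0`, a sequence which is weakly
regular on `B` and all of whose terms, except possibly the last, form a weakly regular sequence
on `C`, is weakly regular on `A`. -/
theorem isWeaklyRegular_of_exact {R : Type u} [CommRing R] (rs : List R) :
    ∀ (k : ℕ), rs.length ≤ k + 1 → ∀ (A : Type v) (B : Type w) (C : Type z) [AddCommGroup A]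
    [AddCommGroup B] [AddCommGroup C] [Module R A] [Module R B] [Module R C]
    (f : A →ₗ[R] B) (g : B →ₗ[R] C), Function.Injective f → Function.Exact f g →
    Function.Surjective g → IsWeaklyRegular B rs → IsWeaklyRegular C (rs.take k) →
    IsWeaklyRegular A rs := by
  induction rs with
  | nil => intros; exact .nil _ _
  | cons x rs ih =>
    intro k hk A B C _ _ _ _ _ _ f g hf hfg hg hB hC
    obtain ⟨h1, h2⟩ := (isWeaklyRegular_cons_iff B x rs).mp hB
    refine .cons (h1.of_injective f hf) ?_
    cases k with
    | zero =>
      have : rs = [] := by simpa using hk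
      subst this; exact .nil _ _
    | succ k =>
      rw [List.take_succ_cons] at hC
      obtain ⟨h3, h4⟩ := (isWeaklyRegular_cons_iff C x _).mp hC
      refine ih k (by simpa using hk) _ _ _ (QuotSMulTop.map x f) (QuotSMulTop.map x g) ?_
        (QuotSMulTop.map_exact x hfg hg) (QuotSMulTop.map_surjective x hg) h2 h4
      have h0 : Function.Exact (0 : PUnit.{1} →ₗ[R] A) f := by
        rw [LinearMap.exact_iff, LinearMap.range_zero, LinearMap.ker_eq_bot]; exact hf
      have := QuotSMulTop.map_first_exact_on_four_term_exact_of_isSMulRegular_last h0 hfg h3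
      rw [map_zero, LinearMap.exact_iff, LinearMap.range_zero] at this
      exact LinearMap.ker_eq_bot.mp this

/-! ### The dual of an ideal -/

theorem isWeaklyRegular_of_flat {R : Type u} [CommRing R] {rs : List R}
    (h : IsWeaklyRegular R rs) (M : Type v) [AddCommGroup M] [Module R M] [Module.Flat R M] :
    IsWeaklyRegular M rs :=
  (LinearEquiv.isWeaklyRegular_congr (TensorProduct.rid R M) rs).mp
    (h.isWeaklyRegular_lTensor (M₂ := M))

theorem isWeaklyRegular_take {R : Type u} [CommRing R] {rs : List R} {M : Type v}
    [AddCommGroup M] [Module R M] (h : IsWeaklyRegular M rs) (k : ℕ) :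
    IsWeaklyRegular M (rs.take k) := by
  rw [← List.take_append_drop k rs, isWeaklyRegular_append_iff] at h
  exact h.1

/-- The dual of a finite module `M` has depth at least two: for a presentation
`π : Rᵐ → M`, the quotient of `Hom(Rᵐ, R)` by `Hom(M, R)` embeds into the torsion-free module
`Hom(ker π, R)`. -/
theorem isWeaklyRegular_dual {R : Type u} [CommRing R] [IsDomain R] {rs : List R}
    (h : IsWeaklyRegular R rs) (M : Type v) [AddCommGroup M] [Module R M] [Module.Finite R M] :
    IsWeaklyRegular (M →ₗ[R] R) (rs.take 2) := by
  obtain ⟨m, π, hπ⟩ := Module.Finite.exists_fin' R M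
  let f : (M →ₗ[R] R) →ₗ[R] ((Fin m → R) →ₗ[R] R) := LinearMap.lcomp R R π
  let g : ((Fin m → R) →ₗ[R] R) →ₗ[R] (LinearMap.ker π →ₗ[R] R) :=
    LinearMap.lcomp R R (LinearMap.ker π).subtype
  have hf : Function.Injective f := fun a b hab => by
    ext x
    obtain ⟨y, rfl⟩ := hπ x
    exact LinearMap.congr_fun hab y
  have hfg : Function.Exact f g.rangeRestrict := by
    intro a
    constructor
    · intro ha
      have ha' : g a = 0 := congrArg Subtype.val ha
      have hker : LinearMap.ker π ≤ LinearMap.ker a := fun x hx => by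
        exact LinearMap.congr_fun ha' ⟨x, hx⟩
      refine ⟨(LinearMap.ker π).liftQ a hker ∘ₗ (π.quotKerEquivOfSurjective hπ).symm, ?_⟩
      ext x
      simp only [f, LinearMap.lcomp_apply, LinearMap.comp_apply]
      simp
    · rintro ⟨b, rfl⟩
      apply Subtype.ext
      ext x
      simp [f, g]
  refine isWeaklyRegular_of_exact _ 1 (by simp) _ _ (LinearMap.range g) f g.rangeRestrict hf hfg
    g.surjective_rangeRestrict (isWeaklyRegular_of_flat (isWeaklyRegular_take h 2) _) ?_
  cases rs with
  | nil => exact .nil _ _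
  | cons x rs =>
    have hx := ((isWeaklyRegular_cons_iff R x rs).mp h).1
    simp only [List.take_succ_cons, List.take_zero]
    rw [isWeaklyRegular_singleton_iff]
    refine IsSMulRegular.submodule _ _ ?_
    intro a b hab
    ext y
    exact hx (LinearMap.congr_fun hab y)

theorem dual_smul_swap {R : Type u} [CommRing R] {I : Ideal R} (ψ : I →ₗ[R] R) (i j : I) :
    (i : R) * ψ j = (j : R) * ψ i := by
  rw [← smul_eq_mul, ← smul_eq_mul, ← map_smul, ← map_smul]
  congr 1
  exact Subtype.ext (mul_comm _ _)

/-- A length-one free resolution of the dual of a nonzero ideal, in dimension at most three. -/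
theorem exists_resolution {R : Type u} [CommRing R] [IsDomain R] [IsLocalRing R]
    [IsNoetherianRing R] {rs : List R} (hl : rs.length ≤ 3)
    (hm : Ideal.ofList rs = maximalIdeal R) (h : IsWeaklyRegular R rs) (I : Ideal R)
    (hI : I ≠ ⊥) :
    ∃ (n : ℕ) (f : (Fin (n + 1) → R) →ₗ[R] (I →ₗ[R] R)), Function.Surjective f ∧
      Nonempty (Module.Basis (Fin n) R (LinearMap.ker f)) := by
  obtain ⟨a, haI, ha⟩ := Submodule.exists_mem_ne_zero_of_ne_bot hI
  have hev : Function.Injective (LinearMap.applyₗ (⟨a, haI⟩ : I) : (I →ₗ[R] R) →ₗ[R] R) := by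
    rw [injective_iff_map_eq_zero]
    intro ψ hψ
    ext i
    have := dual_smul_swap ψ ⟨a, haI⟩ i
    have h2 : ψ ⟨a, haI⟩ = 0 := hψ
    rw [h2, mul_zero] at this
    exact (mul_eq_zero.mp this).resolve_left ha
  have : Module.Finite R (I →ₗ[R] R) := Module.Finite.of_injective _ hev
  have htf : Module.IsTorsionFree R (I →ₗ[R] R) := inferInstance
  have hnt : Nontrivial (I →ₗ[R] R) :=
    ⟨⟨I.subtype, 0, fun h0 => ha (by simpa using LinearMap.congr_fun h0 ⟨a, haI⟩)⟩⟩
  have hr1 : Module.finrank R (I →ₗ[R] R) = 1 := by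
    have h1 := LinearMap.finrank_le_finrank_of_injective hev
    have h2 := Module.finrank_pos (R := R) (M := I →ₗ[R] R)
    rw [Module.finrank_self] at h1
    omega
  obtain ⟨k, f, hf⟩ := Module.Finite.exists_fin' R (I →ₗ[R] R)
  have hK : IsWeaklyRegular (LinearMap.ker f) rs :=
    isWeaklyRegular_of_exact rs 2 hl _ _ _ (LinearMap.ker f).subtype f
      (Submodule.injective_subtype _) (LinearMap.exact_subtype_ker_map f) hf
      (isWeaklyRegular_of_flat h _) (isWeaklyRegular_dual h I)
  have hfree := free_of_isWeaklyRegular _ R rs rfl hm _ hK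
  have hrank : Module.finrank R (LinearMap.ker f) + 1 = k := by
    have h1 := Submodule.finrank_quotient_add_finrank (LinearMap.ker f)
    rw [(f.quotKerEquivOfSurjective hf).finrank_eq, hr1, Module.finrank_fin_fun] at h1
    omega
  obtain ⟨n, rfl⟩ : ∃ n, k = n + 1 := ⟨_, hrank.symm⟩
  exact ⟨n, f, hf, ⟨Module.finBasisOfFinrankEq R _ (by omega)⟩⟩

/-- Hilbert–Burch: if `N` is torsion-free with a resolution `0 → Rⁿ → Rⁿ⁺¹ → N → 0`, then the
maximal minors define a linear form on `N` whose image is an ideal of grade at least two.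
If an associated prime `Q` of `R/s` contained all of them, the basis of the kernel would become
dependent modulo `Q`; such a dependence lifts, using that `N` is torsion-free, to one over `R`
with a coefficient outside `Q`. -/
theorem exists_form {R : Type u} [CommRing R] [IsDomain R] [IsNoetherianRing R]
    {N : Type v} [AddCommGroup N] [Module R N] [Module.IsTorsionFree R N] {n : ℕ}
    (f : (Fin (n + 1) → R) →ₗ[R] N) (hf : Function.Surjective f)
    (b : Module.Basis (Fin n) R (LinearMap.ker f)) :
    ∃ δ : N →ₗ[R] R, ∀ s t : R, (∀ x, s ∣ t * δ x) → s ∣ t := by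
  classical
  let c : Fin n → (Fin (n + 1) → R) := fun i => (b i : Fin (n + 1) → R)
  have hc : LinearIndependent R c :=
    b.linearIndependent.map' (LinearMap.ker f).subtype (Submodule.ker_subtype _)
  have hspan : ∀ w, f w = 0 → ∃ g : Fin n → R, w = ∑ i, g i • c i := fun w hw => by
    refine ⟨fun i => b.repr ⟨w, hw⟩ i, ?_⟩
    have := congrArg Subtype.val (b.sum_repr ⟨w, hw⟩)
    rw [Submodule.coe_sum] at this
    exact this.symm
  -- expansion of the determinant along a free row placed above the basis of the kernel
  let D : (Fin (n + 1) → R) →ₗ[R] R :=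
    (Matrix.detRowAlternating (R := R) (n := Fin (n + 1))).toMultilinearMap.toLinearMap
      (Fin.cons 0 c) 0
  have hD : ∀ v, D v = Matrix.det (Matrix.of (Fin.cons v c : Fin (n + 1) → Fin (n + 1) → R)) := by
    intro v
    simp only [D, MultilinearMap.toLinearMap_apply, Fin.update_cons_zero]
    rfl
  have hker : LinearMap.ker f ≤ LinearMap.ker D := by
    intro w hw
    obtain ⟨g, rfl⟩ := hspan w hw
    refine Submodule.sum_mem _ fun i _ => Submodule.smul_mem _ _ ?_
    rw [LinearMap.mem_ker, hD]
    refine Matrix.det_zero_of_row_eq (Fin.succ_ne_zero i).symm ?_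
    ext j; simp
  let δ : N →ₗ[R] R :=
    (LinearMap.ker f).liftQ D hker ∘ₗ (f.quotKerEquivOfSurjective hf).symm
  have hδ : ∀ v, δ (f v) = D v := by
    intro v
    have : (f.quotKerEquivOfSurjective hf).symm (f v) = (LinearMap.ker f).mkQ v := by
      rw [LinearEquiv.symm_apply_eq]; rfl
    simp [δ, this]
  refine ⟨δ, fun s t hst => ?_⟩
  by_contra hs
  -- an associated prime `Q = (s : t')` of `R / s` containing the image of `δ`
  have hne : (Ideal.Quotient.mk (Ideal.span {s}) t) ≠ 0 := by
    rwa [Ne, Ideal.Quotient.eq_zero_iff_mem, Ideal.mem_span_singleton]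
  obtain ⟨Q, hQ, htQ⟩ := exists_le_isAssociatedPrime_of_isNoetherianRing R _ hne
  obtain ⟨hQp, y, hy⟩ := isAssociatedPrime_iff.mp hQ
  obtain ⟨t', rfl⟩ := Ideal.Quotient.mk_surjective y
  have hQt : ∀ r, r ∈ Q ↔ s ∣ r * t' := by
    intro r
    rw [hy, Submodule.mem_colon_singleton, Submodule.mem_bot, ← Ideal.mem_span_singleton,
      ← Ideal.Quotient.eq_zero_iff_mem, map_mul]
    rfl
  have hDQ : ∀ v, D v ∈ Q := by
    intro v
    apply htQ
    rw [Submodule.mem_colon_singleton, Submodule.mem_bot]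
    have := hst (f v)
    rw [hδ, mul_comm, ← Ideal.mem_span_singleton, ← Ideal.Quotient.eq_zero_iff_mem,
      map_mul] at this
    exact this
  -- modulo `Q` all maximal minors vanish, so the basis of the kernel becomes dependent
  let κ := FractionRing (R ⧸ Q)
  let ρ : R →+* κ := (algebraMap (R ⧸ Q) κ).comp (Ideal.Quotient.mk Q)
  have hρ : ∀ r, ρ r = 0 ↔ r ∈ Q := fun r => by
    simp only [ρ, RingHom.comp_apply]
    rw [FaithfulSMul.algebraMap_eq_zero_iff, Ideal.Quotient.eq_zero_iff_mem]
  let cQ : Fin n → (Fin (n + 1) → R ⧸ Q) := fun i j => Ideal.Quotient.mk Q (c i j)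
  have hdep : ¬ LinearIndependent (R ⧸ Q) cQ := by
    intro hli
    let cκ : Fin n → (Fin (n + 1) → κ) := fun i j => ρ (c i j)
    have hli2 : LinearIndependent κ cκ := by
      rw [← LinearIndependent.iff_fractionRing (R ⧸ Q) κ]
      let L : (Fin (n + 1) → R ⧸ Q) →ₗ[R ⧸ Q] (Fin (n + 1) → κ) :=
        (Algebra.linearMap (R ⧸ Q) κ).compLeft _
      refine hli.map' L ?_
      rw [LinearMap.ker_eq_bot]
      intro u v huv
      ext j
      exact FaithfulSMul.algebraMap_injective (R ⧸ Q) κ (congrFun huv j)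
    have hlt : Submodule.span κ (Set.range cκ) ≠ ⊤ := by
      intro htop
      have := finrank_span_eq_card hli2
      rw [htop, finrank_top, Module.finrank_fin_fun, Fintype.card_fin] at this
      omega
    obtain ⟨j, hj⟩ : ∃ j, (Pi.single j 1 : Fin (n + 1) → κ) ∉
        Submodule.span κ (Set.range cκ) := by
      by_contra! hcon
      apply hlt
      rw [eq_top_iff, ← (Pi.basisFun κ (Fin (n + 1))).span_eq, Submodule.span_le]
      rintro _ ⟨j, rfl⟩
      simpa using hcon j
    have hli3 := linearIndependent_finCons.mpr ⟨hli2, hj⟩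
    have hdet := hDQ (Pi.single j 1)
    rw [← hρ, hD, RingHom.map_det] at hdet
    have hmat : ρ.mapMatrix (Matrix.of (Fin.cons (Pi.single j 1) c :
        Fin (n + 1) → Fin (n + 1) → R)) =
        Matrix.of (Fin.cons (Pi.single j 1) cκ : Fin (n + 1) → Fin (n + 1) → κ) := by
      ext p q
      refine Fin.cases ?_ (fun p => ?_) p
      · by_cases hq : q = j
        · subst hq; simp
        · simp [hq]
      · simp [cκ]
    rw [hmat] at hdet
    have hu : IsUnit (Matrix.of (Fin.cons (Pi.single j 1) cκ : Fin (n + 1) → Fin (n + 1) → κ)) :=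
      Matrix.linearIndependent_rows_iff_isUnit.mp hli3
    rw [Matrix.isUnit_iff_isUnit_det, hdet] at hu
    exact not_isUnit_zero hu
  obtain ⟨g, hg, i, hgi⟩ := Fintype.not_linearIndependent_iff.mp hdep
  choose w hw using fun i => Ideal.Quotient.mk_surjective (g i)
  have hwQ : w i ∉ Q := by rwa [← Ideal.Quotient.eq_zero_iff_mem, hw]
  have hsum : ∀ j, ∑ i, w i * c i j ∈ Q := by
    intro j
    rw [← Ideal.Quotient.eq_zero_iff_mem, map_sum]
    have := congrFun hg j
    simpa [cQ, hw] using this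
  choose z hz using fun j => (hQt _).mp (hsum j)
  have hz' : ∑ i, (w i * t') • c i = s • z := by
    ext j
    have := hz j
    rw [Finset.sum_mul] at this
    simp only [Finset.sum_apply, Pi.smul_apply, smul_eq_mul]
    rw [← this]
    exact Finset.sum_congr rfl fun i _ => by ring
  obtain ⟨g', hg'⟩ : ∃ g' : Fin n → R, s • z = s • ∑ i, g' i • c i := by
    by_cases hs0 : s = 0
    · exact ⟨0, by simp [hs0]⟩
    · have h1 : f (s • z) = 0 := by
        rw [← hz', map_sum]
        refine Finset.sum_eq_zero fun i _ => ?_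
        rw [map_smul, show f (c i) = 0 from (b i).2, smul_zero]
      rw [map_smul] at h1
      obtain ⟨g', hg'⟩ := hspan z ((smul_eq_zero.mp h1).resolve_left hs0)
      exact ⟨g', by rw [← hg']⟩
  have h0 : ∑ i, (w i * t' - s * g' i) • c i = 0 := by
    simp only [sub_smul, Finset.sum_sub_distrib]
    rw [hz', hg', Finset.smul_sum]
    simp only [mul_smul, sub_self]
  have := Fintype.linearIndependent_iff.mp hc _ h0 i
  exact hwQ ((hQt _).mpr ⟨g' i, sub_eq_zero.mp this⟩)

/-- The dual of a nonzero ideal in a regular local ring of dimension at most three is cyclic.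
The form `δ` of `exists_form` satisfies `δ(incl) ψ(i) = i δ(ψ)` for the inclusion
`incl : I → R`, so `δ(incl)` divides every element of `I`; division by it is the generator. -/
theorem exists_dual_generator {R : Type u} [CommRing R] [IsDomain R] [IsLocalRing R]
    [IsNoetherianRing R] {rs : List R} (hl : rs.length ≤ 3)
    (hm : Ideal.ofList rs = maximalIdeal R) (h : IsWeaklyRegular R rs) (I : Ideal R)
    (hI : I ≠ ⊥) : ∃ φ : I →ₗ[R] R, ∀ ψ : I →ₗ[R] R, ∃ c : R, ψ = c • φ := by
  obtain ⟨n, f, hf, ⟨b⟩⟩ := exists_resolution hl hm h I hI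
  obtain ⟨δ, hδ⟩ := exists_form f hf b
  obtain ⟨a, haI, ha⟩ := Submodule.exists_mem_ne_zero_of_ne_bot hI
  let u := δ I.subtype
  have hu : ∀ (ψ : I →ₗ[R] R) (i : I), u * ψ i = i * δ ψ := by
    intro ψ i
    have : ψ i • I.subtype = (i : R) • ψ := by
      ext j
      have := dual_smul_swap ψ i j
      simp only [LinearMap.smul_apply, smul_eq_mul, Submodule.subtype_apply]
      rw [mul_comm, this]
    have h2 := congrArg δ this
    rw [map_smul, map_smul, smul_eq_mul, smul_eq_mul] at h2
    rw [← h2, mul_comm]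
  have hu0 : u ≠ 0 := by
    intro hu0
    have := hδ 0 1 (fun ψ => by
      have h1 := hu ψ ⟨a, haI⟩
      rw [hu0, zero_mul] at h1
      rw [one_mul, (mul_eq_zero.mp h1.symm).resolve_left ha])
    exact one_ne_zero (zero_dvd_iff.mp this)
  have hdvd : ∀ i : I, u ∣ i := fun i => hδ u i fun ψ => ⟨ψ i, (hu ψ i).symm⟩
  choose q hq using hdvd
  let φ : I →ₗ[R] R :=
    { toFun := q
      map_add' := fun i j => mul_left_cancel₀ hu0 (by rw [mul_add, ← hq, ← hq, ← hq]; rfl)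
      map_smul' := fun r i => mul_left_cancel₀ hu0 (by
        rw [← hq, RingHom.id_apply, smul_eq_mul, mul_left_comm, ← hq]; rfl) }
  refine ⟨φ, fun ψ => ⟨δ ψ, ?_⟩⟩
  ext i
  apply mul_left_cancel₀ hu0
  rw [hu, hq i]
  simp only [LinearMap.smul_apply, smul_eq_mul]
  change u * q i * δ ψ = u * (δ ψ * q i)
  ring

/-- Every nonzero ideal is `d • J` with `J` of grade at least two (or the unit ideal). -/
theorem exists_factorization {R : Type u} [CommRing R] [IsDomain R] [IsLocalRing R]
    [IsNoetherianRing R] {rs : List R} (hl : rs.length ≤ 3)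
    (hm : Ideal.ofList rs = maximalIdeal R) (h : IsWeaklyRegular R rs) (I : Ideal R)
    (hI : I ≠ ⊥) : ∃ (d : R) (J : Ideal R), d ≠ 0 ∧ I = Ideal.span {d} * J ∧
      ∀ s t : R, (∀ j ∈ J, s ∣ t * j) → s ∣ t := by
  obtain ⟨φ, hφ⟩ := exists_dual_generator hl hm h I hI
  obtain ⟨a, haI, ha⟩ := Submodule.exists_mem_ne_zero_of_ne_bot hI
  obtain ⟨d, hd⟩ := hφ I.subtype
  have hd' : ∀ i : I, (i : R) = d * φ i := fun i => LinearMap.congr_fun hd i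
  have hJa : φ ⟨a, haI⟩ ≠ 0 := fun h0 => ha (by have := hd' ⟨a, haI⟩; rwa [h0, mul_zero] at this)
  refine ⟨d, LinearMap.range φ, ?_, ?_, ?_⟩
  · rintro rfl
    exact ha (by simpa using hd' ⟨a, haI⟩)
  · ext x
    rw [Ideal.mem_span_singleton_mul]
    constructor
    · intro hx
      exact ⟨φ ⟨x, hx⟩, ⟨_, rfl⟩, (hd' ⟨x, hx⟩).symm⟩
    · rintro ⟨_, ⟨i, rfl⟩, rfl⟩
      rw [← hd']; exact i.2
  · intro s t hst
    by_cases hs : s = 0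
    · subst hs
      have := hst _ ⟨⟨a, haI⟩, rfl⟩
      rw [zero_dvd_iff] at this ⊢
      exact (mul_eq_zero.mp this).resolve_right hJa
    choose q hq using fun i : I => hst (φ i) ⟨i, rfl⟩
    let ψ : I →ₗ[R] R :=
      { toFun := q
        map_add' := fun i j => mul_left_cancel₀ hs (by
          rw [mul_add, ← hq, ← hq, ← hq, map_add, mul_add])
        map_smul' := fun r i => mul_left_cancel₀ hs (by
          rw [← hq, RingHom.id_apply, smul_eq_mul, mul_left_comm, ← hq, map_smul, smul_eq_mul,
            mul_left_comm]) }
    obtain ⟨c, hc⟩ := hφ ψ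
    refine ⟨c, mul_right_cancel₀ hJa ?_⟩
    rw [hq, mul_assoc]
    congr 1
    exact LinearMap.congr_fun hc ⟨a, haI⟩

/-! ### Associated primes of the powers -/

/-- The associated primes of `R/K` are the primes of the form `(K : x)`. -/
theorem mem_associatedPrimes_quotient {R : Type u} [CommRing R] [IsNoetherianRing R]
    {K p : Ideal R} :
    p ∈ associatedPrimes R (R ⧸ K) ↔ p.IsPrime ∧ ∃ x, ∀ r, r ∈ p ↔ r * x ∈ K := by
  have key : ∀ x : R, (p = (⊥ : Submodule R (R ⧸ K)).colon {Ideal.Quotient.mk K x}) ↔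
      ∀ r, r ∈ p ↔ r * x ∈ K := by
    intro x
    rw [Ideal.ext_iff]
    refine forall_congr' fun r => ?_
    rw [Submodule.mem_colon_singleton, Submodule.mem_bot,
      ← Ideal.Quotient.eq_zero_iff_mem (I := K) (a := r * x), map_mul]
    rfl
  rw [AssociatedPrimes.mem_iff, isAssociatedPrime_iff]
  refine and_congr_right fun _ => ⟨?_, ?_⟩
  · rintro ⟨y, hy⟩
    obtain ⟨x, rfl⟩ := Ideal.Quotient.mk_surjective y
    exact ⟨x, (key x).mp hy⟩
  · rintro ⟨x, hx⟩
    exact ⟨_, (key x).mpr hx⟩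

/-- Grade at least two, in its elementwise form, is inherited by powers. -/
theorem dvd_of_dvd_mul_pow {R : Type u} [CommRing R] {J : Ideal R}
    (hJ : ∀ s t : R, (∀ j ∈ J, s ∣ t * j) → s ∣ t) (n : ℕ) :
    ∀ s t : R, (∀ j ∈ J ^ n, s ∣ t * j) → s ∣ t := by
  induction n with
  | zero => exact fun s t h => by simpa using h 1 (by simp)
  | succ n ih =>
    refine fun s t h => ih s t fun j hj => hJ _ _ fun i hi => ?_
    rw [mul_assoc]
    exact h _ (by rw [pow_succ]; exact Ideal.mul_mem_mul hj hi)

theorem minimalPrimes_pow_of_pos {R : Type u} [CommRing R] {J : Ideal R} {n : ℕ} (hn : 0 < n) :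
    (J ^ n).minimalPrimes = J.minimalPrimes := by
  rw [← Ideal.radical_minimalPrimes, Ideal.radical_pow J hn.ne', Ideal.radical_minimalPrimes]

theorem span_mul_pow {R : Type u} [CommRing R] (d : R) (J : Ideal R) (n : ℕ) :
    (Ideal.span {d} * J) ^ n = Ideal.span {d ^ n} * J ^ n := by
  rw [mul_pow, Ideal.span_singleton_pow]

section Product

variable {R : Type u} [CommRing R] [IsDomain R] [IsNoetherianRing R]

theorem mem_associatedPrimes_span_mul {d : R} {K p : Ideal R}
    (hp : p ∈ associatedPrimes R (R ⧸ Ideal.span {d} * K)) :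
    p ∈ associatedPrimes R (R ⧸ Ideal.span {d}) ∨ p ∈ associatedPrimes R (R ⧸ K) := by
  simp only [mem_associatedPrimes_quotient] at hp ⊢
  obtain ⟨hp, x, hx⟩ := hp
  by_cases h0 : d = 0
  · subst h0
    left
    refine ⟨hp, x, fun r => ?_⟩
    rw [hx]
    simp
  by_cases h : ∃ r ∉ p, d ∣ r * x
  · obtain ⟨r, hr, y, hy⟩ := h
    right
    refine ⟨hp, y, fun s => ?_⟩
    have h1 : s ∈ p ↔ s * r ∈ p :=
      ⟨fun h => p.mul_mem_right _ h, fun h => (hp.mem_or_mem h).resolve_right hr⟩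
    rw [h1, hx, mul_assoc, hy, mul_left_comm, Ideal.mem_span_singleton_mul]
    constructor
    · rintro ⟨z, hz, hzz⟩
      rwa [← mul_left_cancel₀ h0 hzz]
    · exact fun h => ⟨_, h, rfl⟩
  · push Not at h
    left
    refine ⟨hp, x, fun r => ⟨fun hr => ?_, fun hr => ?_⟩⟩
    · exact Ideal.mul_le_left ((hx r).mp hr)
    · by_contra hrp
      exact h r hrp (Ideal.mem_span_singleton.mp hr)

theorem associatedPrimes_subset_span_mul {d : R} (hd : d ≠ 0) (K : Ideal R) :
    associatedPrimes R (R ⧸ K) ⊆ associatedPrimes R (R ⧸ Ideal.span {d} * K) := by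
  intro p
  simp only [mem_associatedPrimes_quotient]
  rintro ⟨hp, x, hx⟩
  refine ⟨hp, d * x, fun r => ?_⟩
  rw [hx, mul_left_comm, Ideal.mem_span_singleton_mul]
  constructor
  · exact fun h => ⟨_, h, rfl⟩
  · rintro ⟨z, hz, hzz⟩
    rwa [← mul_left_cancel₀ hd hzz]

theorem associatedPrimes_span_pow {d : R} (hd : d ≠ 0) {n : ℕ} (hn : 0 < n) :
    associatedPrimes R (R ⧸ Ideal.span {d ^ n}) = associatedPrimes R (R ⧸ Ideal.span {d}) := by
  induction n, hn using Nat.le_induction with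
  | base => rw [pow_one]
  | succ n hn ih =>
    have h : Ideal.span {d ^ (n + 1)} = Ideal.span {d} * Ideal.span {d ^ n} := by
      rw [Ideal.span_singleton_mul_span_singleton, pow_succ']
    rw [h]
    refine Set.Subset.antisymm (fun p hp => ?_) ?_
    · exact (mem_associatedPrimes_span_mul hp).elim id fun h => ih ▸ h
    · rw [← ih]
      exact associatedPrimes_subset_span_mul hd _

/-- The associated primes of `d • K` for an ideal `K` of grade at least two are those of `d`
together with those of `K`. -/
theorem associatedPrimes_span_mul {d : R} (hd : d ≠ 0) {K : Ideal R}
    (hK : ∀ s t : R, (∀ j ∈ K, s ∣ t * j) → s ∣ t) :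
    associatedPrimes R (R ⧸ Ideal.span {d} * K) =
      associatedPrimes R (R ⧸ Ideal.span {d}) ∪ associatedPrimes R (R ⧸ K) := by
  refine Set.Subset.antisymm (fun p hp => mem_associatedPrimes_span_mul hp)
    (Set.union_subset (fun p => ?_) (associatedPrimes_subset_span_mul hd K))
  simp only [mem_associatedPrimes_quotient]
  rintro ⟨hp, x, hx⟩
  obtain ⟨j, hj, hjp⟩ : ∃ j ∈ K, j ∉ p := by
    by_contra! h
    refine hp.ne_top ((Ideal.eq_top_iff_one _).mpr ((hx 1).mpr ?_))
    rw [one_mul, Ideal.mem_span_singleton]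
    refine hK d x fun j hj => ?_
    rw [← Ideal.mem_span_singleton, mul_comm]
    exact (hx j).mp (h j hj)
  refine ⟨hp, x * j, fun r => ?_⟩
  rw [← mul_assoc]
  constructor
  · intro hr
    exact Ideal.mul_mem_mul ((hx r).mp hr) hj
  · intro hr
    have h1 : r * j * x ∈ Ideal.span {d} := by
      rw [mul_right_comm]
      exact Ideal.mul_le_left hr
    exact (hp.mem_or_mem ((hx _).mpr h1)).resolve_right hjp

/-- An ideal of grade at least two has height at least two, so in dimension at most three any
prime strictly above a prime containing it is maximal. -/
theorem eq_maximalIdeal_of_lt [IsLocalRing R] (hdim : ringKrullDim R ≤ 3) {J : Ideal R}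
    (hJ0 : J ≠ ⊥) (hJ : ∀ s t : R, (∀ j ∈ J, s ∣ t * j) → s ∣ t) {q p : Ideal R}
    (hq : q.IsPrime) (hp : p.IsPrime) (hJq : J ≤ q) (hqp : q < p) : p = maximalIdeal R := by
  by_contra hpm
  have hpm' : p < maximalIdeal R := lt_of_le_of_ne (le_maximalIdeal hp.ne_top) hpm
  obtain ⟨j, hj, hj0⟩ := Submodule.exists_mem_ne_zero_of_ne_bot hJ0
  obtain ⟨q', hq', hq'q⟩ := Ideal.exists_minimalPrimes_le
    (show Ideal.span {j} ≤ q from (Ideal.span_singleton_le_iff_mem _).mpr (hJq hj))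
  have hq'p : q'.IsPrime := hq'.1.1
  have hjmem : j ∈ q' := hq'.1.2 (Ideal.mem_span_singleton_self j)
  have hlt : q' < q := by
    refine lt_of_le_of_ne hq'q ?_
    rintro rfl
    have hass : q' ∈ associatedPrimes R (R ⧸ Ideal.span {j}) := by
      apply Module.associatedPrimes.minimalPrimes_annihilator_subset_associatedPrimes
      rwa [Ideal.annihilator_quotient]
    obtain ⟨-, x, hx⟩ := mem_associatedPrimes_quotient.mp hass
    refine hq'p.ne_top ((Ideal.eq_top_iff_one _).mpr ((hx 1).mpr ?_))
    rw [one_mul, Ideal.mem_span_singleton]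
    refine hJ j x fun i hi => ?_
    rw [← Ideal.mem_span_singleton, mul_comm]
    exact (hx i).mp (hJq hi)
  have hbot : (⊥ : Ideal R) < q' :=
    lt_of_le_of_ne bot_le fun h => hj0 (by rw [← h] at hjmem; simpa using hjmem)
  -- the chain `0 < q' < q < p < m` is too long
  let l : LTSeries (PrimeSpectrum R) :=
    { length := 4
      toFun := ![⟨⊥, Ideal.isPrime_bot⟩, ⟨q', hq'p⟩, ⟨q, hq⟩, ⟨p, hp⟩, ⟨maximalIdeal R, inferInstance⟩]
      step := fun i => by
        fin_cases i
        exacts [hbot, hlt, hqp, hpm'] }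
  have hl := Order.LTSeries.length_le_krullDim l
  have hl4 : l.length = 4 := rfl
  rw [hl4] at hl
  have := hl.trans hdim
  exact absurd this (by decide)

/-- Nonmaximal associated primes of a power of an ideal of grade at least two are minimal. -/
theorem mem_associatedPrimes_pow_iff [IsLocalRing R] (hdim : ringKrullDim R ≤ 3) {J : Ideal R}
    (hJ0 : J ≠ ⊥) (hJ : ∀ s t : R, (∀ j ∈ J, s ∣ t * j) → s ∣ t) {n : ℕ} (hn : 0 < n)
    {p : Ideal R} (hpm : p ≠ maximalIdeal R) :
    p ∈ associatedPrimes R (R ⧸ J ^ n) ↔ p ∈ J.minimalPrimes := by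
  constructor
  · intro hp
    obtain ⟨hpp, x, hx⟩ := mem_associatedPrimes_quotient.mp hp
    have hJp : J ≤ p := hpp.le_of_pow_le fun j hj => (hx j).mpr (Ideal.mul_mem_right _ _ hj)
    obtain ⟨q, hq, hqp⟩ := Ideal.exists_minimalPrimes_le hJp
    rcases hqp.eq_or_lt with rfl | h
    · exact hq
    · exact absurd (eq_maximalIdeal_of_lt hdim hJ0 hJ hq.1.1 hpp hq.1.2 h) hpm
  · intro hp
    apply Module.associatedPrimes.minimalPrimes_annihilator_subset_associatedPrimes
    rwa [Ideal.annihilator_quotient, minimalPrimes_pow_of_pos hn]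

/-- Only the maximal ideal can distinguish the sets `Ass(R/Iⁿ)`. -/
theorem mem_associatedPrimes_span_mul_pow_iff [IsLocalRing R] (hdim : ringKrullDim R ≤ 3)
    {d : R} (hd : d ≠ 0) {J : Ideal R} (hJ0 : J ≠ ⊥)
    (hJ : ∀ s t : R, (∀ j ∈ J, s ∣ t * j) → s ∣ t) {n : ℕ} (hn : 0 < n)
    {p : Ideal R} (hpm : p ≠ maximalIdeal R) :
    p ∈ associatedPrimes R (R ⧸ (Ideal.span {d} * J) ^ n) ↔
      p ∈ associatedPrimes R (R ⧸ Ideal.span {d}) ∨ p ∈ J.minimalPrimes := by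
  rw [span_mul_pow, associatedPrimes_span_mul (pow_ne_zero n hd) (dvd_of_dvd_mul_pow hJ n),
    associatedPrimes_span_pow hd hn, Set.mem_union, mem_associatedPrimes_pow_iff hdim hJ0 hJ hn hpm]

end Product

/-! ### Depth -/

section Depth

open scoped Pointwise

variable {R : Type u} [CommRing R] [IsLocalRing R] [IsNoetherianRing R]

theorem not_isSMulRegular_of_maximalIdeal_mem {M : Type v} [AddCommGroup M] [Module R M]
    (hm : maximalIdeal R ∈ associatedPrimes R M) {r : R} (hr : r ∈ maximalIdeal R) :
    ¬ IsSMulRegular M r := by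
  have h : r ∈ ⋃ p ∈ associatedPrimes R M, (p : Set R) := Set.mem_biUnion hm hr
  rwa [biUnion_associatedPrimes_eq_compl_regular] at h

theorem exists_isSMulRegular {M : Type v} [AddCommGroup M] [Module R M] [Module.Finite R M]
    (hm : maximalIdeal R ∉ associatedPrimes R M) :
    ∃ r ∈ maximalIdeal R, IsSMulRegular M r := by
  by_contra! h
  have hsub : (maximalIdeal R : Set R) ⊆ ⋃ p ∈ associatedPrimes R M, ((id p : Ideal R) : Set R) := by
    have := biUnion_associatedPrimes_eq_compl_regular R M
    simp only [id]
    rw [this]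
    exact fun r hr => h r hr
  obtain ⟨p, hp, hle⟩ := (Ideal.subset_union_prime_finite (associatedPrimes.finite R M) ⊤ ⊤
    (fun i hi _ _ => hi.1)).mp hsub
  have : p = maximalIdeal R := le_antisymm (le_maximalIdeal hp.1.ne_top) hle
  exact hm (this ▸ hp)

/-- If the only primes containing an associated prime `p` of `M` are `p` and possibly `m`, then `M`
has depth at most one. If `r` is regular on `M`, an element of `M` killed by `p` and not
divisible by `r` gives an associated prime of `M/rM` containing `p` and `r`, which is then `m`. -/
theorem not_isRegular_pair {M : Type v} [AddCommGroup M] [Module R M] [Module.Finite R M]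
    {p : Ideal R} (hp : p ∈ associatedPrimes R M)
    (hmax : ∀ q : Ideal R, q.IsPrime → p < q → q = maximalIdeal R) {r s : R} {l : List R}
    (hr : r ∈ maximalIdeal R) (hs : s ∈ maximalIdeal R) : ¬ IsWeaklyRegular M (r :: s :: l) := by
  intro h
  rw [isWeaklyRegular_cons_iff, isWeaklyRegular_cons_iff] at h
  obtain ⟨hrM, hsM, -⟩ := h
  have hrp : r ∉ p := by
    intro hrp
    have h : r ∈ ⋃ p ∈ associatedPrimes R M, (p : Set R) := Set.mem_biUnion hp hrp
    rw [biUnion_associatedPrimes_eq_compl_regular] at h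
    exact h hrM
  obtain ⟨hpp, x, hx⟩ := isAssociatedPrime_iff.mp hp
  let N := Submodule.torsionBySet R M p
  have hxN : x ∈ N := by
    rw [Submodule.mem_torsionBySet_iff]
    rintro ⟨a, ha⟩
    rw [SetLike.mem_coe, hx, Submodule.mem_colon_singleton, Submodule.mem_bot] at ha
    exact ha
  have hx0 : x ≠ 0 := by
    rintro rfl
    refine hpp.ne_top ((Ideal.eq_top_iff_one _).mpr ?_)
    rw [hx, Submodule.mem_colon_singleton, smul_zero]
    exact zero_mem _
  obtain ⟨y, hyN, hy⟩ : ∃ y ∈ N, y ∉ Ideal.span {r} • N := by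
    by_contra! hcon
    have := Submodule.eq_bot_of_le_smul_of_le_jacobson_bot (Ideal.span {r}) N
      (IsNoetherian.noetherian N) hcon
      (((Ideal.span_singleton_le_iff_mem _).mpr hr).trans (maximalIdeal_le_jacobson _))
    rw [this] at hxN
    exact hx0 (by simpa using hxN)
  have hyM : (Submodule.mkQ (r • (⊤ : Submodule R M)) y : QuotSMulTop r M) ≠ 0 := by
    intro h0
    rw [Submodule.mkQ_apply, Submodule.Quotient.mk_eq_zero,
      Submodule.mem_smul_pointwise_iff_exists] at h0
    obtain ⟨z, -, rfl⟩ := h0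
    apply hy
    rw [Submodule.ideal_span_singleton_smul]
    refine Submodule.smul_mem_pointwise_smul _ _ _ ?_
    rw [Submodule.mem_torsionBySet_iff] at hyN ⊢
    intro a
    have h1 := hyN a
    rw [smul_comm] at h1
    exact hrM (by simpa using h1)
  obtain ⟨q, hq, hle⟩ := exists_le_isAssociatedPrime_of_isNoetherianRing R _ hyM
  have hpq : p ≤ q := by
    intro a ha
    apply hle
    rw [Submodule.mem_colon_singleton, Submodule.mem_bot, ← map_smul]
    rw [Submodule.mem_torsionBySet_iff] at hyN
    rw [show a • y = 0 from hyN ⟨a, ha⟩, map_zero]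
  have hrq : r ∈ q := by
    apply hle
    rw [Submodule.mem_colon_singleton, Submodule.mem_bot, ← map_smul, Submodule.mkQ_apply,
      Submodule.Quotient.mk_eq_zero]
    exact Submodule.smul_mem_pointwise_smul _ _ _ trivial
  have hqm := hmax q hq.1 (lt_of_le_of_ne hpq fun h => hrp (h ▸ hrq))
  exact not_isSMulRegular_of_maximalIdeal_mem (hqm ▸ hq) hs hsM

theorem depthIn_eq_zero {K : Ideal R} (hm : maximalIdeal R ∈ associatedPrimes R (R ⧸ K)) :
    depthIn (maximalIdeal R) K = 0 := by
  unfold depthIn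
  refine Nat.le_zero.mp (csSup_le' ?_)
  rintro _ ⟨rs, rfl, hrs, hreg⟩
  cases rs with
  | nil => rfl
  | cons r rs =>
    have h := ((isRegular_cons_iff _ _ _).mp hreg).1
    exact absurd h (not_isSMulRegular_of_maximalIdeal_mem hm (hrs r (by simp)))

theorem depthIn_eq_one {K p : Ideal R} (hm : maximalIdeal R ∉ associatedPrimes R (R ⧸ K))
    (hp : p ∈ associatedPrimes R (R ⧸ K))
    (hmax : ∀ q : Ideal R, q.IsPrime → p < q → q = maximalIdeal R) :
    depthIn (maximalIdeal R) K = 1 := by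
  obtain ⟨r, hr, hreg⟩ := exists_isSMulRegular hm
  have hK : K ≠ ⊤ := by
    rintro rfl
    obtain ⟨hpp, x, hx⟩ := mem_associatedPrimes_quotient.mp hp
    exact hpp.ne_top ((Ideal.eq_top_iff_one _).mpr ((hx 1).mpr trivial))
  have : Nontrivial (R ⧸ K) := Ideal.Quotient.nontrivial_iff.mpr hK
  unfold depthIn
  refine IsGreatest.csSup_eq ⟨⟨[r], rfl, by simpa using hr, ?_⟩, ?_⟩
  · rw [isRegular_iff_isWeaklyRegular_of_subset_maximalIdeal (by simpa using hr),
      isWeaklyRegular_singleton_iff]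
    exact hreg
  · rintro _ ⟨rs, rfl, hrs, hreg⟩
    match rs, hrs, hreg with
    | [], _, _ => simp
    | [_], _, _ => simp
    | a :: b :: l, hrs, hreg =>
      exact absurd hreg.toIsWeaklyRegular
        (not_isRegular_pair hp hmax (hrs a (by simp)) (hrs b (by simp)))

/-- Regular sequences on `R/(a)` are the sequences `rs` which are regular on `R` and modulo
which `a` is regular. -/
theorem isRegular_quotient_span_iff [IsDomain R] {a : R} (ha : a ∈ maximalIdeal R) (ha0 : a ≠ 0)
    {rs : List R} (hrs : ∀ r ∈ rs, r ∈ maximalIdeal R) :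
    IsRegular (R ⧸ Ideal.span {a}) rs ↔
      IsWeaklyRegular R rs ∧ IsSMulRegular (R ⧸ (Ideal.ofList rs • ⊤ : Ideal R)) a := by
  have e : QuotSMulTop a R ≃ₗ[R] R ⧸ Ideal.span {a} :=
    Submodule.quotEquivOfEq _ _ (by
      rw [← Submodule.ideal_span_singleton_smul, smul_eq_mul, Ideal.mul_top])
  have haR : IsSMulRegular R a := fun x y h => mul_left_cancel₀ ha0 h
  have h1 : IsRegular (R ⧸ Ideal.span {a}) rs ↔ IsRegular R (a :: rs) := by
    rw [isRegular_cons_iff, ← e.isRegular_congr]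
    exact ⟨fun h => ⟨haR, h⟩, fun h => h.2⟩
  have hperm : (a :: rs).Perm (rs ++ [a]) := by
    simpa using (List.perm_append_comm (l₁ := [a]) (l₂ := rs))
  have h2 : IsRegular R (a :: rs) ↔ IsRegular R (rs ++ [a]) :=
    ⟨fun h => isRegular_of_perm h hperm, fun h => isRegular_of_perm h hperm.symm⟩
  rw [h1, h2, isRegular_iff_isWeaklyRegular_of_subset_maximalIdeal, isWeaklyRegular_append_iff,
    isWeaklyRegular_singleton_iff]
  intro r hr
  rcases List.mem_append.mp hr with h | h
  · exact hrs r h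
  · rw [List.mem_singleton.mp h]; exact ha

theorem depthIn_span_pow [IsDomain R] {d : R} (hd : d ∈ maximalIdeal R) (hd0 : d ≠ 0) {n : ℕ}
    (hn : 0 < n) :
    depthIn (maximalIdeal R) (Ideal.span {d ^ n}) = depthIn (maximalIdeal R) (Ideal.span {d}) := by
  unfold depthIn
  congr 1
  ext k
  refine exists_congr fun rs => and_congr_right fun _ => and_congr_right fun hrs => ?_
  rw [isRegular_quotient_span_iff (Ideal.pow_mem_of_mem _ hd n hn) (pow_ne_zero n hd0) hrs,
    isRegular_quotient_span_iff hd hd0 hrs, IsSMulRegular.pow_iff hn]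

end Depth

/-- For all positive `n` and `k`, the depths of `R/Iⁿ` and `R/Iᵏ` agree exactly when the sets of
associated primes do. -/
theorem associatedPrimes_eq_iff_depthIn_eq {R : Type u} [CommRing R] [IsLocalRing R]
    (hreg : IsRegularLocal R) (hdim : ringKrullDim R ≤ 3) (I : Ideal R) (hne : I ≠ ⊥)
    (hproper : I ≠ ⊤) {n k : ℕ} (hn : 0 < n) (hk : 0 < k) :
    associatedPrimes R (R ⧸ I ^ n) = associatedPrimes R (R ⧸ I ^ k) ↔
      depthIn (maximalIdeal R) (I ^ n) = depthIn (maximalIdeal R) (I ^ k) := by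
  obtain ⟨hN, s, hs, hcard⟩ := hreg
  have hm : Ideal.ofList s.toList = maximalIdeal R := by
    rw [← hs]
    unfold Ideal.ofList
    congr 1
    ext; simp
  have hlen : (s.toList.length : WithBot ℕ∞) ≤ ringKrullDim R := by
    rw [Finset.length_toList, hcard]
  have hl3 : s.toList.length ≤ 3 := by exact_mod_cast hlen.trans hdim
  have := isDomain_of_ofList s.toList hm hlen
  obtain ⟨d, J, hd, hI, hJ⟩ := exists_factorization hl3 hm
    (isWeaklyRegular_of_regular _ R s.toList rfl hm hlen) I hne
  have hJ0 : J ≠ ⊥ := by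
    rintro rfl
    exact hne (by rw [hI, Ideal.mul_bot])
  by_cases hJt : J = ⊤
  · -- `I` is principal: both functions are constant
    rw [hJt, Ideal.mul_top] at hI
    have hdm : d ∈ maximalIdeal R :=
      le_maximalIdeal hproper (hI ▸ Ideal.mem_span_singleton_self d)
    rw [hI]
    rw [Ideal.span_singleton_pow, Ideal.span_singleton_pow, associatedPrimes_span_pow hd hn, associatedPrimes_span_pow hd hk,
      depthIn_span_pow hdm hd hn, depthIn_span_pow hdm hd hk]
    simp
  · have hdepth : ∀ l : ℕ, 0 < l → maximalIdeal R ∉ associatedPrimes R (R ⧸ I ^ l) →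
        depthIn (maximalIdeal R) (I ^ l) = 1 := by
      intro l hl hml
      obtain ⟨p, hp⟩ := (Ideal.nonempty_minimalPrimes hJt)
      have hpI : p ∈ associatedPrimes R (R ⧸ I ^ l) := by
        rw [hI, span_mul_pow]
        apply associatedPrimes_subset_span_mul (pow_ne_zero l hd)
        apply Module.associatedPrimes.minimalPrimes_annihilator_subset_associatedPrimes
        rwa [Ideal.annihilator_quotient, minimalPrimes_pow_of_pos hl]
      exact depthIn_eq_one hml hpI fun q hq hpq =>
        eq_maximalIdeal_of_lt hdim hJ0 hJ hp.1.1 hq hp.1.2 hpq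
    have hass : associatedPrimes R (R ⧸ I ^ n) = associatedPrimes R (R ⧸ I ^ k) ↔
        (maximalIdeal R ∈ associatedPrimes R (R ⧸ I ^ n) ↔
          maximalIdeal R ∈ associatedPrimes R (R ⧸ I ^ k)) := by
      refine ⟨fun h => by rw [h], fun h => ?_⟩
      ext p
      by_cases hpm : p = maximalIdeal R
      · rw [hpm, h]
      · rw [hI, mem_associatedPrimes_span_mul_pow_iff hdim hd hJ0 hJ hn hpm,
          mem_associatedPrimes_span_mul_pow_iff hdim hd hJ0 hJ hk hpm]
    rw [hass]
    by_cases h1 : maximalIdeal R ∈ associatedPrimes R (R ⧸ I ^ n) <;>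
    by_cases h2 : maximalIdeal R ∈ associatedPrimes R (R ⧸ I ^ k)
    · simp [h1, h2, depthIn_eq_zero]
    · simp [h1, h2, depthIn_eq_zero h1, hdepth k hk h2]
    · simp [h1, h2, depthIn_eq_zero h2, hdepth n hn h1]
    · simp [h1, h2, hdepth n hn h1, hdepth k hk h2]

theorem stmt4 {R : Type*} [CommRing R] [IsLocalRing R]
    (hreg : IsRegularLocal R)
    (hdim : ringKrullDim R ≤ 3)
    (I : Ideal R) (hne : I ≠ ⊥) (hproper : I ≠ ⊤) :
    astab I = dstab (IsLocalRing.maximalIdeal R) I := by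
  unfold astab dstab
  congr 1
  ext k
  refine and_congr_right fun hk => forall₂_congr fun n hn => ?_
  exact associatedPrimes_eq_iff_depthIn_eq hreg hdim I hne hproper (hk.trans_le hn) hk
end

section
/- Let (R,m) be a regular local ring, f ∈ R a nonzero nonunit, and J an ideal of R with height(J) ≥ 2. Then for every integer k ≥ 1, Ass(R/f^kJ^k) = Min(fR) ∪ Ass(R/J^k), where Min(fR) is the set of minimal primes of the principal ideal (f). -/
/-!
Put `F = f ^ k` and `I = J ^ k`. Since `R` is a domain, multiplication by `F` gives an exact
sequence `0 → R ⧸ I → R ⧸ F I → R ⧸ (F) → 0`, whence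
`Ass (R ⧸ I) ⊆ Ass (R ⧸ F I) ⊆ Ass (R ⧸ I) ∪ Ass (R ⧸ (F))`.

A regular local ring is a domain in which every associated prime of a nonzero principal ideal has
height at most one (`regular_aux`), so `Ass (R ⧸ (F))` consists of minimal primes of `f`.
Conversely a minimal prime `P` of `f` has height at most one by Krull's principal ideal theorem.
As `J` has height at least two, `P` contains no prime containing `J`, so `P` is minimal over
`F I` and is therefore associated to `R ⧸ F I`.

The fact about regular local rings is proved by induction on the dimension. By prime avoidance one
of the `dim R` generators of the maximal ideal, say `x`, can be taken outside all minimal primes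
(`exists_good_generator`). Then `R ⧸ (x)` is regular of dimension one less, so by induction `(x)`
is prime, and Nakayama's lemma shows that `R` is a domain (`isDomain_of_isPrime_span`). The bound
on the heights of associated primes lifts from `R ⧸ (x)` to `R` (`height_le_one_of_quotient`).
-/

open IsLocalRing

/-- In a Noetherian ring, `P` is associated to `R ⧸ (f)` iff it is a prime of the form
`(f : g)`. -/
lemma mem_associatedPrimes_span_iff {R : Type*} [CommRing R] [IsNoetherianRing R]
    (f : R) (P : Ideal R) :
    P ∈ associatedPrimes R (R ⧸ Ideal.span {f}) ↔
      P.IsPrime ∧ ∃ g : R, ∀ r, r ∈ P ↔ f ∣ r * g := by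
  rw [AssociatedPrimes.mem_iff, isAssociatedPrime_iff]
  refine and_congr_right fun _ => ?_
  have key (g r : R) : r ∈ Submodule.colon (⊥ : Submodule R (R ⧸ Ideal.span {f}))
      {Ideal.Quotient.mk (Ideal.span {f}) g} ↔ f ∣ r * g := by
    rw [Submodule.mem_colon_singleton, Submodule.mem_bot, ← Ideal.mem_span_singleton,
      ← Ideal.Quotient.eq_zero_iff_mem, map_mul]
    rfl
  constructor
  · rintro ⟨x, rfl⟩
    obtain ⟨g, rfl⟩ := Ideal.Quotient.mk_surjective x
    exact ⟨g, key g⟩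
  · rintro ⟨g, hg⟩
    exact ⟨Ideal.Quotient.mk _ g, Ideal.ext fun r => (hg r).trans (key g r).symm⟩

/-- Whether a prime `P` is associated to `R ⧸ (f)` does not depend on the nonzero element `f`
of `P`: if `P = (f : g)` and `y * g = f * h`, then `P = (y : h)`. -/
lemma exchange {R : Type*} [CommRing R] [IsDomain R] {f g y : R} (hf : f ≠ 0) (hy : y ≠ 0)
    {P : Ideal R} (hP : ∀ r, r ∈ P ↔ f ∣ r * g) (hyP : y ∈ P) :
    ∃ h : R, ∀ r, r ∈ P ↔ y ∣ r * h := by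
  obtain ⟨h, hh⟩ := (hP y).1 hyP
  refine ⟨h, fun r => ?_⟩
  rw [hP r, ← mul_dvd_mul_iff_left hy, show y * (r * g) = f * (r * h) by linear_combination r * hh,
    mul_comm y f, mul_dvd_mul_iff_left hf]

/-- In a Noetherian local ring of positive dimension whose maximal ideal is generated by `dim R`
elements, one of `dim R` generators can be chosen outside all minimal primes: by prime avoidance
some element of the maximal ideal lies outside its square and the minimal primes, and such an
element can be exchanged for one of the given generators. -/
lemma exists_good_generator {R : Type*} [CommRing R] [IsLocalRing R] [IsNoetherianRing R]
    (d : ℕ) (s : Finset R) (hs : Ideal.span (s : Set R) = maximalIdeal R)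
    (hc : s.card = d + 1) (hd : ringKrullDim R = (d + 1 : ℕ)) :
    ∃ (x : R) (t : Finset R), x ∈ maximalIdeal R ∧ (∀ q ∈ minimalPrimes R, x ∉ q) ∧
      t.card = d ∧ Ideal.span (insert x (t : Set R)) = maximalIdeal R := by
  classical
  have hht : (maximalIdeal R).height = (d + 1 : ℕ) := by
    have h := IsLocalRing.maximalIdeal_height_eq_ringKrullDim (R := R)
    rw [hd] at h
    exact_mod_cast h
  have hmin : maximalIdeal R ∉ minimalPrimes R := fun h => by
    rw [← Ideal.height_eq_zero_iff, hht] at h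
    simp at h
  have hfin : (minimalPrimes R).Finite := Ideal.finite_minimalPrimes_of_isNoetherianRing R ⊥
  obtain ⟨x, hxm, hx2, hxq⟩ : ∃ x ∈ maximalIdeal R, x ∉ maximalIdeal R ^ 2 ∧
      ∀ q ∈ minimalPrimes R, x ∉ q := by
    by_contra! H
    have hcov := (Ideal.subset_union_prime (s := insert (maximalIdeal R ^ 2) hfin.toFinset)
      (f := id) (I := maximalIdeal R) (maximalIdeal R ^ 2) (maximalIdeal R ^ 2)
      (fun i hi h _ => by
        rw [Finset.mem_insert, Set.Finite.mem_toFinset] at hi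
        exact (hi.resolve_left h).1.1)).1 (fun x hx => by
        simp only [Set.mem_iUnion, id]
        by_cases h2 : x ∈ maximalIdeal R ^ 2
        · exact ⟨_, by simp, h2⟩
        · obtain ⟨q, hq, hxq⟩ := H x hx h2
          exact ⟨q, by simp [hq], hxq⟩)
    obtain ⟨i, hi, hle⟩ := hcov
    rw [Finset.mem_insert, Set.Finite.mem_toFinset] at hi
    rcases hi with rfl | hi
    · -- `m = m ^ 2` forces `m = 0` by Nakayama's lemma, so `m` would be a minimal prime.
      have hbot : maximalIdeal R = ⊥ := by
        refine Submodule.eq_bot_of_le_smul_of_le_jacobson_bot (maximalIdeal R) (maximalIdeal R)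
          (IsNoetherian.noetherian _) ?_ (IsLocalRing.maximalIdeal_le_jacobson _)
        rw [smul_eq_mul, ← pow_two]
        exact hle
      have := Ideal.height_le_spanFinrank (maximalIdeal R) Ideal.IsPrime.ne_top'
      rw [hht, hbot, Submodule.spanFinrank_bot] at this
      simp at this
    · have := hi.1.1
      have h := IsLocalRing.le_maximalIdeal this.ne_top
      exact hmin (le_antisymm hle h ▸ hi)
  have hx : x ∈ Ideal.span (s : Set R) := hs ▸ hxm
  obtain ⟨a, ha⟩ := (Submodule.mem_span_finset').1 hx
  obtain ⟨y, hy⟩ : ∃ y : s, IsUnit (a y) := by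
    by_contra! H
    refine hx2 (ha ▸ Ideal.sum_mem _ fun y _ => ?_)
    rw [pow_two, smul_eq_mul]
    exact Ideal.mul_mem_mul ((mem_maximalIdeal _).2 (H y)) (hs ▸ Ideal.subset_span y.2)
  refine ⟨x, s.erase y, hxm, hxq, by rw [Finset.card_erase_of_mem y.2, hc]; rfl, ?_⟩
  apply le_antisymm
  · rw [Ideal.span_le]
    rintro z (rfl | hz)
    · exact hxm
    · exact hs ▸ Ideal.subset_span (Finset.mem_of_mem_erase hz)
  · rw [← hs, Ideal.span_le]
    intro z hz
    by_cases hzy : z = y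
    · subst hzy
      have h1 : a y * (y : R) ∈
          Ideal.span (insert x ((s.erase (y : R) : Finset R) : Set R)) := by
        have h2 : a y * (y : R) = x - ∑ i ∈ Finset.univ.erase y, a i • (i : R) := by
          rw [← ha, ← Finset.add_sum_erase _ _ (Finset.mem_univ y), smul_eq_mul]
          ring
        rw [h2]
        refine Ideal.sub_mem _ (Ideal.subset_span (Or.inl rfl)) (Ideal.sum_mem _ fun i hi => ?_)
        refine Ideal.mul_mem_left _ _ (Ideal.subset_span (Or.inr ?_))
        refine Finset.mem_coe.2 (Finset.mem_erase.2 ⟨?_, i.2⟩)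
        exact fun h => (Finset.mem_erase.1 hi).1 (Subtype.ext h)
      exact (Ideal.unit_mul_mem_iff_mem _ hy).1 h1
    · exact Ideal.subset_span (Or.inr (Finset.mem_coe.2 (Finset.mem_erase.2 ⟨hzy, hz⟩)))

/-- If `(x)` is prime, a minimal prime `q ≤ (x)` that does not contain `x` satisfies `q = x q`, so
`q = 0` by Nakayama's lemma. -/
lemma isDomain_of_isPrime_span {R : Type*} [CommRing R] [IsLocalRing R] [IsNoetherianRing R]
    {x : R} (hxm : x ∈ maximalIdeal R) (hxq : ∀ q ∈ minimalPrimes R, x ∉ q)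
    (hp : (Ideal.span {x}).IsPrime) : IsDomain R := by
  obtain ⟨q, hq, hqx⟩ := Ideal.exists_minimalPrimes_le (bot_le : (⊥ : Ideal R) ≤ Ideal.span {x})
  have hqp : q.IsPrime := hq.1.1
  have hle : q ≤ Ideal.span {x} * q := by
    intro y hy
    obtain ⟨z, rfl⟩ := Ideal.mem_span_singleton'.1 (hqx hy)
    rw [mul_comm z x] at hy ⊢
    exact Ideal.mul_mem_mul (Ideal.mem_span_singleton_self x)
      ((hqp.mem_or_mem hy).resolve_left (hxq q hq))
  have hbot : q = ⊥ := by
    refine Submodule.eq_bot_of_le_smul_of_le_jacobson_bot (Ideal.span {x}) q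
      (IsNoetherian.noetherian _) hle (le_trans ?_ (IsLocalRing.maximalIdeal_le_jacobson _))
    rwa [Ideal.span_le, Set.singleton_subset_iff]
  rw [hbot] at hqp
  exact IsDomain.of_bot_isPrime R

/-- Let `x` be a prime element of a Noetherian local domain `R`. If the associated primes of
nonzero principal ideals of `R ⧸ (x)` have height at most one, then so do those of `R`.

If `x ∈ P`, then `P` is associated to `R ⧸ (x)`, so `P = (x)`. Otherwise one may divide `f` by
powers of `x`, and then `P + (x)` lies in an associated prime of `R ⧸ (x, f)`. -/
lemma height_le_one_of_quotient {R : Type*} [CommRing R] [IsLocalRing R] [IsNoetherianRing R]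
    [IsDomain R] {x : R} (hx : Prime x)
    (ih : ∀ f : R ⧸ Ideal.span {x}, f ≠ 0 →
      ∀ P ∈ associatedPrimes (R ⧸ Ideal.span {x}) ((R ⧸ Ideal.span {x}) ⧸ Ideal.span {f}),
        P.height ≤ 1)
    (f : R) (hf : f ≠ 0) (P : Ideal R)
    (hP : P ∈ associatedPrimes R (R ⧸ Ideal.span {f})) : P.height ≤ 1 := by
  obtain ⟨hPp, g, hg⟩ := (mem_associatedPrimes_span_iff f P).1 hP
  by_cases hxP : x ∈ P
  · obtain ⟨h, hh⟩ := exchange hf hx.ne_zero hg hxP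
    have hPx : P ≤ Ideal.span {x} := by
      intro r hr
      rw [Ideal.mem_span_singleton]
      refine (hx.dvd_or_dvd ((hh r).1 hr)).resolve_right fun hxh => ?_
      exact hPp.ne_top ((Ideal.eq_top_iff_one P).2 ((hh 1).2 (by simpa using hxh)))
    exact (Ideal.height_mono hPx).trans (Ideal.height_span_singleton_le_one hx.not_isUnit)
  obtain ⟨n, f', hxf', hff'⟩ := WfDvdMonoid.max_power_factor hf hx.irreducible
  have hf'0 : f' ≠ 0 := fun h => hf (by rw [hff', h, mul_zero])
  have hf'P : f' ∈ P := by
    have h1 : x ^ n * f' ∈ P := hff' ▸ (hg f).2 (dvd_mul_right f g)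
    exact (hPp.mem_or_mem h1).resolve_left fun h => hxP (hPp.mem_of_pow_mem n h)
  obtain ⟨g', hg'⟩ := exchange hf hf'0 hg hf'P
  -- `N = (f' : P)`; Nakayama's lemma shows that `N` is not contained in `(x, f')`.
  let N : Ideal R := (Ideal.span {f'}).colon (P : Set R)
  have hN (h : R) : h ∈ N ↔ ∀ r ∈ P, f' ∣ h * r := by
    simp only [N, Submodule.mem_colon, SetLike.mem_coe, smul_eq_mul, Ideal.mem_span_singleton]
  obtain ⟨h, hhN, hh⟩ : ∃ h ∈ N, h ∉ Ideal.span {x} ⊔ Ideal.span {f'} := by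
    by_contra! H
    have hle : N ≤ Ideal.span {f'} ⊔ Ideal.span {x} • N := by
      intro h hh
      obtain ⟨u, hu, v, hv, rfl⟩ := Submodule.mem_sup.1 (H h hh)
      obtain ⟨a, rfl⟩ := Ideal.mem_span_singleton.1 hu
      refine Submodule.mem_sup.2 ⟨v, hv, x * a, ?_, add_comm _ _⟩
      refine Ideal.mul_mem_mul (Ideal.mem_span_singleton_self x) ((hN a).2 fun r hr => ?_)
      have h1 : f' ∣ x * a * r := by
        have := (hN _).1 hh r hr
        rw [add_mul] at this
        exact (dvd_add_left ((Ideal.mem_span_singleton.1 hv).mul_right r)).1 this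
      obtain ⟨c, hc⟩ := h1
      obtain ⟨e, rfl⟩ := (hx.dvd_or_dvd (show x ∣ f' * c from
        hc ▸ Dvd.intro _ (mul_assoc x a r).symm)).resolve_left hxf'
      exact ⟨e, mul_left_cancel₀ hx.ne_zero (by linear_combination hc)⟩
    have hNf : N ≤ Ideal.span {f'} := by
      refine Submodule.le_of_le_smul_of_le_jacobson_bot (I := Ideal.span {x})
        (IsNoetherian.noetherian _) (le_trans ?_ (IsLocalRing.maximalIdeal_le_jacobson _)) hle
      rw [Ideal.span_le, Set.singleton_subset_iff]
      exact (mem_maximalIdeal _).2 hx.not_isUnit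
    have hgN : g' ∈ N := (hN g').2 fun r hr => by rw [mul_comm]; exact (hg' r).1 hr
    exact hPp.ne_top ((Ideal.eq_top_iff_one P).2 ((hg' 1).2
      (by simpa using Ideal.mem_span_singleton.1 (hNf hgN))))
  let π := Ideal.Quotient.mk (Ideal.span {x})
  have hπf : π f' ≠ 0 := fun h0 =>
    hxf' (Ideal.mem_span_singleton.1 (Ideal.Quotient.eq_zero_iff_mem.1 h0))
  have hh0 : Ideal.Quotient.mk (Ideal.span {π f'}) (π h) ≠ 0 := by
    intro h0
    obtain ⟨c, hc⟩ := Ideal.mem_span_singleton.1 (Ideal.Quotient.eq_zero_iff_mem.1 h0)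
    obtain ⟨c, rfl⟩ := Ideal.Quotient.mk_surjective c
    rw [← map_mul, Ideal.Quotient.eq] at hc
    refine hh (Submodule.mem_sup.2 ⟨_, hc, f' * c, ?_, by ring⟩)
    exact Ideal.mul_mem_right _ _ (Ideal.mem_span_singleton_self f')
  obtain ⟨Q, hQ, hQle⟩ := exists_le_isAssociatedPrime_of_isNoetherianRing
    (R ⧸ Ideal.span {x}) _ hh0
  have hQp : Q.IsPrime := hQ.1
  have hQ1 : Q.height ≤ 1 := ih _ hπf Q hQ
  have hPQ : P ≤ Q.comap π := by
    intro r hr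
    refine hQle ?_
    rw [Submodule.mem_colon_singleton, Submodule.mem_bot]
    change Ideal.Quotient.mk (Ideal.span {π f'}) (π r * π h) = 0
    rw [Ideal.Quotient.eq_zero_iff_mem, Ideal.mem_span_singleton, ← map_mul]
    exact map_dvd π (by rw [mul_comm]; exact (hN h).1 hhN r hr)
  have hxQ : x ∈ Q.comap π := by
    have : π x = 0 := Ideal.Quotient.eq_zero_iff_mem.2 (Ideal.mem_span_singleton_self x)
    rw [Ideal.mem_comap, this]
    exact Q.zero_mem
  have hlt : P < Q.comap π := lt_of_le_of_ne hPQ fun h => hxP (h ▸ hxQ)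
  have h1 := Ideal.height_add_one_le_of_lt_of_isPrime hlt
  have h2 := Ideal.height_le_height_add_one_of_mem hxQ
  rw [Ideal.map_comap_of_surjective _ Ideal.Quotient.mk_surjective] at h2
  have h3 : P.height + 1 ≤ 1 + 1 := h1.trans (h2.trans (by gcongr))
  exact (ENat.add_le_add_iff_right ENat.one_ne_top).1 h3

/-- A regular local ring is a domain in which the associated primes of nonzero principal ideals
have height at most one. Induction on the dimension, passing to the quotient by a generator
of the maximal ideal outside all minimal primes. -/
lemma regular_aux (d : ℕ) : ∀ (R : Type*) [CommRing R] [IsLocalRing R] [IsNoetherianRing R]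
    (s : Finset R), Ideal.span (s : Set R) = maximalIdeal R → s.card = d →
    ringKrullDim R = d → IsDomain R ∧ ∀ f : R, f ≠ 0 →
      ∀ P ∈ associatedPrimes R (R ⧸ Ideal.span {f}), P.height ≤ 1 := by
  classical
  induction d with
  | zero =>
    intro R _ _ _ s hs hc hd
    have hbot : maximalIdeal R = ⊥ := by
      rw [← hs, Finset.card_eq_zero.1 hc]; simp
    have hdom : IsDomain R := by
      have : (⊥ : Ideal R).IsPrime := hbot ▸ inferInstance
      exact IsDomain.of_bot_isPrime R
    refine ⟨hdom, fun f _ P hP => ?_⟩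
    have := hP.1
    have hle : P ≤ ⊥ := hbot ▸ IsLocalRing.le_maximalIdeal this.ne_top
    rw [le_bot_iff.1 hle, Ideal.height_bot]
    exact zero_le_one
  | succ d ih =>
    intro R _ _ _ s hs hc hd
    obtain ⟨x, t, hxm, hxq, htc, ht⟩ := exists_good_generator d s hs hc hd
    have hxne : Ideal.span {x} ≠ ⊤ := by
      rw [Ne, Ideal.span_singleton_eq_top]
      exact (mem_maximalIdeal x).1 hxm
    have : Nontrivial (R ⧸ Ideal.span {x}) := Ideal.Quotient.nontrivial_iff.2 hxne
    have : IsLocalRing (R ⧸ Ideal.span {x}) :=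
      IsLocalRing.of_surjective' (Ideal.Quotient.mk _) Ideal.Quotient.mk_surjective
    let π := Ideal.Quotient.mk (Ideal.span {x})
    have hx0 : π x = 0 := Ideal.Quotient.eq_zero_iff_mem.2 (Ideal.mem_span_singleton_self x)
    have hmap : Ideal.span ((t.image π : Finset _) : Set (R ⧸ Ideal.span {x})) =
        maximalIdeal (R ⧸ Ideal.span {x}) := by
      have h1 : (maximalIdeal R).map π = maximalIdeal (R ⧸ Ideal.span {x}) :=
        IsLocalRing.map_maximalIdeal_of_surjective π Ideal.Quotient.mk_surjective
      rw [← h1, ← ht, Ideal.map_span, Set.image_insert_eq, hx0, Ideal.span_insert_zero,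
        Finset.coe_image]
    have hcard : (t.image π).card ≤ d := htc ▸ Finset.card_image_le
    have hlow : (d : WithBot ℕ∞) ≤ ringKrullDim (R ⧸ Ideal.span {x}) := by
      have h := Ideal.height_le_ringKrullDim_quotient_add_one hxm
      rw [IsLocalRing.maximalIdeal_height_eq_ringKrullDim, hd, Nat.cast_add, Nat.cast_one] at h
      exact (ENat.WithBot.add_le_add_one_right_iff).1 h
    have hup : ringKrullDim (R ⧸ Ideal.span {x}) ≤ (t.image π).card := by
      refine (ringKrullDim_le_spanFinrank_maximalIdeal _).trans ?_
      rw [← hmap]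
      have := Submodule.spanFinrank_span_le_ncard_of_finite
        (R := R ⧸ Ideal.span {x}) (t.image π).finite_toSet
      rw [Set.ncard_coe_finset] at this
      exact_mod_cast this
    have hcard' : (t.image π).card = d :=
      le_antisymm hcard (by exact_mod_cast hlow.trans hup)
    obtain ⟨hdom, hS⟩ := ih (R ⧸ Ideal.span {x}) (t.image π) hmap hcard'
      (le_antisymm (hcard' ▸ hup) hlow)
    have hpr : (Ideal.span {x}).IsPrime := (Ideal.Quotient.isDomain_iff_prime _).1 hdom
    have hR : IsDomain R := isDomain_of_isPrime_span hxm hxq hpr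
    have hx00 : x ≠ 0 := by
      rintro rfl
      exact hxq ⊥ (by rw [IsDomain.minimalPrimes_eq_singleton_bot]; rfl) (Ideal.zero_mem _)
    exact ⟨hR, height_le_one_of_quotient ((Ideal.span_singleton_prime hx00).1 hpr) hS⟩

theorem stmt5 {R : Type*} [CommRing R] [IsLocalRing R]
    (hreg : IsRegularLocal R)
    (f : R) (hf0 : f ≠ 0) (hfu : ¬ IsUnit f)
    (J : Ideal R) (hJ : 2 ≤ idealHeight J)
    (k : ℕ) (hk : 1 ≤ k) :
    associatedPrimes R (R ⧸ (Ideal.span {f} ^ k * J ^ k)) =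
      (Ideal.span {f}).minimalPrimes ∪ associatedPrimes R (R ⧸ J ^ k) := by
  obtain ⟨hnoeth, s, hs, hc⟩ := hreg
  obtain ⟨hdom, hS⟩ := regular_aux s.card R s hs rfl hc.symm
  have hk0 : k ≠ 0 := by omega
  rw [Ideal.span_singleton_pow]
  set F := f ^ k with hF
  have hF0 : F ≠ 0 := pow_ne_zero k hf0
  set I := J ^ k with hI
  -- The exact sequence `0 → R ⧸ I → R ⧸ F I → R ⧸ (F) → 0`, whose first map is multiplication
  -- by `F`.
  have hle1 : I ≤ Submodule.comap (LinearMap.mulLeft R F) (Ideal.span {F} * I) := fun a ha =>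
    Ideal.mul_mem_mul (Ideal.mem_span_singleton_self F) ha
  let φ : (R ⧸ I) →ₗ[R] (R ⧸ Ideal.span {F} * I) :=
    Submodule.mapQ _ _ (LinearMap.mulLeft R F) hle1
  have hle2 : Ideal.span {F} * I ≤ Ideal.span {F} := Ideal.mul_le_left
  let ψ : (R ⧸ Ideal.span {F} * I) →ₗ[R] (R ⧸ Ideal.span {F}) := Submodule.factor hle2
  have hφ : Function.Injective φ := by
    rw [← LinearMap.ker_eq_bot, LinearMap.ker_eq_bot']
    intro y hy
    obtain ⟨a, rfl⟩ := Ideal.Quotient.mk_surjective y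
    have h1 : F * a ∈ Ideal.span {F} * I := Ideal.Quotient.eq_zero_iff_mem.1 hy
    obtain ⟨z, hz, hza⟩ := Ideal.mem_span_singleton_mul.1 h1
    rw [← mul_left_cancel₀ hF0 hza]
    exact Ideal.Quotient.eq_zero_iff_mem.2 hz
  have hφψ : Function.Exact φ ψ := by
    intro y
    obtain ⟨a, rfl⟩ := Ideal.Quotient.mk_surjective y
    constructor
    · intro h0
      have h1 : a ∈ Ideal.span {F} := Ideal.Quotient.eq_zero_iff_mem.1 h0
      obtain ⟨b, rfl⟩ := Ideal.mem_span_singleton.1 h1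
      exact ⟨Ideal.Quotient.mk _ b, rfl⟩
    · rintro ⟨z, hz⟩
      obtain ⟨b, rfl⟩ := Ideal.Quotient.mk_surjective z
      rw [← hz]
      exact Ideal.Quotient.eq_zero_iff_mem.2
        (Ideal.mul_mem_right b _ (Ideal.mem_span_singleton_self F))
  have hheight (p : Ideal R) [hp : p.IsPrime] (hJp : J ≤ p) : 2 ≤ p.height := by
    have h := iInf₂_le (f := fun (P : PrimeSpectrum R) (_ : J ≤ P.asIdeal) => Order.height P)
      ⟨p, hp⟩ hJp
    rw [← PrimeSpectrum.height_eq_orderHeight] at h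
    exact hJ.trans h
  apply Set.Subset.antisymm
  · intro P hP
    rcases associatedPrimes.subset_union_of_exact hφ hφψ hP with h | h
    · exact Or.inr h
    · left
      have hPp : P.IsPrime := h.1
      have hP1 : P.height ≤ 1 := hS F hF0 P h
      have hfP : f ∈ P := by
        obtain ⟨-, g, hg⟩ := (mem_associatedPrimes_span_iff F P).1 h
        exact hPp.mem_of_pow_mem k ((hg F).2 (dvd_mul_right F g))
      refine ⟨⟨hPp, by rwa [Ideal.span_le, Set.singleton_subset_iff]⟩, fun q hq hqP => ?_⟩
      have := hq.1
      by_contra hnot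
      have hlt : q < P := lt_of_le_not_ge hqP hnot
      have h1 := Ideal.height_add_one_le_of_lt_of_isPrime hlt
      have h2 : q.height = 0 := by
        have : q.height + 1 ≤ 0 + 1 := by simpa using h1.trans hP1
        simpa using (ENat.add_le_add_iff_right ENat.one_ne_top).1 this
      rw [Ideal.height_eq_zero_iff_eq_bot] at h2
      rw [h2, le_bot_iff, Ideal.span_singleton_eq_bot] at hq
      exact hf0 hq.2
  · rintro P (hP | hP)
    · have hPp : P.IsPrime := hP.1.1
      have hP1 := Ideal.height_le_one_of_isPrincipal_of_mem_minimalPrimes _ P hP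
      have hfP : f ∈ P := hP.1.2 (Ideal.mem_span_singleton_self f)
      apply Module.associatedPrimes.minimalPrimes_annihilator_subset_associatedPrimes
      rw [Ideal.annihilator_quotient]
      refine ⟨⟨hPp, Ideal.mul_le_left.trans ?_⟩, fun q hq hqP => ?_⟩
      · rw [Ideal.span_le, Set.singleton_subset_iff]
        exact Ideal.pow_mem_of_mem P hfP k (by omega)
      · have hqp : q.IsPrime := hq.1
        rcases (Ideal.IsPrime.mul_le hqp).1 hq.2 with h | h
        · refine hP.2 ⟨hqp, ?_⟩ hqP
          rw [Ideal.span_le, Set.singleton_subset_iff] at h ⊢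
          exact hqp.mem_of_pow_mem k h
        · have h2 := hheight P (((Ideal.IsPrime.pow_le_iff hk0).1 h).trans hqP)
          exact absurd (h2.trans hP1) (by decide)
    · exact associatedPrimes.subset_of_injective hφ hP
end

section
/- Let R = K[x,y,z] be a polynomial ring over a field K and I = ((xy)^2, (xz)^2, (yz)^2). Then I^n : I = I^{n-1} for every integer n ≥ 1 (with the convention I^0 = R). -/
/-! A monomial `x^a y^b z^c` lies in `I ^ n` exactly when `i + j ≤ a/2`, `i + k ≤ b/2`,
`j + k ≤ c/2` for some `i + j + k = n`. As `k`, `j`, `i` are then at least `n - a/2`, `n - b/2`,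
`n - c/2`, this says that these three truncated differences add up to at most `n`
(`PowCond`, `pow_eq_powIdeal`).

Since `I ^ n` is monomial, `f ∈ I ^ n : I` forces every exponent of `f` to satisfy the condition
for `n` after multiplication by each of the three generators. If, say, `c/2 < n`, multiplying by
`(xy)^2` leaves the first two differences as they are for `n - 1` and makes the third one larger
by one, so the sum for `n - 1` is at most `n - 1`; and if no half-exponent is below `n`, all the
differences for `n - 1` vanish. -/

open IsLocalRing

open MvPolynomial

/-- The numerical condition, with truncated subtraction and rounded-down division, for the
monomial with exponent vector `d` to lie in the `n`-th power of the ideal. -/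
def PowCond (n : ℕ) (d : Fin 3 →₀ ℕ) : Prop :=
  (n - d 0 / 2) + (n - d 1 / 2) + (n - d 2 / 2) ≤ n

/-- The exponent vector of the generator `(X i * X j) ^ 2`. -/
noncomputable def genExp (i j : Fin 3) : Fin 3 →₀ ℕ :=
  Finsupp.single i 2 + Finsupp.single j 2

/-- The ideal spanned by the monomials whose exponent satisfies `PowCond n`. -/
noncomputable def powIdeal (K : Type*) [Field K] (n : ℕ) : Ideal (MvPolynomial (Fin 3) K) :=
  Ideal.span ((fun d => monomial d (1 : K)) '' {d | PowCond n d})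

lemma PowCond.mono {n : ℕ} {d e : Fin 3 →₀ ℕ} (hd : PowCond n d) (h : d ≤ e) : PowCond n e := by
  have h0 := h 0
  have h1 := h 1
  have h2 := h 2
  unfold PowCond at *
  omega

lemma mem_powIdeal {K : Type*} [Field K] {n : ℕ} {f : MvPolynomial (Fin 3) K} :
    f ∈ powIdeal K n ↔ ∀ d ∈ f.support, PowCond n d := by
  rw [powIdeal, mem_ideal_span_monomial_image]
  exact forall₂_congr fun d _ => ⟨fun ⟨_, he, hle⟩ => he.mono hle, fun h => ⟨d, h, le_rfl⟩⟩

lemma gen_eq_monomial {K : Type*} [Field K] (i j : Fin 3) :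
    ((X i * X j) ^ 2 : MvPolynomial (Fin 3) K) = monomial (genExp i j) 1 := by
  simp [genExp, mul_pow, X_pow_eq_monomial, monomial_mul]

lemma powCond_add_genExp {n : ℕ} {d : Fin 3 →₀ ℕ} (hd : PowCond n d) {i j : Fin 3}
    (hij : i ≠ j) : PowCond (n + 1) (genExp i j + d) := by
  unfold PowCond at *
  fin_cases i <;> fin_cases j <;> simp [genExp] at hij ⊢ <;> omega

/-- Any monomial satisfying the condition for `n + 1` is a generator times one satisfying the
condition for `n`. -/
lemma exists_genExp {n : ℕ} {d : Fin 3 →₀ ℕ} (hd : PowCond (n + 1) d) :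
    ∃ i j : Fin 3, ((i = 0 ∧ j = 1) ∨ (i = 0 ∧ j = 2) ∨ (i = 1 ∧ j = 2)) ∧
      ∃ e, PowCond n e ∧ d = genExp i j + e := by
  have key : ∀ i j : Fin 3, genExp i j ≤ d → PowCond n (d - genExp i j) →
      ∃ e, PowCond n e ∧ d = genExp i j + e :=
    fun i j hle h => ⟨_, h, (add_tsub_cancel_of_le hle).symm⟩
  have hcases : (2 ≤ d 0 ∧ 2 ≤ d 1 ∧
        (n - (d 0 - 2) / 2) + (n - (d 1 - 2) / 2) + (n - d 2 / 2) ≤ n) ∨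
      (2 ≤ d 0 ∧ 2 ≤ d 2 ∧
        (n - (d 0 - 2) / 2) + (n - d 1 / 2) + (n - (d 2 - 2) / 2) ≤ n) ∨
      (2 ≤ d 1 ∧ 2 ≤ d 2 ∧
        (n - d 0 / 2) + (n - (d 1 - 2) / 2) + (n - (d 2 - 2) / 2) ≤ n) := by
    unfold PowCond at hd
    omega
  rcases hcases with ⟨h, h', hc⟩ | ⟨h, h', hc⟩ | ⟨h, h', hc⟩
  · refine ⟨0, 1, by simp, key 0 1 (fun k => ?_) (by simpa [PowCond, genExp] using hc)⟩
    fin_cases k <;> simp [genExp, h, h']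
  · refine ⟨0, 2, by simp, key 0 2 (fun k => ?_) (by simpa [PowCond, genExp] using hc)⟩
    fin_cases k <;> simp [genExp, h, h']
  · refine ⟨1, 2, by simp, key 1 2 (fun k => ?_) (by simpa [PowCond, genExp] using hc)⟩
    fin_cases k <;> simp [genExp, h, h']

lemma pow_eq_powIdeal {K : Type*} [Field K] (n : ℕ) :
    (Ideal.span {(X 0 * X 1) ^ 2, (X 0 * X 2) ^ 2, (X 1 * X 2) ^ 2} :
      Ideal (MvPolynomial (Fin 3) K)) ^ n = powIdeal K n := by
  induction n with
  | zero =>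
    rw [pow_zero, Ideal.one_eq_top, eq_comm, Ideal.eq_top_iff_one, mem_powIdeal]
    intro d _
    simp [PowCond]
  | succ n ih =>
    rw [pow_succ', ih]
    apply le_antisymm
    · rw [powIdeal, Ideal.span_mul_span', Ideal.span_le]
      rintro _ ⟨g, hg, _, ⟨d, hd, rfl⟩, rfl⟩
      obtain ⟨i, j, hij, rfl⟩ : ∃ i j : Fin 3, i ≠ j ∧ g = (X i * X j) ^ 2 := by
        rcases hg with rfl | rfl | rfl
        · exact ⟨0, 1, by decide, rfl⟩
        · exact ⟨0, 2, by decide, rfl⟩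
        · exact ⟨1, 2, by decide, rfl⟩
      apply Ideal.subset_span
      refine ⟨genExp i j + d, powCond_add_genExp hd hij, ?_⟩
      simp [gen_eq_monomial, monomial_mul]
    · conv_lhs => rw [powIdeal]
      rw [Ideal.span_le]
      rintro _ ⟨d, hd, rfl⟩
      obtain ⟨i, j, hij, e, he, rfl⟩ := exists_genExp hd
      have hmul : monomial (genExp i j + e) (1 : K) = (X i * X j) ^ 2 * monomial e 1 := by
        rw [gen_eq_monomial, monomial_mul, one_mul]
      simp only [hmul]
      refine Ideal.mul_mem_mul (Ideal.subset_span ?_) (Ideal.subset_span ⟨e, he, rfl⟩)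
      rcases hij with ⟨rfl, rfl⟩ | ⟨rfl, rfl⟩ | ⟨rfl, rfl⟩ <;> simp

/-- If all three products of a monomial with the generators satisfy the condition for `n + 1`,
then the monomial satisfies the condition for `n`. -/
lemma powCond_of_add_genExp {n : ℕ} {d : Fin 3 →₀ ℕ}
    (h01 : PowCond (n + 1) (d + genExp 0 1)) (h02 : PowCond (n + 1) (d + genExp 0 2))
    (h12 : PowCond (n + 1) (d + genExp 1 2)) : PowCond n d := by
  simp [PowCond, genExp] at *
  omega

open MvPolynomial in
theorem stmt7 {K : Type*} [Field K]
    (I : Ideal (MvPolynomial (Fin 3) K)) (hI : I = Ideal.span {(X 0 * X 1) ^ 2, (X 0 * X 2) ^ 2, (X 1 * X 2) ^ 2})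
    (n : ℕ) (hn : 1 ≤ n) :
    Submodule.colon (I ^ n) I = I ^ (n - 1) := by
  obtain ⟨n, rfl⟩ := Nat.exists_eq_add_of_le' hn
  rw [Nat.add_sub_cancel]
  apply le_antisymm
  · intro f hf
    rw [Submodule.mem_colon] at hf
    subst hI
    simp only [pow_eq_powIdeal] at hf ⊢
    rw [mem_powIdeal]
    intro d hd
    have key : ∀ i j : Fin 3, ((X i * X j) ^ 2 : MvPolynomial (Fin 3) K) ∈
        ({(X 0 * X 1) ^ 2, (X 0 * X 2) ^ 2, (X 1 * X 2) ^ 2} : Set (MvPolynomial (Fin 3) K)) →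
        PowCond (n + 1) (d + genExp i j) := by
      intro i j hij
      have h := hf _ (Ideal.subset_span hij)
      rw [smul_eq_mul, gen_eq_monomial, mem_powIdeal] at h
      apply h
      rw [mem_support_iff, coeff_mul_monomial, mul_one]
      exact mem_support_iff.mp hd
    exact powCond_of_add_genExp (key 0 1 (by simp)) (key 0 2 (by simp)) (key 1 2 (by simp))
  · intro f hf
    rw [Submodule.mem_colon]
    intro g hg
    rw [pow_succ]
    exact Ideal.mul_mem_mul hf hg
end
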